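/- Let B be the open unit ball of ℝ⁴ and B̄ its closure. Let Λ > 0, let (ρ_k) be a sequence of reals with 0 < ρ_k ≤ Λ, and let (u_k) be a sequence of solutions of the Dirichlet mean field problem on B with parameters ρ_k. Assume there exists C > 0 such that u_k(x) ≤ C for all k and all x ∈ B̄. Then there exists a function u : ℝ⁴ → ℝ that is C⁴ on B̄ such that, after passing to a subsequence, u_k converges to u uniformly on B̄. -/

import Mathlib

open MeasureTheory Metric Filter

noncomputable section

/-- The Laplacian of `f : ℝ⁴ → ℝ` at `x`: the trace of the second derivative. -/
def lap (f : EuclideanSpace ℝ (Fin 4) → ℝ) (x : EuclideanSpace ℝ (Fin 4)) : ℝ :=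
  ∑ i : Fin 4,
    fderiv ℝ (fun y => fderiv ℝ f y (EuclideanSpace.single i (1:ℝ))) x
      (EuclideanSpace.single i (1:ℝ))

/-- `u` is a solution of the Dirichlet mean field problem on the open unit ball of `ℝ⁴`
with parameter `ρ`. -/
def IsMFSolution (ρ : ℝ) (u : EuclideanSpace ℝ (Fin 4) → ℝ) : Prop :=
  ContDiffOn ℝ 4 u (closedBall (0 : EuclideanSpace ℝ (Fin 4)) 1) ∧
  (∀ x ∈ ball (0 : EuclideanSpace ℝ (Fin 4)) 1,
    lap (lap u) x
      = ρ * Real.exp (u x) /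
          ∫ y in ball (0 : EuclideanSpace ℝ (Fin 4)) 1, Real.exp (u y)) ∧
  (∀ x : EuclideanSpace ℝ (Fin 4), ‖x‖ = 1 →
    u x = 0 ∧ fderivWithin ℝ u (closedBall (0 : EuclideanSpace ℝ (Fin 4)) 1) x = 0)

/-!
Boggio's Green function `G` of the Dirichlet bilaplacian on the unit ball is positive, so solutions
are nonnegative. Hence `∫ exp u ≥ |B|`, and the sources `ρ exp u / ∫ exp u` are bounded.

On the diagonal `G` has only a logarithmic singularity, so its derivatives of order at most three
are integrable and bound those of `u` by the supremum of the source. Fourth derivatives are reached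
through symmetry: since `G` is conformally invariant, the derivative of a Green potential along a
conformal vector field tangent to the sphere is again a Green potential, of a source containing one
derivative of the old one. This bounds every fourth derivative with a tangential entry, and the
equation gives the remaining radial one. By the theorem of Arzelà and Ascoli some subsequence is
uniformly Cauchy, and the same estimates for the differences make it Cauchy in `C⁴`.

To avoid differentiating under a singular integral, `G` is approximated by Green functions
regularised on the diagonal, with a parameter `κ` decreasing to `1`.
-/

open scoped Topology NNReal

local notation "ℝ⁴" => EuclideanSpace ℝ (Fin 4)
local notation "𝔹" => ball (0 : EuclideanSpace ℝ (Fin 4)) 1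
local notation "𝔻" => closedBall (0 : EuclideanSpace ℝ (Fin 4)) 1

section Divergence

variable {E : Type*} [NormedAddCommGroup E] [NormedSpace ℝ E] {s : Set E} {g : E → ℝ}

lemma exists_mem_segment_frontier (hs : IsClosed s) {x y : E} (hx : x ∈ s) (hy : y ∉ s) :
    ∃ z ∈ segment ℝ x y, z ∈ frontier s := by
  by_contra! h
  have hcover : segment ℝ x y ⊆ interior s ∪ sᶜ := fun z hz => by
    by_cases hzs : z ∈ s
    · exact .inl (by_contra fun hi => h z hz ⟨subset_closure hzs, hi⟩)
    · exact .inr hzs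
  have hxi : x ∈ interior s :=
    (hcover (left_mem_segment ℝ x y)).resolve_right (not_not_intro hx)
  obtain ⟨z, -, hzi, hzc⟩ := (convex_segment x y).isPreconnected _ _ isOpen_interior
    hs.isOpen_compl hcover ⟨x, left_mem_segment ℝ x y, hxi⟩ ⟨y, right_mem_segment ℝ x y, hy⟩
  exact hzc (interior_subset hzi)

lemma lipschitzWith_indicator_of_eq_zero_on_frontier {K : ℝ≥0} (hs : IsClosed s)
    (hg : LipschitzOnWith K g s) (h0 : ∀ x ∈ frontier s, g x = 0) :
    LipschitzWith K (s.indicator g) := by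
  have across : ∀ x ∈ s, ∀ y ∉ s, dist (g x) 0 ≤ K * dist x y := by
    intro x hx y hy
    obtain ⟨z, hzseg, hz⟩ := exists_mem_segment_frontier hs hx hy
    have hdist : dist x z ≤ dist x y := by
      linarith [dist_add_dist_of_mem_segment hzseg, dist_nonneg (x := z) (y := y)]
    calc dist (g x) 0 = dist (g x) (g z) := by rw [h0 z hz]
      _ ≤ K * dist x z := hg.dist_le_mul x hx z (hs.frontier_subset hz)
      _ ≤ K * dist x y := by gcongr
  refine LipschitzWith.of_dist_le_mul fun x y => ?_
  by_cases hx : x ∈ s <;> by_cases hy : y ∈ s <;>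
    simp only [Set.indicator, hx, hy, if_true, if_false]
  · exact hg.dist_le_mul x hx y hy
  · exact across x hx y hy
  · rw [dist_comm, dist_comm x]
    exact across y hy x hx
  · rw [dist_self]
    positivity

lemma lineDeriv_eq_zero_of_eventuallyEq_const {f : E → ℝ} {c : ℝ} {x : E}
    (h : f =ᶠ[𝓝 x] fun _ => c) (e : E) : lineDeriv ℝ f x e = 0 := by
  rw [h.lineDeriv_eq]
  exact deriv_const 0 c

variable [FiniteDimensional ℝ E] [MeasurableSpace E] [BorelSpace E] {μ : Measure E}
  [μ.IsAddHaarMeasure]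

lemma integral_lineDeriv_eq_zero_of_hasCompactSupport {K : ℝ≥0} {f : E → ℝ}
    (hf : LipschitzWith K f) (hc : HasCompactSupport f) (e : E) :
    ∫ x, lineDeriv ℝ f x e ∂μ = 0 := by
  obtain ⟨R, hR, hsupp⟩ := hc.isBounded.subset_ball_lt 0 0
  let χ : ContDiffBump (0 : E) := ⟨R, R + 1, hR, by linarith⟩
  have hχ : ContDiff ℝ 1 χ := χ.contDiff
  have hone : ∀ x ∈ ball (0 : E) R, χ x = 1 := fun x hx =>
    χ.one_of_mem_closedBall (ball_subset_closedBall hx)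
  obtain ⟨D, hD⟩ := hχ.lipschitzWith_of_hasCompactSupport χ.hasCompactSupport one_ne_zero
  calc ∫ x, lineDeriv ℝ f x e ∂μ = ∫ x, lineDeriv ℝ f x e * χ x ∂μ := by
        refine integral_congr_ae (.of_forall fun x => ?_)
        by_cases hx : x ∈ tsupport f
        · simp only [hone x (hsupp hx), mul_one]
        · have heq : f =ᶠ[𝓝 x] fun _ => 0 := notMem_tsupport_iff_eventuallyEq.1 hx
          simp only [lineDeriv_eq_zero_of_eventuallyEq_const heq, zero_mul]
    _ = ∫ x, lineDeriv ℝ χ x (-e) * f x ∂μ :=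
        hf.integral_lineDeriv_mul_eq hD χ.hasCompactSupport e
    _ = ∫ _, 0 ∂μ := by
        refine integral_congr_ae (.of_forall fun x => ?_)
        by_cases hx : x ∈ tsupport f
        · have heq : (χ : E → ℝ) =ᶠ[𝓝 x] fun _ => 1 := by
            filter_upwards [isOpen_ball.mem_nhds (hsupp hx)] with y hy using hone y hy
          simp only [lineDeriv_eq_zero_of_eventuallyEq_const heq, zero_mul]
        · simp [image_eq_zero_of_notMem_tsupport hx]
    _ = 0 := integral_zero E ℝ

lemma integral_fderiv_eq_zero_of_eq_zero_on_frontier (hs : Convex ℝ s) (hc : IsCompact s)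
    (hg : ContDiffOn ℝ 1 g s) (h0 : ∀ x ∈ frontier s, g x = 0) (e : E) :
    ∫ x in interior s, fderiv ℝ g x e ∂μ = 0 := by
  obtain ⟨K, hK⟩ := hg.exists_lipschitzOnWith one_ne_zero hs hc
  have hlip := lipschitzWith_indicator_of_eq_zero_on_frontier hc.isClosed hK h0
  have hsupp : HasCompactSupport (s.indicator g) :=
    HasCompactSupport.intro hc fun x hx => Set.indicator_of_notMem hx g
  rw [← integral_lineDeriv_eq_zero_of_hasCompactSupport (μ := μ) hlip hsupp e,
    ← integral_indicator isOpen_interior.measurableSet]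
  refine integral_congr_ae ?_
  filter_upwards [compl_mem_ae_iff.2 (hs.addHaar_frontier μ)] with x hx
  by_cases hxi : x ∈ interior s
  · have heq : s.indicator g =ᶠ[𝓝 x] g := by
      filter_upwards [mem_interior_iff_mem_nhds.1 hxi] with y hy using Set.indicator_of_mem hy g
    have hd := (hg.contDiffAt (mem_interior_iff_mem_nhds.1 hxi)).differentiableAt one_ne_zero
    rw [Set.indicator_of_mem hxi, heq.lineDeriv_eq, hd.lineDeriv_eq_fderiv]
  · have hxs : x ∈ sᶜ := fun hxs => hx ⟨subset_closure hxs, hxi⟩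
    have heq : s.indicator g =ᶠ[𝓝 x] fun _ => 0 := by
      filter_upwards [hc.isClosed.isOpen_compl.mem_nhds hxs] with y hy
        using Set.indicator_of_notMem hy g
    rw [Set.indicator_of_notMem hxi, lineDeriv_eq_zero_of_eventuallyEq_const heq]

end Divergence

section OneVariable

lemma hasDerivAt_line {E : Type*} [NormedAddCommGroup E] [NormedSpace ℝ E] (x e : E) (t : ℝ) :
    HasDerivAt (fun s : ℝ => x + s • e) e t := by
  simpa using ((hasDerivAt_id t).smul_const e).const_add x

lemma fwdDiff_iterate_le_of_hasDerivAt {h K : ℝ} (hh : 0 < h) (m : ℕ) :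
    ∀ {f : ℕ → ℝ → ℝ} {a : ℝ},
      (∀ j < m, ∀ t ∈ Set.Icc a (a + m * h), HasDerivAt (f j) (f (j + 1) t) t) →
      (∀ t ∈ Set.Icc a (a + m * h), f m t ≤ K) → (fwdDiff h)^[m] (f 0) a ≤ h ^ m * K := by
  induction m generalizing K with
  | zero =>
    intro f a _ hK
    simpa using hK a (by simp)
  | succ m ih =>
    intro f a hf hK
    push_cast at hf hK
    have hsub : ∀ t ∈ Set.Icc a (a + m * h),
        t ∈ Set.Icc a (a + (m + 1) * h) ∧ t + h ∈ Set.Icc a (a + (m + 1) * h) := fun t ht =>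
      ⟨⟨ht.1, by linarith [ht.2]⟩, by linarith [ht.1], by linarith [ht.2]⟩
    rw [Function.iterate_succ_apply, pow_succ, mul_assoc]
    refine ih (f := fun j => fwdDiff h (f j)) (fun j hj t ht => ?_) fun t ht => ?_
    · exact ((hf j (by omega) _ (hsub t ht).2).comp_add_const t h).sub
        (hf j (by omega) t (hsub t ht).1)
    · have hIcc : ∀ ξ ∈ Set.Icc t (t + h), ξ ∈ Set.Icc a (a + (m + 1) * h) := fun ξ hξ =>
        ⟨(hsub t ht).1.1.trans hξ.1, hξ.2.trans (hsub t ht).2.2⟩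
      obtain ⟨ξ, hξ, hslope⟩ := exists_hasDerivAt_eq_slope (f m) (f (m + 1))
        (by linarith : t < t + h)
        (fun ξ hξ => (hf m (by omega) ξ (hIcc ξ hξ)).continuousAt.continuousWithinAt)
        (fun ξ hξ => hf m (by omega) ξ (hIcc ξ (Set.Ioo_subset_Icc_self hξ)))
      have hle := hK ξ (hIcc ξ (Set.Ioo_subset_Icc_self hξ))
      rw [hslope, add_sub_cancel_left, div_le_iff₀ hh] at hle
      rw [fwdDiff]
      linarith

lemma tendsto_fwdDiff_iterate {ι : Type*} {l : Filter ι} {F : ι → ℝ → ℝ} {f : ℝ → ℝ} {a h : ℝ}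
    {m : ℕ} (hF : ∀ k ≤ m, Tendsto (fun n => F n (a + k * h)) l (𝓝 (f (a + k * h)))) :
    Tendsto (fun n => (fwdDiff h)^[m] (F n) a) l (𝓝 ((fwdDiff h)^[m] f a)) := by
  simp only [fwdDiff_iter_eq_sum_shift, nsmul_eq_mul]
  exact tendsto_finsetSum _ fun k hk =>
    (hF k (Nat.lt_succ_iff.1 (Finset.mem_range.1 hk))).const_smul _

/-- `f 0, f 1, …, f m` are successive derivatives of one another on `[0, b]`. -/
def IsDerivChain (m : ℕ) (b : ℝ) (f : ℕ → ℝ → ℝ) : Prop :=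
  ∀ j < m, ∀ t ∈ Set.Icc 0 b, HasDerivAt (f j) (f (j + 1) t) t

variable {m : ℕ} {b K : ℝ} {F : ℕ → ℕ → ℝ → ℝ} {f : ℕ → ℝ → ℝ}

lemma IsDerivChain.neg (hf : IsDerivChain m b f) : IsDerivChain m b (-f) :=
  fun j hj t ht => (hf j hj t ht).neg

lemma IsDerivChain.le_of_tendsto (hb : 0 < b) (hF : ∀ n, IsDerivChain m b (F n))
    (hK : ∀ n, ∀ t ∈ Set.Icc 0 b, F n m t ≤ K) (hf : IsDerivChain m b f)
    (hcont : ContinuousAt (f m) 0)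
    (hlim : ∀ t ∈ Set.Icc 0 b, Tendsto (fun n => F n 0 t) atTop (𝓝 (f 0 t))) : f m 0 ≤ K := by
  by_contra! hlt
  obtain ⟨c, hKc, hcf⟩ := exists_between hlt
  obtain ⟨δ, hδ, hball⟩ := Metric.eventually_nhds_iff.1 (hcont.eventually_const_lt hcf)
  set h := min (b / (m + 1)) (δ / (m + 1))
  have hh : 0 < h := by positivity
  have hstep : ∀ r, h ≤ r / (m + 1) → m * h < r := fun r hr => by
    rw [le_div_iff₀ (by positivity)] at hr
    linarith
  have hmb : m * h < b := hstep b (min_le_left _ _)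
  have hmδ : m * h < δ := hstep δ (min_le_right _ _)
  have hsub : ∀ t ∈ Set.Icc 0 (0 + m * h), t ∈ Set.Icc 0 b := fun t ht =>
    ⟨ht.1, by linarith [ht.2]⟩
  have upper : (fwdDiff h)^[m] (f 0) 0 ≤ h ^ m * K :=
    le_of_tendsto' (tendsto_fwdDiff_iterate fun k hk => hlim _ (hsub _ ⟨by positivity, by gcongr⟩))
      fun n => fwdDiff_iterate_le_of_hasDerivAt hh m (fun j hj t ht => hF n j hj t (hsub t ht))
        fun t ht => hK n t (hsub t ht)
  have lower : (fwdDiff h)^[m] ((-f) 0) 0 ≤ h ^ m * (-c) :=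
    fwdDiff_iterate_le_of_hasDerivAt hh m (fun j hj t ht => hf.neg j hj t (hsub t ht))
      fun t ht => neg_le_neg (hball (by
        rw [Real.dist_0_eq_abs, abs_of_nonneg ht.1]
        linarith [ht.2])).le
  have hneg : (fwdDiff h)^[m] ((-f) 0) 0 = -(fwdDiff h)^[m] (f 0) 0 := by
    simp [fwdDiff_iter_eq_sum_shift]
  nlinarith [pow_pos hh m]

lemma IsDerivChain.abs_le_of_tendsto (hb : 0 < b) (hF : ∀ n, IsDerivChain m b (F n))
    (hK : ∀ n, ∀ t ∈ Set.Icc 0 b, |F n m t| ≤ K) (hf : IsDerivChain m b f)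
    (hcont : ContinuousAt (f m) 0)
    (hlim : ∀ t ∈ Set.Icc 0 b, Tendsto (fun n => F n 0 t) atTop (𝓝 (f 0 t))) : |f m 0| ≤ K :=
  abs_le'.2 ⟨le_of_tendsto hb hF (fun n t ht => (abs_le'.1 (hK n t ht)).1) hf hcont hlim,
    le_of_tendsto hb (fun n => (hF n).neg) (fun n t ht => (abs_le'.1 (hK n t ht)).2) hf.neg
      hcont.neg fun t ht => (hlim t ht).neg⟩

lemma IsDerivChain.abs_sub_sub_le (hf : IsDerivChain 2 b f)
    (hK : ∀ t ∈ Set.Icc 0 b, |f 2 t| ≤ K) {t : ℝ} (ht : t ∈ Set.Icc 0 b) :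
    |f 0 t - f 0 0 - t * f 1 0| ≤ K * t ^ 2 := by
  have hsub : Set.Icc 0 t ⊆ Set.Icc 0 b := Set.Icc_subset_Icc_right ht.2
  have hslope : ∀ ξ ∈ Set.Icc 0 t, ‖f 1 ξ - f 1 0‖ ≤ K * t := fun ξ hξ => by
    have := (convex_Icc (0 : ℝ) b).norm_image_sub_le_of_norm_hasDerivWithin_le
      (fun s hs => (hf 1 one_lt_two s hs).hasDerivWithinAt) hK ⟨le_rfl, ht.1.trans ht.2⟩ (hsub hξ)
    rw [sub_zero, Real.norm_of_nonneg hξ.1] at this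
    exact this.trans (mul_le_mul_of_nonneg_left hξ.2 ((abs_nonneg _).trans (hK t ht)))
  have := (convex_Icc (0 : ℝ) t).norm_image_sub_le_of_norm_hasDerivWithin_le
    (f := fun s => f 0 s - s * f 1 0)
    (fun s hs => ((hf 0 two_pos s (hsub hs)).sub
      ((hasDerivAt_id s).mul_const _)).hasDerivWithinAt)
    (by simpa using hslope) ⟨le_rfl, ht.1⟩ ⟨ht.1, le_rfl⟩
  simp only [zero_mul, sub_zero, Real.norm_of_nonneg ht.1, Real.norm_eq_abs] at this
  calc |f 0 t - f 0 0 - t * f 1 0| = |f 0 t - t * f 1 0 - f 0 0| := by ring_nf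
    _ ≤ K * t ^ 2 := by linarith

-- The error of the difference quotients is uniform in `n`, so the limits in `t` and `n` commute.
lemma IsDerivChain.tendsto_of_hasDerivAt (hb : 0 < b) (hF : ∀ n, IsDerivChain 2 b (F n))
    (hK : ∀ n, ∀ t ∈ Set.Icc 0 b, |F n 2 t| ≤ K) {g : ℝ → ℝ} {g' : ℝ} (hg : HasDerivAt g g' 0)
    (hlim : ∀ t ∈ Set.Icc 0 b, Tendsto (fun n => F n 0 t) atTop (𝓝 (g t))) :
    Tendsto (fun n => F n 1 0) atTop (𝓝 g') := by
  have hsmall : ∀ᶠ t in 𝓝[>] (0 : ℝ), 0 < t ∧ t ≤ b :=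
    eventually_mem_nhdsWithin.and (eventually_nhdsWithin_of_eventually_nhds (Iic_mem_nhds hb))
  have hslope : ∀ n t, 0 < t → t ≤ b → |F n 1 0 - t⁻¹ * (F n 0 t - F n 0 0)| ≤ K * t :=
    fun n t ht htb => by
      have hquad := (hF n).abs_sub_sub_le (hK n) ⟨ht.le, htb⟩
      have : F n 1 0 - t⁻¹ * (F n 0 t - F n 0 0)
          = -(t⁻¹ * (F n 0 t - F n 0 0 - t * F n 1 0)) := by field_simp; ring
      rw [this, abs_neg, abs_mul, abs_of_pos (inv_pos.2 ht), inv_mul_le_iff₀ ht]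
      linarith
  have hunif : TendstoUniformlyOnFilter (fun t n => t⁻¹ * (F n 0 t - F n 0 0)) (fun n => F n 1 0)
      (𝓝[>] 0) atTop := by
    rw [Metric.tendstoUniformlyOnFilter_iff]
    intro ε hε
    have hKt : ∀ᶠ t in 𝓝[>] (0 : ℝ), K * t < ε :=
      eventually_nhdsWithin_of_eventually_nhds
        (((continuous_const_mul K).tendsto' 0 0 (mul_zero K)).eventually_lt_const hε)
    filter_upwards [(hsmall.and hKt).prod_inl atTop] with p hp
    exact (hslope p.2 p.1 hp.1.1 hp.1.2).trans_lt hp.2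
  refine hunif.tendsto_of_eventually_tendsto (L := fun t => t⁻¹ * (g t - g 0)) ?_ ?_
  · filter_upwards [hsmall] with t ⟨ht, htb⟩
    exact ((hlim t ⟨ht.le, htb⟩).sub (hlim 0 ⟨le_rfl, hb.le⟩)).const_mul t⁻¹
  · simpa using hg.tendsto_slope_zero_right

end OneVariable

section Symmetric

variable {E F : Type*} [NormedAddCommGroup E] [NormedSpace ℝ E] [NormedAddCommGroup F]
  [NormedSpace ℝ F] {f : E → F} {x : E} {n : ℕ}

lemma hasFDerivAt_iteratedFDeriv_apply (hf : ContDiffAt ℝ (n + 1 : ℕ) f x) (v : Fin n → E) :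
    HasFDerivAt (fun y => iteratedFDeriv ℝ n f y v)
      ((ContinuousMultilinearMap.apply ℝ (fun _ : Fin n => E) F v).comp
        (fderiv ℝ (iteratedFDeriv ℝ n f) x)) x :=
  (ContinuousMultilinearMap.apply ℝ (fun _ : Fin n => E) F v).hasFDerivAt.comp x
    (hf.differentiableAt_iteratedFDeriv (by exact_mod_cast n.lt_succ_self)).hasFDerivAt

lemma fderiv_iteratedFDeriv_apply (hf : ContDiffAt ℝ (n + 1 : ℕ) f x) (v : Fin n → E) (a : E) :
    fderiv ℝ (fun y => iteratedFDeriv ℝ n f y v) x a =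
      iteratedFDeriv ℝ (n + 1) f x (Fin.cons a v : Fin (n + 1) → E) := by
  rw [(hasFDerivAt_iteratedFDeriv_apply hf v).fderiv, iteratedFDeriv_succ_apply_left]
  rfl

lemma iteratedFDeriv_comp_swap_zero_one (hf : ContDiffAt ℝ (n + 2 : ℕ) f x)
    (v : Fin (n + 2) → E) :
    iteratedFDeriv ℝ (n + 2) f x (v ∘ Equiv.swap 0 1) = iteratedFDeriv ℝ (n + 2) f x v := by
  set u := Fin.tail (Fin.tail v)
  set g : E → F := fun y => iteratedFDeriv ℝ n f y u
  have hg : ContDiffAt ℝ 2 g x :=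
    (ContinuousMultilinearMap.apply ℝ (fun _ : Fin n => E) F u).contDiff.contDiffAt.comp x
      (hf.iteratedFDeriv_right (m := 2) (by push_cast; rw [add_comm]))
  have hdiff : DifferentiableAt ℝ (fderiv ℝ g) x :=
    (hg.fderiv_right (m := 1) (by norm_num)).differentiableAt one_ne_zero
  have hsnd : ∀ a b : E, iteratedFDeriv ℝ (n + 2) f x
      (Fin.cons a (Fin.cons b u : Fin (n + 1) → E) : Fin (n + 2) → E) =
        fderiv ℝ (fderiv ℝ g) x a b := fun a b => by
    have hev : (fun y => iteratedFDeriv ℝ (n + 1) f y (Fin.cons b u : Fin (n + 1) → E)) =ᶠ[𝓝 x]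
        fun y => fderiv ℝ g y b :=
      ((hf.of_le (m := (n + 1 : ℕ)) (by exact_mod_cast (n + 1).le_succ)).eventually (by simp)).mono
        fun y hy => (fderiv_iteratedFDeriv_apply hy u b).symm
    rw [← fderiv_iteratedFDeriv_apply hf, hev.fderiv_eq,
      fderiv_clm_apply hdiff (differentiableAt_const b)]
    simp
  have hv : v = Fin.cons (v 0) (Fin.cons (v 1) u : Fin (n + 1) → E) := by
    rw [← Fin.cons_self_tail v, ← Fin.cons_self_tail (Fin.tail v)]
    rfl
  have hswap : v ∘ Equiv.swap 0 1 = Fin.cons (v 1) (Fin.cons (v 0) u : Fin (n + 1) → E) := by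
    ext1 i
    refine Fin.cases (by simp) (fun i => Fin.cases (by simp) (fun i => ?_) i) i
    simp only [Function.comp_apply, Fin.cons_succ]
    rw [Equiv.swap_apply_of_ne_of_ne (Fin.succ_ne_zero _) (by simp [Fin.ext_iff])]
    rfl
  rw [hswap, hsnd, hg.isSymmSndFDerivAt (by simp) (v 1) (v 0), ← hsnd, ← hv]

lemma iteratedFDeriv_comp_swap_castSucc_succ (hf : ContDiffAt ℝ (n + 1 : ℕ) f x) (i : Fin n)
    (v : Fin (n + 1) → E) :
    iteratedFDeriv ℝ (n + 1) f x (v ∘ Equiv.swap i.castSucc i.succ) =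
      iteratedFDeriv ℝ (n + 1) f x v := by
  induction n generalizing x with
  | zero => exact i.elim0
  | succ n ih =>
    induction i using Fin.cases with
    | zero => exact iteratedFDeriv_comp_swap_zero_one hf v
    | succ i =>
      have hcons : v ∘ Equiv.swap i.succ.castSucc i.succ.succ =
          Fin.cons (v 0) (Fin.tail v ∘ Equiv.swap i.castSucc i.succ) := by
        ext j
        induction j using Fin.cases with
        | zero => simp [Equiv.swap_apply_of_ne_of_ne, Fin.ext_iff]
        | succ j => simp [Fin.tail, Equiv.swap_apply_def, apply_ite Fin.succ, Fin.ext_iff]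
      have hev : (fun y => iteratedFDeriv ℝ (n + 1) f y (Fin.tail v ∘ Equiv.swap i.castSucc i.succ))
          =ᶠ[𝓝 x] fun y => iteratedFDeriv ℝ (n + 1) f y (Fin.tail v) :=
        ((hf.of_le (m := (n + 1 : ℕ)) (by exact_mod_cast (n + 1).le_succ)).eventually
          (by simp)).mono fun y hy => ih hy i (Fin.tail v)
      rw [hcons, ← fderiv_iteratedFDeriv_apply hf, hev.fderiv_eq, fderiv_iteratedFDeriv_apply hf,
        Fin.cons_self_tail]

theorem iteratedFDeriv_comp_perm_of_contDiffAt (hf : ContDiffAt ℝ n f x) (v : Fin n → E)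
    (σ : Equiv.Perm (Fin n)) : iteratedFDeriv ℝ n f x (v ∘ σ) = iteratedFDeriv ℝ n f x v := by
  cases n with
  | zero => rw [Subsingleton.elim (v ∘ σ) v]
  | succ n =>
    have hσ : σ ∈ Submonoid.closure (Set.range fun i : Fin n => Equiv.swap i.castSucc i.succ) := by
      rw [Equiv.Perm.mclosure_swap_castSucc_succ]
      trivial
    induction hσ using Submonoid.closure_induction generalizing v with
    | mem σ hσ =>
      obtain ⟨i, rfl⟩ := hσ
      exact iteratedFDeriv_comp_swap_castSucc_succ hf i v
    | one => rfl
    | mul σ τ _ _ hσ hτ => rw [Equiv.Perm.coe_mul, ← Function.comp_assoc, hτ, hσ]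

end Symmetric

section Polarization

variable {E : Type*} [NormedAddCommGroup E] [NormedSpace ℝ E] {n : ℕ}

lemma sum_prod_sign_mul_prod_sign_comp (r : Fin n → Fin n) (hr : ¬ Function.Surjective r) :
    ∑ ε : Fin n → ℤˣ, (∏ i, (ε i : ℝ)) * ∏ j, (ε (r j) : ℝ) = 0 := by
  obtain ⟨i, hi⟩ := not_forall.1 hr
  let flip : (Fin n → ℤˣ) → Fin n → ℤˣ := fun ε => Function.update ε i (-ε i)
  have hflip : Function.Involutive flip := fun ε => by simp [flip]
  have hneg : ∀ ε, (∏ k, (flip ε k : ℝ)) * ∏ j, (flip ε (r j) : ℝ) =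
      -((∏ k, (ε k : ℝ)) * ∏ j, (ε (r j) : ℝ)) := fun ε => by
    have hr' : ∀ j, flip ε (r j) = ε (r j) := fun j =>
      Function.update_of_ne (fun h => hi ⟨j, h⟩) _ _
    have hprod : ∏ k, (flip ε k : ℝ) = -∏ k, (ε k : ℝ) := by
      rw [← Finset.mul_prod_erase _ _ (Finset.mem_univ i),
        ← Finset.mul_prod_erase _ (fun k => (ε k : ℝ)) (Finset.mem_univ i), ← neg_mul]
      congr 1
      · simp [flip]
      · refine Finset.prod_congr rfl fun k hk => ?_
        simp only [flip, Function.update_of_ne (Finset.ne_of_mem_erase hk)]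
    simp only [hr', hprod, neg_mul]
  have hsum := Equiv.sum_comp hflip.toPerm fun ε : Fin n → ℤˣ =>
    (∏ k, (ε k : ℝ)) * ∏ j, (ε (r j) : ℝ)
  simp only [Function.Involutive.coe_toPerm, hneg, Finset.sum_neg_distrib] at hsum
  linarith

lemma polarization_of_comp_perm_eq (T : ContinuousMultilinearMap ℝ (fun _ : Fin n => E) ℝ)
    (hT : ∀ v, ∀ σ : Equiv.Perm (Fin n), T (v ∘ σ) = T v) (v : Fin n → E) :
    ∑ ε : Fin n → ℤˣ, (∏ i, (ε i : ℝ)) * T (fun _ => ∑ i, (ε i : ℝ) • v i) =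
      2 ^ n * n.factorial * T v := by
  have hexpand : ∀ ε : Fin n → ℤˣ, T (fun _ => ∑ i, (ε i : ℝ) • v i) =
      ∑ r : Fin n → Fin n, (∏ j, (ε (r j) : ℝ)) * T (v ∘ r) := fun ε => by
    rw [T.map_sum]
    exact Finset.sum_congr rfl fun r _ => T.map_smul_univ _ _
  have hperm : ∀ σ : Equiv.Perm (Fin n),
      ∑ ε : Fin n → ℤˣ, (∏ i, (ε i : ℝ)) * ∏ j, (ε (σ j) : ℝ) = 2 ^ n := fun σ => by
    have hone : ∀ ε : Fin n → ℤˣ, (∏ i, (ε i : ℝ)) * ∏ j, (ε (σ j) : ℝ) = 1 := fun ε => by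
      rw [Equiv.prod_comp σ fun i => (ε i : ℝ), ← Finset.prod_mul_distrib]
      exact Finset.prod_eq_one fun i _ => by exact_mod_cast Int.units_coe_mul_self (ε i)
    simp [hone]
  calc _ = ∑ r : Fin n → Fin n,
        (∑ ε : Fin n → ℤˣ, (∏ i, (ε i : ℝ)) * ∏ j, (ε (r j) : ℝ)) * T (v ∘ r) := by
        simp only [hexpand, Finset.mul_sum, Finset.sum_mul, mul_assoc]
        exact Finset.sum_comm
    _ = ∑ _σ : Equiv.Perm (Fin n), 2 ^ n * T v := by
        refine (Fintype.sum_of_injective (fun σ : Equiv.Perm (Fin n) => ⇑σ) DFunLike.coe_injective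
          _ _ (fun r hr => ?_) fun σ => ?_).symm
        · rw [sum_prod_sign_mul_prod_sign_comp r fun hsurj => hr
            ⟨.ofBijective r (Finite.surjective_iff_bijective.1 hsurj), rfl⟩, zero_mul]
        · simp only [hperm, hT]
    _ = 2 ^ n * n.factorial * T v := by
        rw [Finset.sum_const, Finset.card_univ, Fintype.card_perm, Fintype.card_fin, nsmul_eq_mul]
        ring

lemma abs_apply_le_of_abs_apply_diag_le {T : ContinuousMultilinearMap ℝ (fun _ : Fin n => E) ℝ}
    (hT : ∀ v, ∀ σ : Equiv.Perm (Fin n), T (v ∘ σ) = T v) {K : ℝ}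
    (hK : ∀ e : E, ‖e‖ ≤ n → |T fun _ => e| ≤ K) {v : Fin n → E} (hv : ∀ i, ‖v i‖ ≤ 1) :
    |T v| ≤ K := by
  have habs : ∀ ε : ℤˣ, |(ε : ℝ)| = 1 := fun ε => by
    rcases Int.units_eq_one_or ε with rfl | rfl <;> simp
  have hterm : ∀ ε : Fin n → ℤˣ,
      |(∏ i, (ε i : ℝ)) * T (fun _ => ∑ i, (ε i : ℝ) • v i)| ≤ K := fun ε => by
    rw [abs_mul, Finset.abs_prod, Finset.prod_congr rfl fun i _ => habs (ε i),
      Finset.prod_const_one, one_mul]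
    refine hK _ ((norm_sum_le _ _).trans ?_)
    simpa [norm_smul, habs] using Finset.sum_le_sum fun i (_ : i ∈ Finset.univ) => hv i
  have hsum := (Finset.abs_sum_le_sum_abs _ _).trans
    (Finset.sum_le_sum fun ε (_ : ε ∈ Finset.univ) => hterm ε)
  rw [polarization_of_comp_perm_eq T hT v] at hsum
  simp only [abs_mul, abs_pow, Nat.abs_ofNat, Nat.abs_cast, Finset.sum_const, Finset.card_univ,
    Fintype.card_fun, Fintype.card_units_int, Fintype.card_fin, nsmul_eq_mul, Nat.cast_pow,
    Nat.cast_ofNat, mul_assoc] at hsum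
  have hfact : (1 : ℝ) ≤ n.factorial := by exact_mod_cast n.factorial_pos
  exact (le_mul_of_one_le_left (abs_nonneg _) hfact).trans
    (le_of_mul_le_mul_left hsum (by positivity))

lemma opNorm_le_of_abs_apply_le_of_norm_le_one
    {T : ContinuousMultilinearMap ℝ (fun _ : Fin n => E) ℝ} {K : ℝ} (hK0 : 0 ≤ K)
    (hK : ∀ v : Fin n → E, (∀ i, ‖v i‖ ≤ 1) → |T v| ≤ K) : ‖T‖ ≤ K := by
  refine T.opNorm_le_bound hK0 fun v => ?_
  have hv : v = fun i => ‖v i‖ • ((‖v i‖)⁻¹ • v i) := by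
    ext1 i
    by_cases hi : v i = 0
    · simp [hi]
    · rw [smul_inv_smul₀ (norm_ne_zero_iff.2 hi)]
  have hunit : ∀ i, ‖(‖v i‖)⁻¹ • v i‖ ≤ 1 := fun i => by
    rw [norm_smul, norm_inv, norm_norm]
    exact inv_mul_le_one
  calc ‖T v‖ = (∏ i, ‖v i‖) * |T fun i => (‖v i‖)⁻¹ • v i| := by
        conv_lhs => rw [hv, T.map_smul_univ]
        rw [norm_smul, Real.norm_of_nonneg (by positivity), Real.norm_eq_abs]
    _ ≤ K * ∏ i, ‖v i‖ := by
        rw [mul_comm]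
        gcongr
        exact hK _ hunit

end Polarization

section UniformLimits

variable {E F : Type*} [NormedAddCommGroup E] [NormedSpace ℝ E] [NormedAddCommGroup F]
  [NormedSpace ℝ F] {s : Set E}

lemma hasFDerivWithinAt_of_tendstoUniformlyOn (hs : Convex ℝ s) {f : ℕ → E → F}
    {f' : ℕ → E → E →L[ℝ] F} {g : E → F} {g' : E → E →L[ℝ] F}
    (hf : ∀ n, ∀ x ∈ s, HasFDerivWithinAt (f n) (f' n x) s x)
    (hlim : ∀ x ∈ s, Tendsto (fun n => f n x) atTop (𝓝 (g x)))
    (hf' : TendstoUniformlyOn f' g' atTop s) {x : E} (hx : x ∈ s) :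
    HasFDerivWithinAt g (g' x) s x := by
  refine .of_isLittleO (Asymptotics.isLittleO_iff.2 fun ε hε => ?_)
  obtain ⟨N, hN⟩ := eventually_atTop.1 (Metric.tendstoUniformlyOn_iff.1 hf' (ε / 4) (by positivity))
  simp only [dist_eq_norm] at hN
  have hfinite : ∀ n ≥ N, ∀ y ∈ s,
      ‖(f n y - f N y) - (f n x - f N x)‖ ≤ ε / 2 * ‖y - x‖ := fun n hn y hy =>
    hs.norm_image_sub_le_of_norm_hasFDerivWithin_le
      (fun z hz => (hf n z hz).sub (hf N z hz))
      (fun z hz => by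
        rw [← sub_sub_sub_cancel_left _ _ (g' z)]
        exact (norm_sub_le _ _).trans (by linarith [hN n hn z hz, hN N le_rfl z hz])) hx hy
  have hlimit : ∀ y ∈ s, ‖(g y - f N y) - (g x - f N x)‖ ≤ ε / 2 * ‖y - x‖ := fun y hy =>
    le_of_tendsto (((hlim y hy).sub_const _).sub ((hlim x hx).sub_const _)).norm
      (eventually_atTop.2 ⟨N, fun n hn => hfinite n hn y hy⟩)
  filter_upwards [Asymptotics.isLittleO_iff.1 (hf N x hx).isLittleO
    (by positivity : 0 < ε / 4), self_mem_nhdsWithin] with y hy hys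
  have hN' : ‖(f' N x - g' x) (y - x)‖ ≤ ε / 4 * ‖y - x‖ :=
    ContinuousLinearMap.le_of_opNorm_le _ (by rw [norm_sub_rev]; exact (hN N le_rfl x hx).le) _
  calc ‖g y - g x - g' x (y - x)‖
      = ‖((g y - f N y) - (g x - f N x)) + (f N y - f N x - f' N x (y - x))
          + (f' N x - g' x) (y - x)‖ := by
        congr 1
        rw [sub_apply]
        abel
    _ ≤ ε / 2 * ‖y - x‖ + ε / 4 * ‖y - x‖ + ε / 4 * ‖y - x‖ :=
        (norm_add₃_le).trans (by gcongr; exact hlimit y hys)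
    _ = ε * ‖y - x‖ := by ring

lemma exists_tendstoUniformlyOn_of_uniformCauchySeqOn {α β : Type*} [UniformSpace β]
    [CompleteSpace β] {t : Set α} {f : ℕ → α → β} (hf : UniformCauchySeqOn f atTop t) :
    ∃ g, TendstoUniformlyOn f g atTop t := by
  have hpointwise : ∀ x, ∃ b, x ∈ t → Tendsto (fun n => f n x) atTop (𝓝 b) := fun x => by
    by_cases hx : x ∈ t
    · obtain ⟨b, hb⟩ := cauchySeq_tendsto_of_complete (hf.cauchySeq hx)
      exact ⟨b, fun _ => hb⟩
    · exact ⟨f 0 x, fun h => absurd h hx⟩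
  choose g hg using hpointwise
  exact ⟨g, hf.tendstoUniformlyOn_of_tendsto hg⟩

theorem exists_contDiffOn_of_uniformCauchySeqOn [CompleteSpace F] (hs : Convex ℝ s)
    (hu : UniqueDiffOn ℝ s) {n : ℕ} {f : ℕ → E → F} (hf : ∀ k, ContDiffOn ℝ n (f k) s)
    (hC : ∀ j ≤ n, UniformCauchySeqOn (fun k => iteratedFDerivWithin ℝ j (f k) s) atTop s) :
    ∃ g, ContDiffOn ℝ n g s ∧ TendstoUniformlyOn f g atTop s := by
  have hlim : ∀ j, ∃ p : E → E [×j]→L[ℝ] F, j ≤ n →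
      TendstoUniformlyOn (fun k => iteratedFDerivWithin ℝ j (f k) s) p atTop s := fun j => by
    by_cases hj : j ≤ n
    · obtain ⟨p, hp⟩ := exists_tendstoUniformlyOn_of_uniformCauchySeqOn (hC j hj)
      exact ⟨p, fun _ => hp⟩
    · exact ⟨0, fun h => absurd h hj⟩
  choose p hp using hlim
  have htaylor : HasFTaylorSeriesUpToOn n (fun x => (p 0 x).curry0) (fun x j => p j x) s := by
    refine ⟨fun x _ => rfl, fun j hj x hx => ?_, fun j hj => ?_⟩
    · have hj' : j < n := by exact_mod_cast hj
      refine hasFDerivWithinAt_of_tendstoUniformlyOn (g := p j)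
        (f := fun k => iteratedFDerivWithin ℝ j (f k) s)
        (f' := fun k => fderivWithin ℝ (iteratedFDerivWithin ℝ j (f k) s) s)
        (g' := fun y => (p (j + 1) y).curryLeft) hs
        (fun k y hy => ((hf k).differentiableOn_iteratedFDerivWithin hj hu y hy).hasFDerivWithinAt)
        (fun y hy => (hp j hj'.le).tendsto_at hy) ?_ hx
      exact (continuousMultilinearCurryLeftEquiv ℝ (fun _ : Fin (j + 1) => E)
        F).isometry.uniformContinuous.comp_tendstoUniformlyOn (hp (j + 1) hj')
    · have hj' : j ≤ n := by exact_mod_cast hj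
      exact (hp j hj').continuousOn (.of_forall fun k =>
        (hf k).continuousOn_iteratedFDerivWithin hj hu)
  refine ⟨_, htaylor.contDiffOn, ?_⟩
  simpa [Function.comp_def, iteratedFDerivWithin_zero_eq_comp] using
    (continuousMultilinearCurryFin0 ℝ E F).isometry.uniformContinuous.comp_tendstoUniformlyOn
      (hp 0 n.zero_le)

end UniformLimits

section ArzelaAscoli

theorem exists_subseq_uniformCauchySeqOn_of_lipschitzOnWith {α β : Type*} [PseudoMetricSpace α]
    [MetricSpace β] {s : Set α} (hs : IsCompact s) {t : Set β} (ht : IsCompact t)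
    {K : ℝ≥0} {f : ℕ → α → β} (hf : ∀ n, Set.MapsTo (f n) s t)
    (hK : ∀ n, LipschitzOnWith K (f n) s) :
    ∃ φ : ℕ → ℕ, StrictMono φ ∧ UniformCauchySeqOn (fun n => f (φ n)) atTop s := by
  have : CompactSpace s := isCompact_iff_compactSpace.1 hs
  have hlip : ∀ n, LipschitzWith K (s.domRestrict (f n)) := fun n => (hK n).to_restrict
  let F : ℕ → BoundedContinuousFunction s β := fun n =>
    .mkOfCompact ⟨s.domRestrict (f n), (hlip n).continuous⟩
  have hcomp : IsCompact (closure (Set.range F)) := by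
    refine BoundedContinuousFunction.arzela_ascoli t ht _ ?_
      (LipschitzWith.uniformEquicontinuous _ K ?_).equicontinuous
    · rintro - x ⟨n, rfl⟩
      exact hf n x.2
    · rintro ⟨-, n, rfl⟩
      exact hlip n
  obtain ⟨g, -, φ, hφ, hlim⟩ := hcomp.tendsto_subseq fun n => subset_closure (Set.mem_range_self n)
  refine ⟨φ, hφ, Metric.uniformCauchySeqOn_iff.2 fun ε hε => ?_⟩
  obtain ⟨N, hN⟩ := Metric.cauchySeq_iff.1 hlim.cauchySeq ε hε
  exact ⟨N, fun m hm n hn x hx =>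
    (BoundedContinuousFunction.dist_coe_le_dist (f := F (φ m)) (g := F (φ n)) ⟨x, hx⟩).trans_lt
      (hN m hm n hn)⟩

end ArzelaAscoli

section Laplacian

open InnerProductSpace Laplacian RealInnerProductSpace

variable {E : Type*} [NormedAddCommGroup E] [InnerProductSpace ℝ E]

/-- The quadratic function `α‖y‖² - 2⟪b, y⟫ + γ`. -/
def quad (α : ℝ) (b : E) (γ : ℝ) (y : E) : ℝ := α * ‖y‖ ^ 2 - 2 * ⟪b, y⟫ + γ

lemma contDiff_quad (α : ℝ) (b : E) (γ : ℝ) {n : WithTop ℕ∞} : ContDiff ℝ n (quad α b γ) :=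
  ((contDiff_const.mul (contDiff_norm_sq ℝ)).sub
    (contDiff_const.mul (contDiff_const.inner ℝ contDiff_id))).add contDiff_const

lemma hasFDerivAt_quad (α : ℝ) (b : E) (γ : ℝ) (y : E) :
    HasFDerivAt (quad α b γ) ((2 : ℝ) • innerSL ℝ (α • y - b)) y := by
  have h := (((hasStrictFDerivAt_norm_sq y).hasFDerivAt.const_mul α).sub
    ((innerSL ℝ b).hasFDerivAt.const_mul 2)).add_const γ
  refine h.congr_fderiv ?_
  ext z
  simp only [_root_.sub_apply, _root_.smul_apply, innerSL_apply_apply, inner_sub_left,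
    real_inner_smul_left, smul_eq_mul]
  ring

lemma hasFDerivAt_two_smul_innerSL (α : ℝ) (b y : E) :
    HasFDerivAt (fun z : E => (2 : ℝ) • innerSL ℝ (α • z - b)) ((2 * α) • innerSL ℝ) y := by
  have h := ((innerSL ℝ (E := E)).hasFDerivAt.comp y
    (((hasFDerivAt_id y).const_smul α).sub_const b)).const_smul (2 : ℝ)
  exact h.congr_fderiv (by ext z w; simp [mul_assoc])

lemma hasDerivAt_quad_line (α : ℝ) (b : E) (γ : ℝ) (x e : E) (t : ℝ) :
    HasDerivAt (fun s : ℝ => quad α b γ (x + s • e)) (2 * ⟪α • (x + t • e) - b, e⟫) t := by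
  exact (hasFDerivAt_quad α b γ (x + t • e)).comp_hasDerivAt t (hasDerivAt_line x e t)

lemma hasDerivAt_inner_line (α : ℝ) (b x e : E) (t : ℝ) :
    HasDerivAt (fun s : ℝ => 2 * ⟪α • (x + s • e) - b, e⟫) (2 * α * ‖e‖ ^ 2) t := by
  refine (((((hasDerivAt_line x e t).const_smul α).sub_const b).inner ℝ
    (hasDerivAt_const t e)).const_mul 2).congr_deriv ?_
  rw [inner_zero_right, real_inner_smul_left, real_inner_self_eq_norm_sq]
  ring

lemma abs_inner_div_le {N : ℝ} (hN : 0 < N) {w : E} (hw : ‖w‖ ^ 2 ≤ N) (e : E) :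
    |2 * ⟪w, e⟫ / N| ≤ 2 * ‖e‖ / √N := by
  have hw' : ‖w‖ ≤ √N := Real.le_sqrt_of_sq_le hw
  rw [abs_div, abs_mul, abs_two, abs_of_pos hN, div_le_div_iff₀ hN (Real.sqrt_pos.2 hN)]
  calc 2 * |⟪w, e⟫| * √N ≤ 2 * (√N * ‖e‖) * √N := by
        gcongr
        exact (abs_real_inner_le_norm w e).trans (by gcongr)
    _ = 2 * ‖e‖ * √N ^ 2 := by ring
    _ = 2 * ‖e‖ * N := by rw [Real.sq_sqrt hN.le]

variable [FiniteDimensional ℝ E]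

lemma laplacian_eq_sum_fderiv_fderiv {ι : Type*} [Fintype ι] (b : OrthonormalBasis ι ℝ E)
    (f : E → ℝ) (x : E) : Δ f x = ∑ i, fderiv ℝ (fderiv ℝ f) x (b i) (b i) := by
  simp only [laplacian_eq_iteratedFDeriv_orthonormalBasis f b, iteratedFDeriv_two_apply,
    Matrix.cons_val_zero, Matrix.cons_val_one]

lemma laplacian_eq_of_hasFDerivAt {ι : Type*} [Fintype ι] (b : OrthonormalBasis ι ℝ E) {f : E → ℝ}
    {f' : E → E →L[ℝ] ℝ} {f'' : E →L[ℝ] E →L[ℝ] ℝ} {x : E}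
    (hf : ∀ᶠ y in 𝓝 x, HasFDerivAt f (f' y) y) (hf' : HasFDerivAt f' f'' x) :
    Δ f x = ∑ i, f'' (b i) (b i) := by
  have heq : fderiv ℝ f =ᶠ[𝓝 x] f' := hf.mono fun y hy => hy.fderiv
  rw [laplacian_eq_sum_fderiv_fderiv b, heq.fderiv_eq, hf'.fderiv]

lemma lap_eq_laplacian {f : ℝ⁴ → ℝ} {x : ℝ⁴} (hf : ContDiffAt ℝ 2 f x) : lap f x = Δ f x := by
  have hdiff : DifferentiableAt ℝ (fderiv ℝ f) x :=
    (hf.fderiv_right (m := 1) (by norm_num)).differentiableAt one_ne_zero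
  rw [laplacian_eq_sum_fderiv_fderiv (EuclideanSpace.basisFun (Fin 4) ℝ), lap]
  refine Finset.sum_congr rfl fun i _ => ?_
  rw [fderiv_clm_apply hdiff (differentiableAt_const _)]
  simp

lemma laplacian_quad_mul_comp_quad (α β γ γ' : ℝ) (a b : E) {f f' : ℝ → ℝ} {f'' : ℝ} {y : E}
    (hf : ∀ᶠ t in 𝓝 (quad β b γ' y), HasDerivAt f (f' t) t)
    (hf' : HasDerivAt f' f'' (quad β b γ' y)) :
    Δ (fun z => quad α a γ z * f (quad β b γ' z)) y =
      2 * Module.finrank ℝ E * (α * f (quad β b γ' y) + β * quad α a γ y * f' (quad β b γ' y))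
        + 8 * ⟪α • y - a, β • y - b⟫ * f' (quad β b γ' y)
        + 4 * quad α a γ y * f'' * ‖β • y - b‖ ^ 2 := by
  set p := quad α a γ
  set q := quad β b γ'
  have hp : ∀ z, HasFDerivAt p _ z := hasFDerivAt_quad α a γ
  have hq : ∀ z, HasFDerivAt q _ z := hasFDerivAt_quad β b γ'
  have hfq : ∀ᶠ z in 𝓝 y, HasFDerivAt (fun z => f (q z)) _ z :=
    ((hq y).continuousAt.eventually hf).mono fun z hz => hz.comp_hasFDerivAt z (hq z)
  set e := stdOrthonormalBasis ℝ E
  set u := α • y - a with hu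
  set w := β • y - b with hw
  have hself : ∀ i, (innerSL ℝ : E →L[ℝ] E →L[ℝ] ℝ) (e i) (e i) = 1 := fun i =>
    (real_inner_self_eq_norm_sq (e i)).trans (by rw [e.norm_eq_one, one_pow])
  calc Δ (fun z => p z * f (q z)) y
      = ∑ i, (2 * (α * f (q y) + β * p y * f' (q y)) + 8 * f' (q y) * (⟪u, e i⟫ * ⟪e i, w⟫)
          + 4 * p y * f'' * ‖⟪w, e i⟫‖ ^ 2) := by
        refine (laplacian_eq_of_hasFDerivAt e (hfq.mono fun z hz => (hp z).mul hz)
          (((hp y).smul ((hf'.comp_hasFDerivAt y (hq y)).smul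
            (hasFDerivAt_two_smul_innerSL β b y))).add
            (hfq.self_of_nhds.smul (hasFDerivAt_two_smul_innerSL α a y)))).trans
          (Finset.sum_congr rfl fun i _ => ?_)
        simp only [← hu, ← hw, _root_.add_apply, _root_.smul_apply,
          ContinuousLinearMap.smulRight_apply, innerSL_apply_apply, smul_eq_mul, hself,
          Pi.smul_apply', Function.comp_apply, Real.norm_eq_abs, sq_abs, real_inner_comm w (e i)]
        ring
    _ = _ := by
        simp only [Finset.sum_add_distrib, ← Finset.mul_sum, e.sum_inner_mul_inner,
          e.sum_sq_norm_inner_left, Finset.sum_const, Finset.card_univ, Fintype.card_fin,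
          nsmul_eq_mul]
        ring

end Laplacian

section Green

open InnerProductSpace Laplacian RealInnerProductSpace

variable {E : Type*} [NormedAddCommGroup E] {s : Set E} {f g : E → ℝ}

lemma fderiv_mul_fderivWithin_sub_apply [NormedSpace ℝ E] (hf : ContDiffOn ℝ 2 f s)
    (hg : ContDiffOn ℝ 2 g s) (e : E) {x : E} (hx : x ∈ interior s) :
    fderiv ℝ (fun y => f y * fderivWithin ℝ g s y e - g y * fderivWithin ℝ f s y e) x e =
      f x * fderiv ℝ (fderiv ℝ g) x e e - g x * fderiv ℝ (fderiv ℝ f) x e e := by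
  have hd : ∀ {w : E → ℝ}, ContDiffOn ℝ 2 w s → HasFDerivAt w (fderiv ℝ w x) x ∧
      HasFDerivAt (fun y => fderivWithin ℝ w s y e) ((fderiv ℝ (fderiv ℝ w) x).flip e) x :=
    fun {w} hw => by
      have hwx := hw.contDiffAt (mem_interior_iff_mem_nhds.1 hx)
      have hw' := (hwx.fderiv_right (m := 1) (by norm_num)).differentiableAt one_ne_zero
      refine ⟨(hwx.differentiableAt two_ne_zero).hasFDerivAt,
        (hw'.hasFDerivAt.clm_apply (hasFDerivAt_const e x)).congr_fderiv (by simp)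
          |>.congr_of_eventuallyEq ?_⟩
      filter_upwards [isOpen_interior.mem_nhds hx] with y hy
      rw [fderivWithin_of_mem_nhds (mem_interior_iff_mem_nhds.1 hy)]
  obtain ⟨hf₁, hf₂⟩ := hd hf
  obtain ⟨hg₁, hg₂⟩ := hd hg
  refine (congrArg (· e) ((hf₁.mul hg₂).sub (hg₁.mul hf₂)).fderiv).trans ?_
  simp only [_root_.sub_apply, _root_.add_apply, _root_.smul_apply, smul_eq_mul,
    ContinuousLinearMap.flip_apply, fderivWithin_of_mem_nhds (mem_interior_iff_mem_nhds.1 hx)]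
  ring

variable [InnerProductSpace ℝ E] [FiniteDimensional ℝ E]

lemma laplacianWithin_eq_sum_fderivWithin (hu : UniqueDiffOn ℝ s) {ι : Type*} [Fintype ι]
    (b : OrthonormalBasis ι ℝ E) (f : E → ℝ) {x : E} (hx : x ∈ s) :
    (Δ[s] f) x = ∑ i, fderivWithin ℝ (fderivWithin ℝ f s) s x (b i) (b i) := by
  simp only [laplacianWithin_eq_iteratedFDerivWithin_orthonormalBasis f hu hx b,
    iteratedFDerivWithin_two_apply f hu hx, Matrix.cons_val_zero, Matrix.cons_val_one]

lemma laplacianWithin_eq_laplacian (hu : UniqueDiffOn ℝ s) (f : E → ℝ) :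
    Set.EqOn (Δ[s] f) (Δ f) (interior s) := fun x hx => by
  have hloc : fderivWithin ℝ f s =ᶠ[𝓝 x] fderiv ℝ f := by
    filter_upwards [isOpen_interior.mem_nhds hx] with y hy
      using fderivWithin_of_mem_nhds (mem_interior_iff_mem_nhds.1 hy)
  rw [laplacianWithin_eq_sum_fderivWithin hu (stdOrthonormalBasis ℝ E) f (interior_subset hx),
    laplacian_eq_sum_fderiv_fderiv (stdOrthonormalBasis ℝ E),
    fderivWithin_of_mem_nhds (mem_interior_iff_mem_nhds.1 hx), hloc.fderiv_eq]

lemma contDiffOn_laplacianWithin (hu : UniqueDiffOn ℝ s) {n m : WithTop ℕ∞} (hmn : m + 2 ≤ n)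
    (hf : ContDiffOn ℝ n f s) : ContDiffOn ℝ m (Δ[s] f) s := by
  have hf'' : ContDiffOn ℝ m (fderivWithin ℝ (fderivWithin ℝ f s) s) s :=
    (hf.fderivWithin hu (m := m + 1) (by rwa [add_assoc, one_add_one_eq_two])
      ).fderivWithin hu le_rfl
  refine ContDiffOn.congr (.sum fun i _ => (hf''.clm_apply contDiffOn_const).clm_apply
    contDiffOn_const) fun x hx =>
      laplacianWithin_eq_sum_fderivWithin hu (stdOrthonormalBasis ℝ E) f hx

variable [MeasurableSpace E] [BorelSpace E] {μ : Measure E} [μ.IsAddHaarMeasure]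

theorem integral_mul_laplacian_comm (hs : Convex ℝ s) (hc : IsCompact s) (hu : UniqueDiffOn ℝ s)
    (hf : ContDiffOn ℝ 2 f s) (hg : ContDiffOn ℝ 2 g s)
    (h0 : ∀ x ∈ frontier s, f x = 0 ∧ fderivWithin ℝ f s x = 0) :
    ∫ x in interior s, f x * Δ g x ∂μ = ∫ x in interior s, g x * Δ f x ∂μ := by
  set b := stdOrthonormalBasis ℝ E
  have hint : ∀ {w : E → ℝ}, ContinuousOn w s → IntegrableOn w (interior s) μ := fun hw =>
    (hw.integrableOn_compact hc).mono_set interior_subset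
  have hmul : ∀ {p q : E → ℝ}, ContDiffOn ℝ 2 p s → ContDiffOn ℝ 2 q s →
      IntegrableOn (fun x => p x * Δ q x) (interior s) μ := fun {p q} hp hq =>
    (hint (hp.continuousOn.mul (contDiffOn_laplacianWithin hu (m := 0) (by simp) hq).continuousOn)
      ).congr_fun (fun x hx => congrArg (p x * ·) (laplacianWithin_eq_laplacian hu q hx))
        isOpen_interior.measurableSet
  let F : E → E → ℝ := fun e x => f x * fderivWithin ℝ g s x e - g x * fderivWithin ℝ f s x e
  have hF : ∀ e, ContDiffOn ℝ 1 (F e) s := fun e => by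
    have hd : ∀ {w : E → ℝ}, ContDiffOn ℝ 2 w s → ContDiffOn ℝ 1 (fderivWithin ℝ w s · e) s :=
      fun hw => (hw.fderivWithin hu (by norm_num)).clm_apply contDiffOn_const
    exact ((hf.of_le one_le_two).mul (hd hg)).sub ((hg.of_le one_le_two).mul (hd hf))
  have hF' : ∀ e, IntegrableOn (fun x => fderiv ℝ (F e) x e) (interior s) μ := fun e =>
    (hint (((hF e).continuousOn_fderivWithin hu le_rfl).clm_apply (continuousOn_const (c := e))))
      |>.congr_fun (fun x hx => by
        simp only [fderivWithin_of_mem_nhds (mem_interior_iff_mem_nhds.1 hx)])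
      isOpen_interior.measurableSet
  rw [← sub_eq_zero, ← integral_sub (hmul hf hg) (hmul hg hf)]
  calc ∫ x in interior s, f x * Δ g x - g x * Δ f x ∂μ
      = ∫ x in interior s, ∑ i, fderiv ℝ (F (b i)) x (b i) ∂μ := by
        refine setIntegral_congr_fun isOpen_interior.measurableSet fun x hx => ?_
        simp only [laplacian_eq_sum_fderiv_fderiv b, Finset.mul_sum, ← Finset.sum_sub_distrib, F,
          fderiv_mul_fderivWithin_sub_apply hf hg _ hx]
    _ = 0 := by
        rw [integral_finsetSum _ fun i _ => hF' (b i)]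
        refine Finset.sum_eq_zero fun i _ =>
          integral_fderiv_eq_zero_of_eq_zero_on_frontier hs hc (hF (b i)) (fun x hx => ?_) (b i)
        simp only [F, h0 x hx, zero_mul, _root_.zero_apply, mul_zero, sub_zero]

lemma integral_mul_bilaplacian_comm (hs : Convex ℝ s) (hc : IsCompact s) (hu : UniqueDiffOn ℝ s)
    (hf : ContDiffOn ℝ 4 f s) (hg : ContDiffOn ℝ 4 g s)
    (hf0 : ∀ x ∈ frontier s, f x = 0 ∧ fderivWithin ℝ f s x = 0)
    (hg0 : ∀ x ∈ frontier s, g x = 0 ∧ fderivWithin ℝ g s x = 0) :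
    ∫ x in interior s, f x * Δ (Δ g) x ∂μ = ∫ x in interior s, g x * Δ (Δ f) x ∂μ := by
  have hcongr : ∀ w : E → ℝ, Set.EqOn (Δ (Δ[s] w)) (Δ (Δ w)) (interior s) := fun w x hx =>
    (laplacian_congr_nhds ((laplacianWithin_eq_laplacian hu w).eventuallyEq_of_mem
      (isOpen_interior.mem_nhds hx))).self_of_nhds
  have hgreen : ∀ {p q : E → ℝ}, ContDiffOn ℝ 4 p s → ContDiffOn ℝ 4 q s →
      (∀ x ∈ frontier s, p x = 0 ∧ fderivWithin ℝ p s x = 0) →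
      ∫ x in interior s, p x * Δ (Δ q) x ∂μ = ∫ x in interior s, Δ q x * Δ p x ∂μ :=
    fun {p q} hp hq hp0 => calc
      _ = ∫ x in interior s, p x * Δ (Δ[s] q) x ∂μ :=
          setIntegral_congr_fun isOpen_interior.measurableSet fun x hx => by
            simp only [hcongr q hx]
      _ = ∫ x in interior s, (Δ[s] q) x * Δ p x ∂μ :=
          integral_mul_laplacian_comm hs hc hu (hp.of_le (by norm_num))
            (contDiffOn_laplacianWithin hu (by norm_num) hq) hp0
      _ = _ := setIntegral_congr_fun isOpen_interior.measurableSet fun x hx => by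
            simp only [laplacianWithin_eq_laplacian hu q hx]
  rw [hgreen hf hg hf0, hgreen hg hf hg0]
  simp only [mul_comm]

end Green

section Kernel

open InnerProductSpace Laplacian RealInnerProductSpace

/-- The squared distance `‖y - x‖²`, increased by a term which keeps it positive on the diagonal
when `1 < κ` and vanishes for `κ = 1`. -/
def regDistSq (κ : ℝ) (x : ℝ⁴) : ℝ⁴ → ℝ :=
  quad 1 x (‖x‖ ^ 2 + (κ - 1) * (1 - ‖x‖ ^ 2 / κ))

/-- For `κ = 1` this is `‖x‖²‖y - x*‖²`, where `x*` is the inversion of `x` in the unit sphere. -/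
def regReflDistSq (κ : ℝ) (x : ℝ⁴) : ℝ⁴ → ℝ := quad (‖x‖ ^ 2 / κ) x κ

/-- A regularization, smooth for `1 < κ`, of `16π²` times Boggio's Green function of the Dirichlet
bilaplacian on the unit ball, which is the case `κ = 1`. -/
def regGreen (κ : ℝ) (x y : ℝ⁴) : ℝ :=
  Real.log (regReflDistSq κ x y) - Real.log (regDistSq κ x y)
    + regDistSq κ x y / regReflDistSq κ x y - 1

/-- The bilaplacian of `regGreen κ x`. It concentrates at `x` as `κ → 1`. -/
def regDelta (κ : ℝ) (x y : ℝ⁴) : ℝ :=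
  96 * ((κ - 1) * (1 - ‖x‖ ^ 2 / κ)) ^ 2 / regDistSq κ x y ^ 4

lemma uniqueDiffOn_closedUnitBall : UniqueDiffOn ℝ 𝔻 :=
  uniqueDiffOn_convex (convex_closedBall 0 1)
    (by rw [interior_closedBall 0 one_ne_zero]; exact ⟨0, mem_ball_self one_pos⟩)

lemma integrableOn_unitBall_of_continuousOn {f : ℝ⁴ → ℝ} (hf : ContinuousOn f 𝔻) :
    IntegrableOn f 𝔹 :=
  (hf.integrableOn_compact (isCompact_closedBall 0 1)).mono_set ball_subset_closedBall

variable {κ : ℝ} {x y : ℝ⁴}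

lemma regDistSq_eq (κ : ℝ) (x y : ℝ⁴) :
    regDistSq κ x y = ‖y - x‖ ^ 2 + (κ - 1) * (1 - ‖x‖ ^ 2 / κ) := by
  rw [regDistSq, quad, norm_sub_sq_real, real_inner_comm y x]
  ring

lemma regReflDistSq_comm (κ : ℝ) (x y : ℝ⁴) : regReflDistSq κ x y = regReflDistSq κ y x := by
  simp only [regReflDistSq, quad, real_inner_comm y x]
  ring

lemma regReflDistSq_eq (hκ : 1 ≤ κ) (x y : ℝ⁴) :
    regReflDistSq κ x y = regDistSq κ x y + (1 - ‖x‖ ^ 2 / κ) * (1 - ‖y‖ ^ 2) := by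
  have hκ0 : κ ≠ 0 := by positivity
  simp only [regReflDistSq, regDistSq, quad]
  field_simp
  ring

lemma norm_smul_sub_sq_eq_mul_regReflDistSq (hκ : 1 ≤ κ) (x y : ℝ⁴) :
    ‖(‖x‖ ^ 2 / κ) • y - x‖ ^ 2 = ‖x‖ ^ 2 / κ * regReflDistSq κ x y := by
  have hκ0 : κ ≠ 0 := by positivity
  rw [norm_sub_sq_real, norm_smul, real_inner_smul_left, Real.norm_eq_abs, mul_pow, sq_abs,
    real_inner_comm x y, regReflDistSq, quad]
  field_simp

lemma norm_sq_div_lt_one (hκ : 1 ≤ κ) (hx : x ∈ 𝔹) : ‖x‖ ^ 2 / κ < 1 := by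
  rw [mem_ball_zero_iff] at hx
  rw [div_lt_one (by linarith)]
  nlinarith [norm_nonneg x]

lemma sq_norm_sub_le_regDistSq (hκ : 1 ≤ κ) (hx : x ∈ 𝔹) (y : ℝ⁴) :
    ‖y - x‖ ^ 2 ≤ regDistSq κ x y := by
  rw [regDistSq_eq]
  have := mul_nonneg (sub_nonneg.2 hκ) (sub_nonneg.2 (norm_sq_div_lt_one hκ hx).le)
  linarith

lemma regDistSq_pos (hκ : 1 < κ) (hx : x ∈ 𝔹) (y : ℝ⁴) : 0 < regDistSq κ x y := by
  rw [regDistSq_eq]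
  have := mul_pos (sub_pos.2 hκ) (sub_pos.2 (norm_sq_div_lt_one hκ.le hx))
  positivity

lemma regDistSq_le_regReflDistSq (hκ : 1 ≤ κ) (hx : x ∈ 𝔹) (hy : y ∈ 𝔻) :
    regDistSq κ x y ≤ regReflDistSq κ x y := by
  rw [mem_closedBall_zero_iff] at hy
  rw [regReflDistSq_eq hκ]
  have := mul_nonneg (sub_nonneg.2 (norm_sq_div_lt_one hκ hx).le)
    (sub_nonneg.2 (pow_le_one₀ (n := 2) (norm_nonneg y) hy))
  linarith

lemma regReflDistSq_pos (hκ : 1 < κ) (hx : x ∈ 𝔹) (hy : y ∈ 𝔻) : 0 < regReflDistSq κ x y :=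
  (regDistSq_pos hκ hx y).trans_le (regDistSq_le_regReflDistSq hκ.le hx hy)

lemma contDiffAt_regGreen (hκ : 1 < κ) (hx : x ∈ 𝔹) (hy : y ∈ 𝔻) {n : WithTop ℕ∞} :
    ContDiffAt ℝ n (regGreen κ x) y := by
  have hN : ContDiffAt ℝ n (regDistSq κ x) y := (contDiff_quad _ _ _).contDiffAt
  have hL : ContDiffAt ℝ n (regReflDistSq κ x) y := (contDiff_quad _ _ _).contDiffAt
  have hN0 := (regDistSq_pos hκ hx y).ne'
  have hL0 := (regReflDistSq_pos hκ hx hy).ne'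
  exact (((hL.log hL0).sub (hN.log hN0)).add (hN.div hL hL0)).sub contDiffAt_const

lemma hasFDerivAt_regGreen (hκ : 1 < κ) (hx : x ∈ 𝔹) (hy : y ∈ 𝔻) :
    HasFDerivAt (regGreen κ x) ((2 * (regDistSq κ x y / regReflDistSq κ x y - 1)) •
      ((regDistSq κ x y)⁻¹ • innerSL ℝ (y - x)
        - (regReflDistSq κ x y)⁻¹ • innerSL ℝ ((‖x‖ ^ 2 / κ) • y - x))) y := by
  have hN := (regDistSq_pos hκ hx y).ne'
  have hL := (regReflDistSq_pos hκ hx hy).ne'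
  have hdN : HasFDerivAt (regDistSq κ x) _ y := hasFDerivAt_quad _ _ _ y
  have hdL : HasFDerivAt (regReflDistSq κ x) _ y := hasFDerivAt_quad _ _ _ y
  refine ((((hdL.log hL).sub (hdN.log hN)).add
    (hdN.mul ((hasDerivAt_inv hL).comp_hasFDerivAt y hdL))).sub_const 1).congr_fderiv ?_
  rw [one_smul, Function.comp_apply]
  match_scalars <;> field_simp <;> ring

lemma regGreen_dirichlet (hκ : 1 < κ) (hx : x ∈ 𝔹) (hy : ‖y‖ = 1) :
    regGreen κ x y = 0 ∧ fderivWithin ℝ (regGreen κ x) 𝔻 y = 0 := by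
  have hy' : y ∈ 𝔻 := mem_closedBall_zero_iff.2 hy.le
  have heq : regReflDistSq κ x y = regDistSq κ x y := by rw [regReflDistSq_eq hκ.le, hy]; ring
  have hratio : regDistSq κ x y / regReflDistSq κ x y = 1 := by
    rw [heq, div_self (regDistSq_pos hκ hx y).ne']
  refine ⟨by rw [regGreen, hratio, heq]; ring, ?_⟩
  rw [(hasFDerivAt_regGreen hκ hx hy').hasFDerivWithinAt.fderivWithin
    (uniqueDiffOn_closedUnitBall y hy'), hratio, sub_self, mul_zero, zero_smul]

lemma hasDerivAt_inv_pow (n : ℕ) {t : ℝ} (ht : 0 < t) :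
    HasDerivAt (fun s : ℝ => (s ^ n)⁻¹) (-n * (t ^ (n + 1))⁻¹) t := by
  refine ((hasDerivAt_pow n t).inv (pow_ne_zero n ht.ne')).congr_deriv ?_
  rcases n with _ | n
  · simp
  · rw [Nat.add_sub_cancel]
    field_simp
    ring

lemma laplacian_quad_mul_comp_regReflDistSq (hκ : 1 < κ) (hx : x ∈ 𝔹) (hy : y ∈ 𝔻) (α γ : ℝ)
    (a : ℝ⁴) {f f' f'' : ℝ → ℝ} (hf : ∀ t > 0, HasDerivAt f (f' t) t)
    (hf' : ∀ t > 0, HasDerivAt f' (f'' t) t) :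
    Δ (fun z => quad α a γ z * f (regReflDistSq κ x z)) y =
      8 * (α * f (regReflDistSq κ x y)
          + ‖x‖ ^ 2 / κ * quad α a γ y * f' (regReflDistSq κ x y))
        + 8 * ⟪α • y - a, (‖x‖ ^ 2 / κ) • y - x⟫ * f' (regReflDistSq κ x y)
        + 4 * quad α a γ y * f'' (regReflDistSq κ x y)
          * (‖x‖ ^ 2 / κ * regReflDistSq κ x y) := by
  have hL := regReflDistSq_pos hκ hx hy
  rw [← norm_smul_sub_sq_eq_mul_regReflDistSq hκ.le]
  refine (laplacian_quad_mul_comp_quad α _ γ κ a x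
    ((lt_mem_nhds hL).mono fun t ht => hf t ht) (hf' _ hL)).trans ?_
  rw [finrank_euclideanSpace_fin, regReflDistSq]
  push_cast
  ring

lemma laplacian_comp_regDistSq (hκ : 1 < κ) (hx : x ∈ 𝔹) (y : ℝ⁴) {f f' f'' : ℝ → ℝ}
    (hf : ∀ t > 0, HasDerivAt f (f' t) t) (hf' : ∀ t > 0, HasDerivAt f' (f'' t) t) :
    Δ (fun z => f (regDistSq κ x z)) y =
      8 * f' (regDistSq κ x y)
        + 4 * f'' (regDistSq κ x y) * (regDistSq κ x y - (κ - 1) * (1 - ‖x‖ ^ 2 / κ)) := by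
  have hN := regDistSq_pos hκ hx y
  have hone : (fun z => f (regDistSq κ x z))
      = fun z => quad 0 (0 : ℝ⁴) 1 z * f (regDistSq κ x z) := by
    ext z
    simp [quad]
  rw [hone]
  refine (laplacian_quad_mul_comp_quad 0 1 1 _ 0 x
    ((lt_mem_nhds hN).mono fun t ht => hf t ht) (hf' _ hN)).trans ?_
  rw [finrank_euclideanSpace_fin, regDistSq_eq, ← regDistSq, regDistSq_eq, one_smul]
  simp only [quad, zero_smul, sub_self, inner_zero_left]
  ring

lemma inner_sub_smul_sub_eq (hκ : 1 ≤ κ) (x y : ℝ⁴) :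
    ⟪y - x, (‖x‖ ^ 2 / κ) • y - x⟫ = (‖x‖ ^ 2 / κ * regDistSq κ x y + regReflDistSq κ x y
      - (1 - ‖x‖ ^ 2 / κ) * (κ - ‖x‖ ^ 2 / κ)) / 2 := by
  have hκ0 : κ ≠ 0 := by positivity
  rw [inner_sub_left, inner_sub_right, inner_sub_right, real_inner_smul_right,
    real_inner_smul_right, real_inner_self_eq_norm_sq, real_inner_self_eq_norm_sq,
    real_inner_comm x y, regReflDistSq, regDistSq, quad, quad]
  field_simp
  ring

lemma laplacian_log_regReflDistSq (hκ : 1 < κ) (hx : x ∈ 𝔹) (hy : y ∈ 𝔻) :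
    Δ (fun z => Real.log (regReflDistSq κ x z)) y = 4 * (‖x‖ ^ 2 / κ) / regReflDistSq κ x y := by
  have hL := (regReflDistSq_pos hκ hx hy).ne'
  have h := laplacian_quad_mul_comp_regReflDistSq hκ hx hy 0 1 0
    (fun t ht => Real.hasDerivAt_log ht.ne') fun t ht => hasDerivAt_inv ht.ne'
  simp only [quad, zero_mul, inner_zero_left, zero_smul, sub_self, mul_zero, zero_add,
    one_mul, add_zero, mul_one] at h
  rw [h]
  field_simp
  ring

lemma laplacian_log_regDistSq (hκ : 1 < κ) (hx : x ∈ 𝔹) (y : ℝ⁴) :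
    Δ (fun z => Real.log (regDistSq κ x z)) y = 4 * ((regDistSq κ x y)⁻¹
      + (κ - 1) * (1 - ‖x‖ ^ 2 / κ) * (regDistSq κ x y ^ 2)⁻¹) := by
  have hN := (regDistSq_pos hκ hx y).ne'
  rw [laplacian_comp_regDistSq hκ hx y
    (fun t ht => Real.hasDerivAt_log ht.ne') fun t ht => hasDerivAt_inv ht.ne']
  field_simp
  ring

lemma laplacian_regDistSq_div_regReflDistSq (hκ : 1 < κ) (hx : x ∈ 𝔹) (hy : y ∈ 𝔻) :
    Δ (fun z => regDistSq κ x z / regReflDistSq κ x z) y =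
      4 * (regReflDistSq κ x y - ‖x‖ ^ 2 / κ * regDistSq κ x y
        + (1 - ‖x‖ ^ 2 / κ) * (κ - ‖x‖ ^ 2 / κ)) / regReflDistSq κ x y ^ 2 := by
  have hL := (regReflDistSq_pos hκ hx hy).ne'
  have h := laplacian_quad_mul_comp_regReflDistSq hκ hx hy 1
    (‖x‖ ^ 2 + (κ - 1) * (1 - ‖x‖ ^ 2 / κ)) x (fun t ht => hasDerivAt_inv (x := t) ht.ne')
    fun t ht => (hasDerivAt_inv_pow 2 ht).neg
  rw [← regDistSq, one_smul, inner_sub_smul_sub_eq hκ.le] at h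
  simp only [div_eq_mul_inv _ (regReflDistSq _ _ _)]
  rw [h]
  generalize ‖x‖ ^ 2 / κ = c
  field_simp
  ring

lemma quad_eq_mul_regReflDistSq_sub (hκ : 1 ≤ κ) (x y : ℝ⁴) :
    quad (4 * (‖x‖ ^ 2 / κ) ^ 2) ((4 : ℝ) • x) ((8 - 4 * (‖x‖ ^ 2 / κ)) * κ) y =
      4 * (1 + ‖x‖ ^ 2 / κ) * regReflDistSq κ x y - 4 * (‖x‖ ^ 2 / κ) * regDistSq κ x y
        + 4 * (1 - ‖x‖ ^ 2 / κ) * (κ - ‖x‖ ^ 2 / κ) := by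
  have hκ0 : κ ≠ 0 := by positivity
  simp only [regReflDistSq, regDistSq, quad, real_inner_smul_left]
  field_simp
  ring

/-- The Laplacian of `regGreen κ x` in the ball. -/
def regGreenLaplacian (κ : ℝ) (x y : ℝ⁴) : ℝ :=
  quad (4 * (‖x‖ ^ 2 / κ) ^ 2) ((4 : ℝ) • x) ((8 - 4 * (‖x‖ ^ 2 / κ)) * κ) y
      * (regReflDistSq κ x y ^ 2)⁻¹
    - 4 * ((regDistSq κ x y)⁻¹
      + (κ - 1) * (1 - ‖x‖ ^ 2 / κ) * (regDistSq κ x y ^ 2)⁻¹)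

lemma laplacian_regGreen (hκ : 1 < κ) (hx : x ∈ 𝔹) (hy : y ∈ 𝔹) :
    Δ (regGreen κ x) y = regGreenLaplacian κ x y := by
  have hy' := ball_subset_closedBall hy
  have hL0 := (regReflDistSq_pos hκ hx hy').ne'
  have hN : ContDiffAt ℝ 2 (regDistSq κ x) y := (contDiff_quad _ _ _).contDiffAt
  have hL : ContDiffAt ℝ 2 (regReflDistSq κ x) y := (contDiff_quad _ _ _).contDiffAt
  have hlogN := hN.log (regDistSq_pos hκ hx y).ne'
  have hlogL := hL.log hL0
  have hdiv := hN.div hL hL0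
  have hsum : Δ (regGreen κ x) y = Δ (fun z => Real.log (regReflDistSq κ x z)) y
      - Δ (fun z => Real.log (regDistSq κ x z)) y
      + Δ (fun z => regDistSq κ x z / regReflDistSq κ x z) y - Δ (fun _ : ℝ⁴ => (1 : ℝ)) y :=
    calc Δ (regGreen κ x) y = _ :=
          ContDiffAt.laplacian_sub ((hlogL.sub hlogN).add hdiv) contDiffAt_const
      _ = _ := congrArg (· - _) (ContDiffAt.laplacian_add (hlogL.sub hlogN) hdiv)
      _ = _ := congrArg (· + _ - _) (hlogL.laplacian_sub hlogN)
  rw [hsum, laplacian_log_regReflDistSq hκ hx hy', laplacian_log_regDistSq hκ hx,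
    laplacian_regDistSq_div_regReflDistSq hκ hx hy', laplacian_const, regGreenLaplacian,
    quad_eq_mul_regReflDistSq_sub hκ.le, Pi.zero_apply]
  field_simp
  ring

lemma laplacian_quad_div_regReflDistSq_sq (hκ : 1 < κ) (hx : x ∈ 𝔹) (hy : y ∈ 𝔻) :
    Δ (fun z => quad (4 * (‖x‖ ^ 2 / κ) ^ 2) ((4 : ℝ) • x) ((8 - 4 * (‖x‖ ^ 2 / κ)) * κ) z
      * (regReflDistSq κ x z ^ 2)⁻¹) y = 0 := by
  have hL := (regReflDistSq_pos hκ hx hy).ne'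
  have hvec : (4 * (‖x‖ ^ 2 / κ) ^ 2) • y - (4 : ℝ) • x =
      (4 * (‖x‖ ^ 2 / κ)) • ((‖x‖ ^ 2 / κ) • y - x) - (4 * (1 - ‖x‖ ^ 2 / κ)) • x := by
    module
  have hinner : ⟪x, (‖x‖ ^ 2 / κ) • y - x⟫ = ‖x‖ ^ 2 / κ * (⟪x, y⟫ - κ) := by
    rw [inner_sub_right, real_inner_smul_right, real_inner_self_eq_norm_sq]
    field_simp
  have hLy : regReflDistSq κ x y = ‖x‖ ^ 2 / κ * ‖y‖ ^ 2 - 2 * ⟪x, y⟫ + κ := rfl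
  rw [laplacian_quad_mul_comp_regReflDistSq hκ hx hy _ _ _
    (fun t ht => hasDerivAt_inv_pow 2 ht) fun t ht => (hasDerivAt_inv_pow 3 ht).const_mul _,
    hvec, inner_sub_left, real_inner_smul_left, real_inner_smul_left, real_inner_self_eq_norm_sq,
    norm_smul_sub_sq_eq_mul_regReflDistSq hκ.le, hinner]
  generalize ‖x‖ ^ 2 / κ = c at hLy ⊢
  simp only [quad, real_inner_smul_left]
  field_simp
  linear_combination (-32 * c ^ 2 * regReflDistSq κ x y ^ 6) * hLy

lemma laplacian_inv_add_regDistSq (hκ : 1 < κ) (hx : x ∈ 𝔹) (y : ℝ⁴) :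
    Δ (fun z => (4 * ((regDistSq κ x z)⁻¹
        + (κ - 1) * (1 - ‖x‖ ^ 2 / κ) * (regDistSq κ x z ^ 2)⁻¹) : ℝ)) y = -regDelta κ x y := by
  have hN := (regDistSq_pos hκ hx y).ne'
  have hd : ∀ δ, ∀ t > 0, HasDerivAt (fun t : ℝ => 4 * (t⁻¹ + δ * (t ^ 2)⁻¹)) _ t := fun δ t ht =>
    ((hasDerivAt_inv ht.ne').add ((hasDerivAt_inv_pow 2 ht).const_mul δ)).const_mul 4
  have hd' : ∀ δ, ∀ t > 0, HasDerivAt (fun t : ℝ => 4 * (-(t ^ 2)⁻¹ + δ * _)) _ t := fun δ t ht =>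
    ((hasDerivAt_inv_pow 2 ht).neg.add
      (((hasDerivAt_inv_pow 3 ht).const_mul (-((2 : ℕ) : ℝ))).const_mul δ)).const_mul 4
  rw [laplacian_comp_regDistSq hκ hx y (hd _) (hd' _), regDelta]
  generalize (κ - 1) * (1 - ‖x‖ ^ 2 / κ) = δ
  field_simp
  ring

lemma laplacian_laplacian_regGreen (hκ : 1 < κ) (hx : x ∈ 𝔹) (hy : y ∈ 𝔹) :
    Δ (Δ (regGreen κ x)) y = regDelta κ x y := by
  have hy' := ball_subset_closedBall hy
  have heq : Δ (regGreen κ x) =ᶠ[𝓝 y] regGreenLaplacian κ x :=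
    Set.EqOn.eventuallyEq_of_mem (fun z hz => laplacian_regGreen hκ hx hz) (isOpen_ball.mem_nhds hy)
  have hN : ContDiffAt ℝ 2 (regDistSq κ x) y := (contDiff_quad _ _ _).contDiffAt
  have hL : ContDiffAt ℝ 2 (regReflDistSq κ x) y := (contDiff_quad _ _ _).contDiffAt
  have hN0 := (regDistSq_pos hκ hx y).ne'
  have hN' : ContDiffAt ℝ 2 (fun z => 4 * ((regDistSq κ x z)⁻¹
      + (κ - 1) * (1 - ‖x‖ ^ 2 / κ) * (regDistSq κ x z ^ 2)⁻¹)) y :=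
    contDiffAt_const.mul ((hN.inv hN0).add
      (contDiffAt_const.mul ((hN.pow 2).inv (pow_ne_zero 2 hN0))))
  have hL' := (contDiff_quad (4 * (‖x‖ ^ 2 / κ) ^ 2) ((4 : ℝ) • x)
    ((8 - 4 * (‖x‖ ^ 2 / κ)) * κ) (n := 2)).contDiffAt.mul
    ((hL.pow 2).inv (pow_ne_zero 2 (regReflDistSq_pos hκ hx hy').ne'))
  calc Δ (Δ (regGreen κ x)) y = Δ (regGreenLaplacian κ x) y :=
        (laplacian_congr_nhds heq).self_of_nhds
    _ = 0 - -regDelta κ x y := (hL'.laplacian_sub hN').trans (congrArg₂ _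
        (laplacian_quad_div_regReflDistSq_sq hκ hx hy') (laplacian_inv_add_regDistSq hκ hx y))
    _ = regDelta κ x y := by ring

lemma integral_regGreen_mul_bilaplacian (hκ : 1 < κ) (hx : x ∈ 𝔹) {v : ℝ⁴ → ℝ}
    (hv : ContDiffOn ℝ 4 v 𝔻) (hv0 : ∀ y, ‖y‖ = 1 → v y = 0 ∧ fderivWithin ℝ v 𝔻 y = 0) :
    ∫ y in 𝔹, regGreen κ x y * Δ (Δ v) y = ∫ y in 𝔹, v y * regDelta κ x y := by
  have hfrontier : frontier 𝔻 = sphere 0 1 := frontier_closedBall 0 one_ne_zero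
  have hint : interior 𝔻 = 𝔹 := interior_closedBall 0 one_ne_zero
  have h := integral_mul_bilaplacian_comm (μ := volume) (convex_closedBall 0 1)
    (isCompact_closedBall 0 1) uniqueDiffOn_closedUnitBall
    (fun y hy => (contDiffAt_regGreen hκ hx hy).contDiffWithinAt) hv
    (fun y hy => regGreen_dirichlet hκ hx (by simpa [hfrontier] using hy))
    fun y hy => hv0 y (by simpa [hfrontier] using hy)
  rw [hint] at h
  rw [h]
  exact setIntegral_congr_fun measurableSet_ball fun y hy => by
    simp only [laplacian_laplacian_regGreen hκ hx hy]

end Kernel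

section LogRatioJet

/-- For `j ≤ 3`, the `j`-th derivative of `log L - log N + N / L - 1` in terms of the values `N`,
`N₁`, `N₂` and `L`, `L₁`, `L₂` of two quadratic polynomials and of their derivatives. -/
def logRatioJet (N N₁ N₂ L L₁ L₂ : ℝ) : ℕ → ℝ
  | 0 => Real.log L - Real.log N + N / L - 1
  | 1 => (N / L - 1) * (N₁ / N - L₁ / L)
  | 2 => N / L * (N₁ / N - L₁ / L) ^ 2
      + (N / L - 1) * (N₂ / N - L₂ / L - (N₁ / N) ^ 2 + (L₁ / L) ^ 2)
  | _ => N / L * (N₁ / N - L₁ / L) ^ 3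
      + 3 * (N / L) * (N₁ / N - L₁ / L) * (N₂ / N - L₂ / L - (N₁ / N) ^ 2 + (L₁ / L) ^ 2)
      + (N / L - 1) * (-3 * (N₁ / N) * (N₂ / N) + 2 * (N₁ / N) ^ 3
        + 3 * (L₁ / L) * (L₂ / L) - 2 * (L₁ / L) ^ 3)

lemma hasDerivAt_logRatioJet {N N₁ L L₁ : ℝ → ℝ} {N₂ L₂ t : ℝ} (hN : HasDerivAt N (N₁ t) t)
    (hN₁ : HasDerivAt N₁ N₂ t) (hL : HasDerivAt L (L₁ t) t) (hL₁ : HasDerivAt L₁ L₂ t)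
    (hN0 : N t ≠ 0) (hL0 : L t ≠ 0) {j : ℕ} (hj : j < 3) :
    HasDerivAt (fun s => logRatioJet (N s) (N₁ s) N₂ (L s) (L₁ s) L₂ j)
      (logRatioJet (N t) (N₁ t) N₂ (L t) (L₁ t) L₂ (j + 1)) t := by
  have hr := (hN.div hL hL0).sub_const 1
  have hd := (hN₁.div hN hN0).sub (hL₁.div hL hL0)
  interval_cases j
  · refine (((hL.log hL0).sub (hN.log hN0)).add (hN.div hL hL0)).sub_const 1 |>.congr_deriv ?_
    simp only [logRatioJet]
    field_simp
    ring
  · refine (hr.mul hd).congr_deriv ?_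
    simp only [logRatioJet, Pi.sub_apply, Pi.div_apply]
    field_simp
    ring
  · have hd' := ((((hasDerivAt_const t N₂).div hN hN0).sub
      ((hasDerivAt_const t L₂).div hL hL0)).sub ((hN₁.div hN hN0).pow 2)).add
      ((hL₁.div hL hL0).pow 2)
    refine (((hN.div hL hL0).mul (hd.pow 2)).add (hr.mul hd')).congr_deriv ?_
    simp only [logRatioJet, Pi.sub_apply, Pi.div_apply, Pi.add_apply, Pi.pow_apply,
      Nat.add_one_sub_one, pow_one, Nat.cast_ofNat]
    field_simp
    ring

lemma abs_cubic_le {a b a₂ b₂ p : ℝ} (ha : |a| ≤ p) (hb : |b| ≤ p) (ha₂ : |a₂| ≤ p ^ 2)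
    (hb₂ : |b₂| ≤ p ^ 2) :
    |-3 * a * a₂ + 2 * a ^ 3 + 3 * b * b₂ - 2 * b ^ 3| ≤ 10 * p ^ 3 := by
  have hp : 0 ≤ p := (abs_nonneg _).trans ha
  have h₁ : |a * a₂| ≤ p * p ^ 2 := by rw [abs_mul]; gcongr
  have h₂ : |b * b₂| ≤ p * p ^ 2 := by rw [abs_mul]; gcongr
  have h₃ : |a ^ 3| ≤ p ^ 3 := by rw [abs_pow]; gcongr
  have h₄ : |b ^ 3| ≤ p ^ 3 := by rw [abs_pow]; gcongr
  rw [abs_le] at *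
  constructor <;> linarith

lemma abs_logRatioJet_le {N N₁ N₂ L L₁ L₂ p : ℝ} (hN : 0 < N) (hNL : N ≤ L)
    (ha : |N₁ / N| ≤ p) (hb : |L₁ / L| ≤ p) (ha₂ : |N₂ / N| ≤ p ^ 2) (hb₂ : |L₂ / L| ≤ p ^ 2)
    {j : ℕ} (hj : j < 3) : |logRatioJet N N₁ N₂ L L₁ L₂ (j + 1)| ≤ 42 * p ^ (j + 1) := by
  have hp : 0 ≤ p := (abs_nonneg _).trans ha
  have hL := hN.trans_le hNL
  set a := N₁ / N
  set b := L₁ / L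
  set a₂ := N₂ / N
  set b₂ := L₂ / L
  set r := N / L
  have hr : |r| ≤ 1 := by
    rw [abs_of_pos (div_pos hN hL)]
    exact (div_le_one hL).2 hNL
  have hr1 : |r - 1| ≤ 1 := by
    rw [abs_le]
    constructor <;> linarith [div_pos hN hL, (div_le_one hL).2 hNL]
  have hd : |a - b| ≤ 2 * p := (abs_sub _ _).trans (by linarith)
  have hd₁ : |a₂ - b₂ - a ^ 2 + b ^ 2| ≤ 4 * p ^ 2 := by
    have ha' : |a ^ 2| ≤ p ^ 2 := by rw [abs_pow]; gcongr
    have hb' : |b ^ 2| ≤ p ^ 2 := by rw [abs_pow]; gcongr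
    rw [abs_le] at *
    constructor <;> linarith
  have hd₂ := abs_cubic_le ha hb ha₂ hb₂
  interval_cases j
  · calc |(r - 1) * (a - b)| = |r - 1| * |a - b| := abs_mul _ _
      _ ≤ 1 * (2 * p) := by gcongr
      _ ≤ 42 * p ^ (0 + 1) := by rw [zero_add, pow_one]; linarith
  · calc _ ≤ |r| * |a - b| ^ 2 + |r - 1| * |a₂ - b₂ - a ^ 2 + b ^ 2| := by
          rw [← abs_pow, ← abs_mul, ← abs_mul]
          exact abs_add_le _ _
      _ ≤ 1 * (2 * p) ^ 2 + 1 * (4 * p ^ 2) := by gcongr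
      _ ≤ 42 * p ^ (1 + 1) := by norm_num; nlinarith [sq_nonneg p]
  · calc _ ≤ |r| * |a - b| ^ 3 + 3 * |r| * |a - b| * |a₂ - b₂ - a ^ 2 + b ^ 2|
          + |r - 1| * |-3 * a * a₂ + 2 * a ^ 3 + 3 * b * b₂ - 2 * b ^ 3| := by
          rw [← abs_pow, ← abs_mul, ← abs_mul, ← abs_of_pos (zero_lt_three' ℝ), ← abs_mul,
            ← abs_mul, ← abs_mul, abs_of_pos (zero_lt_three' ℝ)]
          exact abs_add_three _ _ _
      _ ≤ 1 * (2 * p) ^ 3 + 3 * 1 * (2 * p) * (4 * p ^ 2) + 1 * (10 * p ^ 3) := by gcongr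
      _ = 42 * p ^ (2 + 1) := by ring

end LogRatioJet

section KernelJet

open RealInnerProductSpace

variable {κ : ℝ} {x y e : ℝ⁴}

lemma regDistSq_eq_quad_left (hκ : 1 ≤ κ) (x y : ℝ⁴) :
    regDistSq κ x y = quad κ⁻¹ y (‖y‖ ^ 2 + κ - 1) x := by
  have hκ0 : κ ≠ 0 := by positivity
  simp only [regDistSq, quad, real_inner_comm y x]
  field_simp
  ring

lemma sq_norm_inv_smul_sub_le_regDistSq (hκ : 1 ≤ κ) (x : ℝ⁴) (hy : y ∈ 𝔻) :
    ‖κ⁻¹ • x - y‖ ^ 2 ≤ regDistSq κ x y := by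
  have hκ0 : κ ≠ 0 := by positivity
  rw [mem_closedBall_zero_iff] at hy
  have hsplit : regDistSq κ x y = κ * ‖κ⁻¹ • x - y‖ ^ 2 + (κ - 1) * (1 - ‖y‖ ^ 2) := by
    rw [regDistSq_eq_quad_left hκ, norm_sub_sq_real, norm_smul, real_inner_smul_left, quad,
      Real.norm_eq_abs, mul_pow, sq_abs, real_inner_comm x y]
    field_simp
    ring
  have := mul_nonneg (sub_nonneg.2 hκ) (sub_nonneg.2 (pow_le_one₀ (n := 2) (norm_nonneg y) hy))
  nlinarith [sq_nonneg ‖κ⁻¹ • x - y‖]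

/-- The `j`-th derivative, for `j ≤ 3`, of `regGreen κ · y` at `x` along the direction `e`. -/
def regGreenJet (κ : ℝ) (e x y : ℝ⁴) : ℕ → ℝ :=
  logRatioJet (regDistSq κ x y) (2 * ⟪κ⁻¹ • x - y, e⟫) (2 * κ⁻¹ * ‖e‖ ^ 2)
    (regReflDistSq κ x y) (2 * ⟪(‖y‖ ^ 2 / κ) • x - y, e⟫) (2 * (‖y‖ ^ 2 / κ) * ‖e‖ ^ 2)

lemma regGreenJet_zero (κ : ℝ) (e x y : ℝ⁴) : regGreenJet κ e x y 0 = regGreen κ x y := rfl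

lemma hasDerivAt_regGreenJet (hκ : 1 < κ) {t : ℝ} (hx : x + t • e ∈ 𝔹) (hy : y ∈ 𝔻) {j : ℕ}
    (hj : j < 3) : HasDerivAt (fun s : ℝ => regGreenJet κ e (x + s • e) y j)
      (regGreenJet κ e (x + t • e) y (j + 1)) t := by
  have hN : HasDerivAt (fun s : ℝ => regDistSq κ (x + s • e) y)
      (2 * ⟪κ⁻¹ • (x + t • e) - y, e⟫) t := by
    simpa only [regDistSq_eq_quad_left hκ.le] using hasDerivAt_quad_line _ _ _ x e t
  have hL : HasDerivAt (fun s : ℝ => regReflDistSq κ (x + s • e) y)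
      (2 * ⟪(‖y‖ ^ 2 / κ) • (x + t • e) - y, e⟫) t := by
    simp only [regReflDistSq_comm κ _ y]
    exact hasDerivAt_quad_line _ _ _ x e t
  exact hasDerivAt_logRatioJet hN (hasDerivAt_inner_line _ _ x e t) hL
    (hasDerivAt_inner_line _ _ x e t) (regDistSq_pos hκ hx y).ne'
    (regReflDistSq_pos hκ hx hy).ne' hj

lemma abs_regGreenJet_succ_le (hκ : 1 < κ) (hx : x ∈ 𝔹) (hy : y ∈ 𝔻) (e : ℝ⁴) {j : ℕ}
    (hj : j < 3) :
    |regGreenJet κ e x y (j + 1)| ≤ 42 * (2 * ‖e‖ / √(regDistSq κ x y)) ^ (j + 1) := by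
  have hN := regDistSq_pos hκ hx y
  have hNL := regDistSq_le_regReflDistSq hκ.le hx hy
  have hL := hN.trans_le hNL
  have hy1 : ‖y‖ ^ 2 ≤ 1 := pow_le_one₀ (norm_nonneg y) (mem_closedBall_zero_iff.1 hy)
  have hsecond : ∀ {α M : ℝ}, 0 ≤ α → α ≤ 1 → regDistSq κ x y ≤ M →
      |2 * α * ‖e‖ ^ 2 / M| ≤ (2 * ‖e‖ / √(regDistSq κ x y)) ^ 2 := fun {α M} h0 h1 hM => by
    have hM0 := hN.trans_le hM
    rw [abs_of_nonneg (by positivity), div_pow, Real.sq_sqrt hN.le]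
    gcongr
    nlinarith [sq_nonneg ‖e‖]
  have hα : ‖y‖ ^ 2 / κ ≤ 1 := (div_le_one (by linarith)).2 (by linarith)
  have hrefl : ‖(‖y‖ ^ 2 / κ) • x - y‖ ^ 2 ≤ regReflDistSq κ x y := by
    rw [norm_smul_sub_sq_eq_mul_regReflDistSq hκ.le, regReflDistSq_comm]
    exact mul_le_of_le_one_left hL.le hα
  refine abs_logRatioJet_le hN hNL ?_ ?_ ?_ ?_ hj
  · exact abs_inner_div_le hN (sq_norm_inv_smul_sub_le_regDistSq hκ.le x hy) e
  · refine (abs_inner_div_le hL hrefl e).trans ?_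
    gcongr
  · exact hsecond (by positivity) (inv_le_one_of_one_le₀ hκ.le) le_rfl
  · exact hsecond (by positivity) hα hNL

lemma norm_sub_le_two (hx : x ∈ 𝔹) (hy : y ∈ 𝔻) : ‖y - x‖ ≤ 2 := by
  rw [mem_ball_zero_iff] at hx
  rw [mem_closedBall_zero_iff] at hy
  linarith [norm_sub_le y x]

lemma regReflDistSq_le_five (hκ : 1 ≤ κ) (hκ2 : κ ≤ 2) (hx : x ∈ 𝔹) (hy : y ∈ 𝔻) :
    regReflDistSq κ x y ≤ 5 := by
  have hc := (norm_sq_div_lt_one hκ hx).le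
  rw [mem_ball_zero_iff] at hx
  rw [mem_closedBall_zero_iff] at hy
  have hinner : -1 ≤ ⟪x, y⟫ := (neg_le_neg (mul_le_one₀ hx.le (norm_nonneg y) hy)).trans
    (neg_le_of_abs_le (abs_real_inner_le_norm x y))
  have := mul_le_one₀ hc (by positivity) (pow_le_one₀ (n := 2) (norm_nonneg y) hy)
  rw [regReflDistSq, quad]
  linarith

lemma regGreen_eq_log_div (hN : 0 < regDistSq κ x y) (hL : 0 < regReflDistSq κ x y) :
    regGreen κ x y = Real.log (regReflDistSq κ x y / regDistSq κ x y)
      + (regReflDistSq κ x y / regDistSq κ x y)⁻¹ - 1 := by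
  rw [regGreen, Real.log_div hL.ne' hN.ne', inv_div]

lemma regGreen_nonneg (hN : 0 < regDistSq κ x y) (hL : 0 < regReflDistSq κ x y) :
    0 ≤ regGreen κ x y := by
  rw [regGreen_eq_log_div hN hL]
  linarith [Real.one_sub_inv_le_log_of_pos (div_pos hL hN)]

lemma abs_regGreen_le (hκ : 1 ≤ κ) (hκ2 : κ ≤ 2) (hx : x ∈ 𝔹) (hy : y ∈ 𝔻) (hyx : y ≠ x) :
    |regGreen κ x y| ≤ 5 * (‖y - x‖ ^ 2)⁻¹ := by
  have hr : 0 < ‖y - x‖ := norm_pos_iff.2 (sub_ne_zero.2 hyx)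
  have hrN := sq_norm_sub_le_regDistSq hκ hx y
  have hN : 0 < regDistSq κ x y := (by positivity : 0 < ‖y - x‖ ^ 2).trans_le hrN
  have hNL := regDistSq_le_regReflDistSq hκ hx hy
  have hL := hN.trans_le hNL
  have hquot : regReflDistSq κ x y / regDistSq κ x y ≤ 5 * (‖y - x‖ ^ 2)⁻¹ :=
    div_le_div₀ (by norm_num) (regReflDistSq_le_five hκ hκ2 hx hy) (by positivity) hrN
  rw [abs_of_nonneg (regGreen_nonneg hN hL), regGreen_eq_log_div hN hL]
  linarith [Real.log_le_sub_one_of_pos (div_pos hL hN),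
    inv_le_one_of_one_le₀ ((one_le_div hN).2 hNL)]

lemma abs_regGreenJet_le (hκ : 1 < κ) (hκ2 : κ ≤ 2) (hx : x ∈ 𝔹) (hy : y ∈ 𝔻) (hyx : y ≠ x)
    (e : ℝ⁴) {j : ℕ} (hj : j ≤ 3) :
    |regGreenJet κ e x y j| ≤ 336 * ‖e‖ ^ j * (‖y - x‖ ^ 3)⁻¹ := by
  have hr : 0 < ‖y - x‖ := norm_pos_iff.2 (sub_ne_zero.2 hyx)
  have hr2 := norm_sub_le_two hx hy
  rcases j with _ | j
  · refine (abs_regGreen_le hκ.le hκ2 hx hy hyx).trans ?_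
    rw [pow_zero, mul_one, ← div_eq_mul_inv, ← div_eq_mul_inv,
      div_le_div_iff₀ (by positivity) (by positivity)]
    nlinarith [sq_nonneg ‖y - x‖]
  · have hsqrt : ‖y - x‖ ≤ √(regDistSq κ x y) :=
      Real.le_sqrt_of_sq_le (sq_norm_sub_le_regDistSq hκ.le hx y)
    -- On the ball every power `r⁻ʲ` with `j ≤ 3` is dominated by the integrable power `r⁻³`.
    calc |regGreenJet κ e x y (j + 1)|
        ≤ 42 * (2 * ‖e‖ / √(regDistSq κ x y)) ^ (j + 1) := abs_regGreenJet_succ_le hκ hx hy e hj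
      _ ≤ 42 * (2 * ‖e‖ / ‖y - x‖) ^ (j + 1) := by gcongr
      _ = 42 * 2 ^ (j + 1) * ‖e‖ ^ (j + 1) * (‖y - x‖ ^ (2 - j) * (‖y - x‖ ^ 3)⁻¹) := by
          have : ‖y - x‖ ^ 3 = ‖y - x‖ ^ (2 - j) * ‖y - x‖ ^ (j + 1) := by
            rw [← pow_add]; congr 1; omega
          rw [this, div_pow, mul_pow]
          field_simp
      _ ≤ 42 * 2 ^ (j + 1) * ‖e‖ ^ (j + 1) * (2 ^ (2 - j) * (‖y - x‖ ^ 3)⁻¹) := by gcongr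
      _ = 336 * ‖e‖ ^ (j + 1) * (‖y - x‖ ^ 3)⁻¹ := by
          have : (2 : ℝ) ^ (j + 1) * 2 ^ (2 - j) = 8 := by
            rw [← pow_add, show j + 1 + (2 - j) = 3 by omega]; norm_num
          linear_combination 42 * ‖e‖ ^ (j + 1) * (‖y - x‖ ^ 3)⁻¹ * this

end KernelJet

section RieszKernel

lemma sub_mem_ball_two_mul {E : Type*} [NormedAddCommGroup E] {r : ℝ} {x y : E}
    (hx : x ∈ ball 0 r) (hy : y ∈ ball 0 r) :
    y - x ∈ ball 0 (2 * r) := by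
  rw [mem_ball_zero_iff] at *
  linarith [norm_sub_le y x]

variable {E : Type*} [NormedAddCommGroup E] [NormedSpace ℝ E] [FiniteDimensional ℝ E]
  [MeasurableSpace E] [BorelSpace E] (μ : Measure E) [μ.IsAddHaarMeasure] {k : ℕ}

lemma integrableOn_ball_inv_norm_pow (hk : k < Module.finrank ℝ E) (r : ℝ) :
    IntegrableOn (fun z : E => (‖z‖ ^ k)⁻¹) (ball 0 r) μ := by
  have : Nontrivial E := Module.nontrivial_of_finrank_pos (R := ℝ) (Nat.zero_lt_of_lt hk)
  rw [integrableOn_fun_norm_addHaar μ (f := fun s => (s ^ k)⁻¹)]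
  have hpow : IntegrableOn (fun s : ℝ => s ^ (Module.finrank ℝ E - 1 - k)) (Set.Ioo 0 r) :=
    ((continuous_pow _).integrableOn_Icc).mono_set Set.Ioo_subset_Icc_self
  refine hpow.congr_fun (fun s hs => ?_) measurableSet_Ioo
  simp only [smul_eq_mul]
  rw [← div_eq_mul_inv, eq_div_iff (pow_pos hs.1 k).ne', ← pow_add]
  congr 1
  omega

lemma integrableOn_ball_inv_norm_sub_pow (hk : k < Module.finrank ℝ E) {r : ℝ} {x : E}
    (hx : x ∈ ball 0 r) : IntegrableOn (fun y => (‖y - x‖ ^ k)⁻¹) (ball 0 r) μ := by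
  have := ((integrable_indicator_iff measurableSet_ball).2
    (integrableOn_ball_inv_norm_pow μ hk (2 * r))).comp_sub_right x
  exact this.integrableOn.congr_fun
    (fun y hy => Set.indicator_of_mem (sub_mem_ball_two_mul hx hy) _) measurableSet_ball

lemma setIntegral_inv_norm_sub_pow_le (hk : k < Module.finrank ℝ E) {r : ℝ} {x : E}
    (hx : x ∈ ball 0 r) :
    ∫ y in ball 0 r, (‖y - x‖ ^ k)⁻¹ ∂μ ≤ ∫ z in ball 0 (2 * r), (‖z‖ ^ k)⁻¹ ∂μ := by
  set f : E → ℝ := (ball 0 (2 * r)).indicator fun z => (‖z‖ ^ k)⁻¹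
  have hf : Integrable f μ := (integrable_indicator_iff measurableSet_ball).2
    (integrableOn_ball_inv_norm_pow μ hk (2 * r))
  calc ∫ y in ball 0 r, (‖y - x‖ ^ k)⁻¹ ∂μ = ∫ y in ball 0 r, f (y - x) ∂μ :=
        setIntegral_congr_fun measurableSet_ball fun y hy =>
          (Set.indicator_of_mem (sub_mem_ball_two_mul hx hy) fun z => (‖z‖ ^ k)⁻¹).symm
    _ ≤ ∫ y, f (y - x) ∂μ := setIntegral_le_integral (hf.comp_sub_right x)
        (.of_forall fun y => Set.indicator_nonneg (fun z _ => by positivity) _)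
    _ = ∫ z in ball 0 (2 * r), (‖z‖ ^ k)⁻¹ ∂μ := by
        rw [integral_sub_right_eq_self f x, integral_indicator measurableSet_ball]

end RieszKernel

section GreenPotential

open InnerProductSpace Laplacian

/-- The profile of the approximate identity `regDelta`. -/
def bubble (z : ℝ⁴) : ℝ := 96 * ((1 + ‖z‖ ^ 2) ^ 4)⁻¹

/-- The mass of `bubble`, equal to `16 * π ^ 2`: the normalisation constant of `regGreen`. -/
def greenMass : ℝ := ∫ z, bubble z

lemma bubble_pos (z : ℝ⁴) : 0 < bubble z := by
  unfold bubble
  positivity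

lemma integrable_bubble : Integrable bubble := by
  have hrpow := integrable_rpow_neg_one_add_norm_sq (E := ℝ⁴) (μ := volume) (r := 8)
    (by norm_num [finrank_euclideanSpace_fin])
  refine (hrpow.congr (.of_forall fun z => ?_)).const_mul 96
  simp only
  rw [show (-8 / 2 : ℝ) = -((4 : ℕ) : ℝ) by norm_num, Real.rpow_neg (by positivity),
    Real.rpow_natCast]

lemma greenMass_pos : 0 < greenMass := by
  refine (integral_pos_iff_support_of_nonneg (fun z => (bubble_pos z).le) integrable_bubble).2 ?_
  rw [Function.support_eq_univ fun z => (bubble_pos z).ne', Measure.measure_univ_pos]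
  exact NeZero.ne _

lemma tendsto_norm_pow_mul_bubble :
    Tendsto (fun z : ℝ⁴ => ‖z‖ ^ 4 * bubble z) (Bornology.cobounded ℝ⁴) (𝓝 0) := by
  have hinv : Tendsto (fun z : ℝ⁴ => 96 * (‖z‖ ^ 4)⁻¹) (Bornology.cobounded ℝ⁴) (𝓝 0) := by
    simpa using ((tendsto_pow_atTop four_ne_zero).comp
      tendsto_norm_cobounded_atTop).inv_tendsto_atTop.const_mul (96 : ℝ)
  refine squeeze_zero (fun z => mul_nonneg (by positivity) (bubble_pos z).le) (fun z => ?_) hinv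
  rcases eq_or_ne z 0 with rfl | hz
  · simp
  rw [bubble, mul_left_comm, ← div_eq_mul_inv, ← one_div]
  gcongr 96 * ?_
  rw [div_le_div_iff₀ (by positivity) (by positivity), one_mul, ← pow_add]
  calc ‖z‖ ^ (4 + 4) = (‖z‖ ^ 2) ^ 4 := by ring
    _ ≤ (1 + ‖z‖ ^ 2) ^ 4 := by gcongr; linarith

variable {κ : ℝ} {x : ℝ⁴}

lemma regDelta_width_pos (hκ : 1 < κ) (hx : x ∈ 𝔹) : 0 < (κ - 1) * (1 - ‖x‖ ^ 2 / κ) :=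
  mul_pos (sub_pos.2 hκ) (sub_pos.2 (norm_sq_div_lt_one hκ.le hx))

lemma regDelta_eq_bubble (hκ : 1 < κ) (hx : x ∈ 𝔹) (y : ℝ⁴) :
    regDelta κ x y = (√((κ - 1) * (1 - ‖x‖ ^ 2 / κ)))⁻¹ ^ 4
      * bubble ((√((κ - 1) * (1 - ‖x‖ ^ 2 / κ)))⁻¹ • (x - y)) := by
  have hw := regDelta_width_pos hκ hx
  rw [regDelta, regDistSq_eq, bubble]
  set w := (κ - 1) * (1 - ‖x‖ ^ 2 / κ)
  have hsq : (√w)⁻¹ ^ 2 = w⁻¹ := by rw [inv_pow, Real.sq_sqrt hw.le]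
  rw [norm_smul, norm_inv, Real.norm_of_nonneg (Real.sqrt_nonneg w), mul_pow (√w)⁻¹, hsq,
    show (√w)⁻¹ ^ 4 = ((√w)⁻¹ ^ 2) ^ 2 by ring, hsq, norm_sub_rev y x]
  field_simp
  rw [add_comm]

lemma tendsto_inv_sqrt_regDelta_width (hx : x ∈ 𝔹) :
    Tendsto (fun κ : ℝ => (√((κ - 1) * (1 - ‖x‖ ^ 2 / κ)))⁻¹) (𝓝[>] 1) atTop := by
  refine Tendsto.inv_tendsto_nhdsGT_zero (tendsto_nhdsWithin_iff.2 ⟨?_, ?_⟩)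
  · have : ContinuousAt (fun κ : ℝ => √((κ - 1) * (1 - ‖x‖ ^ 2 / κ))) 1 := by
      fun_prop (disch := norm_num)
    simpa [ContinuousAt] using this.mono_left nhdsWithin_le_nhds
  · filter_upwards [self_mem_nhdsWithin] with κ hκ
    exact Real.sqrt_pos.2 (regDelta_width_pos hκ hx)

lemma tendsto_integral_mul_regDelta (hx : x ∈ 𝔹) {v : ℝ⁴ → ℝ} (hv : ContinuousOn v 𝔻) :
    Tendsto (fun κ => ∫ y in 𝔹, v y * regDelta κ x y) (𝓝[>] 1) (𝓝 (greenMass * v x)) := by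
  have hint : Integrable (Set.indicator 𝔹 v) := (integrable_indicator_iff measurableSet_ball).2
    (integrableOn_unitBall_of_continuousOn hv)
  have hcont : ContinuousAt (Set.indicator 𝔹 v) x :=
    (hv.continuousAt (closedBall_mem_nhds_of_mem hx)).congr
      (by filter_upwards [isOpen_ball.mem_nhds hx] with y hy using (Set.indicator_of_mem hy v).symm)
  have hlim := tendsto_integral_comp_smul_smul_of_integrable' (μ := volume)
    (φ := fun z => greenMass⁻¹ * bubble z)
    (fun z => mul_nonneg (inv_nonneg.2 greenMass_pos.le) (bubble_pos z).le)
    (by rw [integral_const_mul]; exact inv_mul_cancel₀ greenMass_pos.ne')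
    (by simpa [mul_left_comm] using tendsto_norm_pow_mul_bubble.const_mul greenMass⁻¹) hint hcont
  rw [Set.indicator_of_mem hx] at hlim
  refine ((hlim.comp (tendsto_inv_sqrt_regDelta_width hx)).const_mul greenMass).congr' ?_
  filter_upwards [self_mem_nhdsWithin] with κ hκ
  rw [Function.comp_apply, ← integral_const_mul, ← integral_indicator measurableSet_ball]
  congr 1 with y
  by_cases hy : y ∈ 𝔹
  · rw [Set.indicator_of_mem hy, Set.indicator_of_mem hy, regDelta_eq_bubble hκ hx y,
      finrank_euclideanSpace_fin, smul_eq_mul]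
    field_simp [greenMass_pos.ne']
  · rw [Set.indicator_of_notMem hy, Set.indicator_of_notMem hy, smul_zero, mul_zero]

/-- A sequence of regularisation parameters decreasing to `1`. -/
def regParam (n : ℕ) : ℝ := 1 + 1 / ((n : ℝ) + 1)

lemma one_lt_regParam (n : ℕ) : 1 < regParam n :=
  lt_add_of_pos_right 1 Nat.one_div_pos_of_nat

lemma regParam_le_two (n : ℕ) : regParam n ≤ 2 := by
  have : 1 / ((n : ℝ) + 1) ≤ 1 := (div_le_one (by positivity)).2 (by simp)
  rw [regParam]
  linarith

lemma tendsto_regParam_sub_one : Tendsto (fun n => regParam n - 1) atTop (𝓝 0) := by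
  simpa [regParam] using tendsto_one_div_add_atTop_nhds_zero_nat (𝕜 := ℝ)

lemma tendsto_regParam : Tendsto regParam atTop (𝓝[>] 1) :=
  tendsto_nhdsWithin_iff.2 ⟨by simpa using tendsto_regParam_sub_one.add_const 1,
    .of_forall one_lt_regParam⟩

/-- `v` is a solution, `C⁴` up to the boundary, of the Dirichlet problem `Δ²v = h` on the unit
ball. -/
structure IsDirichletSolution (h v : ℝ⁴ → ℝ) : Prop where
  contDiffOn : ContDiffOn ℝ 4 v 𝔻
  laplacian_laplacian : ∀ x ∈ 𝔹, Δ (Δ v) x = h x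
  boundary : ∀ x, ‖x‖ = 1 → v x = 0 ∧ fderivWithin ℝ v 𝔻 x = 0

/-- `v = ∫ G(·, y) h(y) dy` for the Green function `G` of the Dirichlet bilaplacian on the unit
ball. Regularising `G` keeps all derivatives of the integrand bounded. -/
def IsGreenPotential (h v : ℝ⁴ → ℝ) : Prop :=
  ∀ x ∈ 𝔹, Tendsto (fun n => ∫ y in 𝔹, regGreen (regParam n) x y * h y) atTop
    (𝓝 (greenMass * v x))

variable {h v : ℝ⁴ → ℝ}

lemma IsDirichletSolution.isGreenPotential (hv : IsDirichletSolution h v) :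
    IsGreenPotential h v := fun x hx => by
  refine ((tendsto_integral_mul_regDelta hx hv.contDiffOn.continuousOn).comp
    tendsto_regParam).congr fun n => ?_
  rw [Function.comp_apply,
    ← integral_regGreen_mul_bilaplacian (one_lt_regParam n) hx hv.contDiffOn hv.boundary]
  exact setIntegral_congr_fun measurableSet_ball fun y hy => by
    simp only [hv.laplacian_laplacian y hy]

lemma IsGreenPotential.nonneg (hv : IsGreenPotential h v) (hh : ∀ y ∈ 𝔹, 0 ≤ h y) (hx : x ∈ 𝔹) :
    0 ≤ v x := by
  refine nonneg_of_mul_nonneg_right (ge_of_tendsto' (hv x hx) fun n => ?_) greenMass_pos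
  exact setIntegral_nonneg measurableSet_ball fun y hy =>
    mul_nonneg (regGreen_nonneg (regDistSq_pos (one_lt_regParam n) hx y)
      (regReflDistSq_pos (one_lt_regParam n) hx (ball_subset_closedBall hy))) (hh y hy)

end GreenPotential

section DerivativeBounds

variable {E : Type*} [NormedAddCommGroup E] [NormedSpace ℝ E]

lemma hasDerivAt_iteratedFDeriv_line {f : E → ℝ} {x e : E} {t : ℝ} {j : ℕ}
    (hf : ContDiffAt ℝ (j + 1 : ℕ) f (x + t • e)) :
    HasDerivAt (fun s : ℝ => iteratedFDeriv ℝ j f (x + s • e) fun _ => e)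
      (iteratedFDeriv ℝ (j + 1) f (x + t • e) fun _ => e) t := by
  refine ((hasFDerivAt_iteratedFDeriv_apply hf fun _ => e).comp_hasDerivAt t
    (hasDerivAt_line x e t)).congr_deriv ?_
  rw [iteratedFDeriv_succ_apply_left]
  rfl

lemma isDerivChain_iteratedFDeriv {s : Set E} (hs : IsOpen s) {m : ℕ} {f : E → ℝ}
    (hf : ContDiffOn ℝ m f s) {x e : E} {b : ℝ} (hx : ∀ t ∈ Set.Icc 0 b, x + t • e ∈ s) (c : ℝ) :
    IsDerivChain m b fun j t => c * iteratedFDeriv ℝ j f (x + t • e) fun _ => e :=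
  fun j hj t ht => (hasDerivAt_iteratedFDeriv_line
    ((hf.contDiffAt (hs.mem_nhds (hx t ht))).of_le (by exact_mod_cast hj))).const_mul c

lemma exists_pos_forall_Icc_add_smul_mem {s : Set E} (hs : IsOpen s) {x : E} (hx : x ∈ s) (e : E) :
    ∃ b : ℝ, 0 < b ∧ ∀ t ∈ Set.Icc 0 b, x + t • e ∈ s := by
  have hcont : ContinuousAt (fun t : ℝ => x + t • e) 0 := by fun_prop
  obtain ⟨δ, hδ, hball⟩ := Metric.eventually_nhds_iff.1
    (hcont.eventually_mem (hs.mem_nhds (by simpa using hx)))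
  refine ⟨δ / 2, half_pos hδ, fun t ht => hball ?_⟩
  rw [Real.dist_0_eq_abs, abs_of_nonneg ht.1]
  linarith [ht.2]

end DerivativeBounds

section PotentialBounds

variable {κ M : ℝ} {x y : ℝ⁴} {h v : ℝ⁴ → ℝ} {j : ℕ}

lemma continuousOn_regGreenJet (hκ : 1 < κ) (hx : x ∈ 𝔹) (e : ℝ⁴) (j : ℕ) :
    ContinuousOn (fun y => regGreenJet κ e x y j) 𝔻 := by
  have hN : ContinuousOn (fun y => regDistSq κ x y) 𝔻 :=
    (contDiff_quad _ _ _ (n := 0)).continuous.continuousOn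
  have hL : ContinuousOn (fun y => regReflDistSq κ x y) 𝔻 :=
    (contDiff_quad _ _ _ (n := 0)).continuous.continuousOn
  have hN0 : ∀ y ∈ 𝔻, regDistSq κ x y ≠ 0 := fun y _ => (regDistSq_pos hκ hx y).ne'
  have hL0 : ∀ y ∈ 𝔻, regReflDistSq κ x y ≠ 0 := fun y hy => (regReflDistSq_pos hκ hx hy).ne'
  rcases j with _ | _ | _ | j <;> simp only [regGreenJet, logRatioJet] <;>
    fun_prop (disch := assumption)

lemma integrableOn_regGreenJet_mul (hκ : 1 < κ) (hx : x ∈ 𝔹) (hh : ContinuousOn h 𝔻) (e : ℝ⁴)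
    (j : ℕ) : IntegrableOn (fun y => regGreenJet κ e x y j * h y) 𝔹 :=
  integrableOn_unitBall_of_continuousOn ((continuousOn_regGreenJet hκ hx e j).mul hh)

lemma sq_sub_one_div_le_regDistSq (hκ : 1 < κ) (hx : x ∈ 𝔹) (y : ℝ⁴) :
    (κ - 1) ^ 2 / κ ≤ regDistSq κ x y := by
  have hx1 : ‖x‖ ^ 2 ≤ 1 := pow_le_one₀ (norm_nonneg x) (mem_ball_zero_iff.1 hx).le
  calc (κ - 1) ^ 2 / κ = (κ - 1) * (1 - 1 / κ) := by field_simp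
    _ ≤ (κ - 1) * (1 - ‖x‖ ^ 2 / κ) := by gcongr
    _ ≤ regDistSq κ x y := by rw [regDistSq_eq]; linarith [sq_nonneg ‖y - x‖]

lemma abs_regGreenJet_succ_le_const (hκ : 1 < κ) (hx : x ∈ 𝔹) (hy : y ∈ 𝔻) (e : ℝ⁴) (hj : j < 3) :
    |regGreenJet κ e x y (j + 1)| ≤ 42 * (2 * ‖e‖ / √((κ - 1) ^ 2 / κ)) ^ (j + 1) := by
  have : 0 < (κ - 1) ^ 2 / κ := by have := sub_pos.2 hκ; positivity
  refine (abs_regGreenJet_succ_le hκ hx hy e hj).trans ?_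
  gcongr
  exact sq_sub_one_div_le_regDistSq hκ hx y

lemma hasDerivAt_integral_regGreenJet_mul (hκ : 1 < κ) (hh : ContinuousOn h 𝔻) {e : ℝ⁴} {t : ℝ}
    (hx : x + t • e ∈ 𝔹) (hj : j < 3) :
    HasDerivAt (fun s : ℝ => ∫ y in 𝔹, regGreenJet κ e (x + s • e) y j * h y)
      (∫ y in 𝔹, regGreenJet κ e (x + t • e) y (j + 1) * h y) t := by
  have hline : Continuous fun s : ℝ => x + s • e := by fun_prop
  have hnhds := (isOpen_ball.preimage hline).mem_nhds hx
  set B := 42 * (2 * ‖e‖ / √((κ - 1) ^ 2 / κ)) ^ (j + 1)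
  refine (hasDerivAt_integral_of_dominated_loc_of_deriv_le (bound := fun y => B * |h y|)
    (F := fun s y => regGreenJet κ e (x + s • e) y j * h y)
    (F' := fun s y => regGreenJet κ e (x + s • e) y (j + 1) * h y) (μ := volume.restrict 𝔹) hnhds ?_
    (integrableOn_regGreenJet_mul hκ hx hh e j)
    (integrableOn_regGreenJet_mul hκ hx hh e (j + 1)).aestronglyMeasurable ?_ ?_ ?_).2
  · filter_upwards [hnhds] with s hs
    exact (integrableOn_regGreenJet_mul hκ hs hh e j).aestronglyMeasurable
  · filter_upwards [ae_restrict_mem measurableSet_ball] with y hy s hs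
    rw [norm_mul, Real.norm_eq_abs, Real.norm_eq_abs]
    gcongr
    exact abs_regGreenJet_succ_le_const hκ hs (ball_subset_closedBall hy) e hj
  · exact (integrableOn_unitBall_of_continuousOn hh.abs).const_mul B
  · filter_upwards [ae_restrict_mem measurableSet_ball] with y hy s hs
    exact (hasDerivAt_regGreenJet hκ hs (ball_subset_closedBall hy) hj).mul_const (h y)

lemma ae_mem_unitBall_and_ne (x : ℝ⁴) : ∀ᵐ y ∂volume.restrict 𝔹, y ∈ 𝔹 ∧ y ≠ x :=
  (ae_restrict_mem measurableSet_ball).and (ae_restrict_of_ae (Measure.ae_ne volume x))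

/-- A uniform bound for the integrals of `‖y - x‖⁻³` over the unit ball. -/
def rieszBound : ℝ := ∫ z in ball (0 : ℝ⁴) 2, (‖z‖ ^ 3)⁻¹

lemma abs_integral_mul_le_rieszBound (hx : x ∈ 𝔹) {k : ℝ⁴ → ℝ} {C : ℝ}
    (hk : ∀ y ∈ 𝔹, y ≠ x → |k y| ≤ C * (‖y - x‖ ^ 3)⁻¹) (hC : 0 ≤ C)
    (hM : ∀ y ∈ 𝔹, |h y| ≤ M) : |∫ y in 𝔹, k y * h y| ≤ C * M * rieszBound := by
  have hM0 : 0 ≤ M := (abs_nonneg _).trans (hM x hx)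
  have hdim : 3 < Module.finrank ℝ ℝ⁴ := by rw [finrank_euclideanSpace_fin]; norm_num
  have hint : IntegrableOn (fun y => C * M * (‖y - x‖ ^ 3)⁻¹) 𝔹 :=
    (integrableOn_ball_inv_norm_sub_pow volume hdim hx).const_mul _
  calc |∫ y in 𝔹, k y * h y| ≤ ∫ y in 𝔹, C * M * (‖y - x‖ ^ 3)⁻¹ := by
        refine norm_integral_le_of_norm_le (f := fun y => k y * h y) hint ?_
        filter_upwards [ae_mem_unitBall_and_ne x] with y ⟨hy, hyx⟩
        rw [norm_mul, mul_right_comm]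
        exact mul_le_mul (hk y hy hyx) (hM y hy) (norm_nonneg _) (by positivity)
    _ ≤ C * M * rieszBound := by
        rw [integral_const_mul, rieszBound, ← mul_one (2 : ℝ)]
        gcongr
        exact setIntegral_inv_norm_sub_pow_le volume hdim hx

lemma abs_integral_regGreenJet_mul_le (hκ : 1 < κ) (hκ2 : κ ≤ 2) (hx : x ∈ 𝔹)
    (hM : ∀ y ∈ 𝔹, |h y| ≤ M) (e : ℝ⁴) (hj : j ≤ 3) :
    |∫ y in 𝔹, regGreenJet κ e x y j * h y| ≤ 336 * ‖e‖ ^ j * M * rieszBound :=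
  abs_integral_mul_le_rieszBound hx (fun _ hy hyx =>
    abs_regGreenJet_le hκ hκ2 hx (ball_subset_closedBall hy) hyx e hj) (by positivity) hM

lemma IsGreenPotential.abs_iteratedFDeriv_diag_le (hv : IsGreenPotential h v)
    (hh : ContinuousOn h 𝔻) (hM : ∀ y ∈ 𝔹, |h y| ≤ M) (hv3 : ContDiffOn ℝ 3 v 𝔹) (hx : x ∈ 𝔹)
    (hj : j ≤ 3) (e : ℝ⁴) :
    |greenMass * iteratedFDeriv ℝ j v x fun _ => e| ≤ 336 * ‖e‖ ^ j * M * rieszBound := by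
  obtain ⟨b, hb, hline⟩ := exists_pos_forall_Icc_add_smul_mem isOpen_ball hx e
  have hvj : ContDiffOn ℝ j v 𝔹 := hv3.of_le (by exact_mod_cast hj)
  have hcont : ContinuousAt
      (fun t : ℝ => greenMass * iteratedFDeriv ℝ j v (x + t • e) fun _ => e) 0 := by
    have hvx : ContinuousAt (iteratedFDeriv ℝ j v) (x + (0 : ℝ) • e) := by
      rw [zero_smul, add_zero]
      exact (hvj.contDiffAt (isOpen_ball.mem_nhds hx)).continuousAt_iteratedFDeriv le_rfl
    have hjet : ContinuousAt (fun t : ℝ => iteratedFDeriv ℝ j v (x + t • e)) 0 :=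
      hvx.comp (f := fun t : ℝ => x + t • e) (by fun_prop)
    exact ((ContinuousMultilinearMap.apply ℝ (fun _ : Fin j => ℝ⁴) ℝ fun _ => e).continuous
      |>.continuousAt.comp hjet).const_mul greenMass
  have := IsDerivChain.abs_le_of_tendsto hb
    (F := fun n i t => ∫ y in 𝔹, regGreenJet (regParam n) e (x + t • e) y i * h y)
    (fun n i hi t ht => hasDerivAt_integral_regGreenJet_mul (one_lt_regParam n) hh (hline t ht)
      (hi.trans_le hj))
    (fun n t ht => abs_integral_regGreenJet_mul_le (one_lt_regParam n) (regParam_le_two n)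
      (hline t ht) hM e hj)
    (isDerivChain_iteratedFDeriv isOpen_ball hvj hline greenMass) hcont
    fun t ht => by simpa [iteratedFDeriv_zero_apply, regGreenJet_zero] using hv _ (hline t ht)
  simpa using this

/-- The constant in the `C³` estimate for Green potentials. -/
def potentialBound : ℝ := 336 * 3 ^ 3 * rieszBound / greenMass

lemma rieszBound_nonneg : 0 ≤ rieszBound := integral_nonneg fun _ => by positivity

lemma potentialBound_nonneg : 0 ≤ potentialBound :=
  div_nonneg (mul_nonneg (by norm_num) rieszBound_nonneg) greenMass_pos.le

lemma IsGreenPotential.norm_iteratedFDeriv_le (hv : IsGreenPotential h v)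
    (hh : ContinuousOn h 𝔻) (hM : ∀ y ∈ 𝔹, |h y| ≤ M) (hv3 : ContDiffOn ℝ 3 v 𝔹) (hx : x ∈ 𝔹)
    (hj : j ≤ 3) : ‖iteratedFDeriv ℝ j v x‖ ≤ potentialBound * M := by
  have hM0 : 0 ≤ M := (abs_nonneg _).trans (hM x hx)
  have hvx : ContDiffAt ℝ j v x :=
    (hv3.contDiffAt (isOpen_ball.mem_nhds hx)).of_le (by exact_mod_cast hj)
  refine opNorm_le_of_abs_apply_le_of_norm_le_one (mul_nonneg potentialBound_nonneg hM0)
    fun w hw => abs_apply_le_of_abs_apply_diag_le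
      (fun w σ => iteratedFDeriv_comp_perm_of_contDiffAt hvx w σ) (fun e he => ?_) hw
  have hdiag := hv.abs_iteratedFDeriv_diag_le hh hM hv3 hx hj e
  rw [abs_mul, abs_of_pos greenMass_pos, ← le_div_iff₀' greenMass_pos] at hdiag
  have hpow : ‖e‖ ^ j ≤ 3 ^ 3 := by
    have hj3 : (j : ℝ) ≤ 3 := by exact_mod_cast hj
    calc ‖e‖ ^ j ≤ 3 ^ j := by gcongr; exact he.trans hj3
      _ ≤ 3 ^ 3 := by gcongr; norm_num
  have := rieszBound_nonneg
  have := greenMass_pos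
  calc |iteratedFDeriv ℝ j v x fun _ => e|
      ≤ 336 * ‖e‖ ^ j * M * rieszBound / greenMass := hdiag
    _ ≤ 336 * 3 ^ 3 * M * rieszBound / greenMass := by gcongr
    _ = potentialBound * M := by rw [potentialBound]; ring

end PotentialBounds

section ConformalField

open RealInnerProductSpace

section Divergence

variable {E : Type*} [NormedAddCommGroup E] [InnerProductSpace ℝ E] [FiniteDimensional ℝ E]
  [MeasurableSpace E] [BorelSpace E] {μ : Measure E} [μ.IsAddHaarMeasure] {s : Set E} {f : E → ℝ}
  {Y : E → E} {ι : Type*} [Fintype ι]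

lemma integral_fderiv_apply_add_mul_divergence_eq_zero (hs : Convex ℝ s) (hc : IsCompact s)
    (hu : UniqueDiffOn ℝ s) (hf : ContDiffOn ℝ 1 f s) (h0 : ∀ x ∈ frontier s, f x = 0)
    (hY : ContDiff ℝ 1 Y) (b : OrthonormalBasis ι ℝ E) :
    ∫ x in interior s, (fderiv ℝ f x (Y x) + f x * ∑ i, ⟪b i, fderiv ℝ Y x (b i)⟫) ∂μ = 0 := by
  have hfY : ∀ i, ContDiffOn ℝ 1 (fun x => f x * ⟪b i, Y x⟫) s := fun i =>
    hf.mul (contDiff_const.inner ℝ hY).contDiffOn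
  have hint : ∀ i, IntegrableOn (fun x => fderiv ℝ (fun y => f y * ⟪b i, Y y⟫) x (b i))
      (interior s) μ := fun i => by
    have hcont := ((hfY i).continuousOn_fderivWithin hu le_rfl).clm_apply
      (continuousOn_const (c := b i))
    exact ((hcont.integrableOn_compact hc).mono_set interior_subset).congr_fun
      (fun x hx => by simp only [fderivWithin_of_mem_nhds (mem_interior_iff_mem_nhds.1 hx)])
      isOpen_interior.measurableSet
  have hsum : ∀ x ∈ interior s, ∑ i, fderiv ℝ (fun y => f y * ⟪b i, Y y⟫) x (b i) =
      fderiv ℝ f x (Y x) + f x * ∑ i, ⟪b i, fderiv ℝ Y x (b i)⟫ := fun x hx => by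
    have hfx := (hf.contDiffAt (mem_interior_iff_mem_nhds.1 hx)).differentiableAt one_ne_zero
    have hYx := hY.contDiffAt.differentiableAt (x := x) one_ne_zero
    have hterm : ∀ i, fderiv ℝ (fun y => f y * ⟪b i, Y y⟫) x (b i) =
        ⟪b i, Y x⟫ * fderiv ℝ f x (b i) + f x * ⟪b i, fderiv ℝ Y x (b i)⟫ := fun i => by
      have := hfx.hasFDerivAt.mul ((innerSL ℝ (b i)).hasFDerivAt.comp x hYx.hasFDerivAt)
      refine (congrArg (· (b i)) this.fderiv).trans ?_
      simp only [_root_.add_apply, _root_.smul_apply, smul_eq_mul, ContinuousLinearMap.comp_apply,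
        innerSL_apply_apply, Function.comp_apply]
      ring
    simp only [hterm, Finset.sum_add_distrib, Finset.mul_sum]
    congr 1
    conv_rhs => rw [← b.sum_repr' (Y x), map_sum]
    simp only [map_smul, smul_eq_mul]
  rw [← setIntegral_congr_fun isOpen_interior.measurableSet hsum,
    integral_finsetSum _ fun i _ => hint i]
  exact Finset.sum_eq_zero fun i _ =>
    integral_fderiv_eq_zero_of_eq_zero_on_frontier hs hc (hfY i) (fun x hx => by simp [h0 x hx]) _

end Divergence

section InnerProductSpace

variable {E : Type*} [NormedAddCommGroup E] [InnerProductSpace ℝ E]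

/-- The conformal vector field with parameter `a`; its flow consists of Möbius maps preserving the
unit ball. -/
def conformalField (a y : E) : E := (1 + ‖y‖ ^ 2) • a - (2 * ⟪a, y⟫) • y

lemma contDiff_conformalField (a : E) {n : WithTop ℕ∞} : ContDiff ℝ n (conformalField a) :=
  ((contDiff_const.add (contDiff_norm_sq ℝ)).smul contDiff_const).sub
    ((contDiff_const.mul (contDiff_const.inner ℝ contDiff_id)).smul contDiff_id)

lemma fderiv_conformalField_apply (a y e : E) : fderiv ℝ (conformalField a) y e =
    (2 * ⟪y, e⟫) • a - (2 * ⟪a, e⟫) • y - (2 * ⟪a, y⟫) • e := by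
  have h := (((hasStrictFDerivAt_norm_sq y).hasFDerivAt.const_add 1).smul_const a).sub
    (((innerSL ℝ a).hasFDerivAt.const_mul 2).smul (hasFDerivAt_id y))
  refine (congrArg (· e) h.fderiv).trans ?_
  simp only [_root_.sub_apply, _root_.add_apply, _root_.smul_apply,
    ContinuousLinearMap.smulRight_apply, innerSL_apply_apply, ContinuousLinearMap.id_apply,
    nsmul_eq_mul, smul_eq_mul, Nat.cast_ofNat, id_eq]
  module

lemma sum_inner_fderiv_conformalField {ι : Type*} [Fintype ι] (b : OrthonormalBasis ι ℝ E)
    (a y : E) : ∑ i, ⟪b i, fderiv ℝ (conformalField a) y (b i)⟫ =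
      -(2 * Fintype.card ι) * ⟪a, y⟫ := by
  have hterm : ∀ i, ⟪b i, fderiv ℝ (conformalField a) y (b i)⟫ = -2 * ⟪a, y⟫ := fun i => by
    rw [fderiv_conformalField_apply, inner_sub_right, inner_sub_right, inner_smul_right,
      inner_smul_right, inner_smul_right, real_inner_self_eq_norm_sq, b.norm_eq_one,
      real_inner_comm a (b i), real_inner_comm y (b i)]
    ring
  rw [Finset.sum_congr rfl fun i _ => hterm i, Finset.sum_const, Finset.card_univ, nsmul_eq_mul]
  ring

lemma real_inner_conformalField_self (a y : E) :
    ⟪y, conformalField a y⟫ = ⟪a, y⟫ * (1 - ‖y‖ ^ 2) := by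
  rw [conformalField, inner_sub_right, inner_smul_right, inner_smul_right,
    real_inner_self_eq_norm_sq, real_inner_comm a y]
  ring

lemma real_inner_conformalField_left (a x y : E) :
    ⟪y, conformalField a x⟫ = (1 + ‖x‖ ^ 2) * ⟪a, y⟫ - 2 * ⟪a, x⟫ * ⟪x, y⟫ := by
  rw [conformalField, inner_sub_right, inner_smul_right, inner_smul_right, real_inner_comm a y,
    real_inner_comm x y]

end InnerProductSpace

section ConformalInvariance

variable {κ : ℝ} {x y : ℝ⁴}

/-- The failure, relative to `κ - 1`, of `regDistSq κ` (for `t = 1`) and `regReflDistSq κ` (for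
`t = ‖y‖ ^ 2`) to be multiplied by conformal factors under the flow of `conformalField a`. -/
def conformalDefect (κ : ℝ) (a x y : ℝ⁴) (t : ℝ) : ℝ :=
  2 * ⟪a, x + y⟫ * (1 - ‖x‖ ^ 2 / κ) - 2 / κ * ⟪a, x⟫ * (t - ‖x‖ ^ 2)

lemma conformal_regDistSq (hκ : 1 ≤ κ) (a x y : ℝ⁴) :
    2 * ⟪κ⁻¹ • x - y, conformalField a x⟫ + 2 * ⟪y - x, conformalField a y⟫ =
      (κ - 1) * conformalDefect κ a x y 1 - 2 * ⟪a, x + y⟫ * regDistSq κ x y := by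
  have hκ0 : κ ≠ 0 := by positivity
  simp only [inner_sub_left, real_inner_smul_left]
  simp only [real_inner_conformalField_self, real_inner_conformalField_left, conformalDefect,
    regDistSq, quad, inner_add_right, real_inner_comm x y]
  field_simp
  ring

lemma conformal_regReflDistSq (hκ : 1 ≤ κ) (a x y : ℝ⁴) :
    2 * ⟪(‖y‖ ^ 2 / κ) • x - y, conformalField a x⟫
        + 2 * ⟪(‖x‖ ^ 2 / κ) • y - x, conformalField a y⟫ =
      (κ - 1) * conformalDefect κ a x y (‖y‖ ^ 2) - 2 * ⟪a, x + y⟫ * regReflDistSq κ x y := by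
  have hκ0 : κ ≠ 0 := by positivity
  simp only [inner_sub_left, real_inner_smul_left]
  simp only [real_inner_conformalField_self, real_inner_conformalField_left, conformalDefect,
    regReflDistSq, quad, inner_add_right, real_inner_comm x y]
  field_simp
  ring

lemma abs_conformalDefect_le (hκ : 1 ≤ κ) (a : ℝ⁴) (hx : x ∈ 𝔹) (hy : y ∈ 𝔻) {t : ℝ}
    (ht : t ∈ Set.Icc 0 1) : |conformalDefect κ a x y t| ≤ 6 * ‖a‖ := by
  have hc := norm_sq_div_lt_one hκ hx
  have hx1 := (mem_ball_zero_iff.1 hx).le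
  have hy1 := mem_closedBall_zero_iff.1 hy
  have hxx : ‖x‖ ^ 2 ≤ 1 := pow_le_one₀ (norm_nonneg x) hx1
  have hsum : |⟪a, x + y⟫| ≤ ‖a‖ * 2 := (abs_real_inner_le_norm a _).trans <| by
    gcongr; linarith [norm_add_le x y]
  have hax : |⟪a, x⟫| ≤ ‖a‖ * 1 := (abs_real_inner_le_norm a x).trans (by gcongr)
  have hc1 : |1 - ‖x‖ ^ 2 / κ| ≤ 1 := abs_le.2 ⟨by linarith, by
    linarith [(by positivity : 0 ≤ ‖x‖ ^ 2 / κ)]⟩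
  have ht1 : |t - ‖x‖ ^ 2| ≤ 1 := abs_le.2 ⟨by linarith [ht.1], by linarith [ht.2, sq_nonneg ‖x‖]⟩
  have hκ2 : |2 / κ| ≤ 2 := by
    rw [abs_of_nonneg (by positivity)]; exact div_le_self zero_le_two hκ
  calc |conformalDefect κ a x y t|
      ≤ 2 * |⟪a, x + y⟫| * |1 - ‖x‖ ^ 2 / κ| + |2 / κ| * |⟪a, x⟫| * |t - ‖x‖ ^ 2| := by
        refine (abs_sub _ _).trans_eq ?_
        simp only [abs_mul, abs_two]
    _ ≤ 2 * (‖a‖ * 2) * 1 + 2 * (‖a‖ * 1) * 1 := by gcongr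
    _ = 6 * ‖a‖ := by ring

/-- The derivative of `regGreen κ` along the flow of `conformalField a` acting on both points. -/
def conformalGreenDeriv (κ : ℝ) (a x y : ℝ⁴) : ℝ :=
  regGreenJet κ (conformalField a x) x y 1 + fderiv ℝ (regGreen κ x) y (conformalField a y)

lemma conformalGreenDeriv_eq (hκ : 1 < κ) (a : ℝ⁴) (hx : x ∈ 𝔹) (hy : y ∈ 𝔻) :
    conformalGreenDeriv κ a x y = (regDistSq κ x y / regReflDistSq κ x y - 1) * ((κ - 1)
      * (conformalDefect κ a x y 1 / regDistSq κ x y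
        - conformalDefect κ a x y (‖y‖ ^ 2) / regReflDistSq κ x y)) := by
  have hN := (regDistSq_pos hκ hx y).ne'
  have hL := (regReflDistSq_pos hκ hx hy).ne'
  have hdN := conformal_regDistSq hκ.le a x y
  have hdL := conformal_regReflDistSq hκ.le a x y
  rw [conformalGreenDeriv, (hasFDerivAt_regGreen hκ hx hy).fderiv, regGreenJet, logRatioJet,
    eq_sub_of_add_eq hdN, eq_sub_of_add_eq hdL]
  simp only [_root_.sub_apply, _root_.smul_apply, innerSL_apply_apply, smul_eq_mul]
  field_simp
  ring

lemma abs_conformalGreenDeriv_le (hκ : 1 < κ) (a : ℝ⁴) (hx : x ∈ 𝔹) (hy : y ∈ 𝔻) (hyx : y ≠ x) :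
    |conformalGreenDeriv κ a x y| ≤ 24 * ‖a‖ * (κ - 1) * (‖y - x‖ ^ 3)⁻¹ := by
  have hN := regDistSq_pos hκ hx y
  have hL := regReflDistSq_pos hκ hx hy
  have hNL := regDistSq_le_regReflDistSq hκ.le hx hy
  have hκ0 := sub_pos.2 hκ
  have hr : 0 < ‖y - x‖ := norm_pos_iff.2 (sub_ne_zero.2 hyx)
  have hratio : |regDistSq κ x y / regReflDistSq κ x y - 1| ≤ 1 := abs_le.2
    ⟨by linarith [div_nonneg hN.le hL.le], by linarith [(div_le_one hL).2 hNL]⟩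
  have hq := abs_conformalDefect_le hκ.le a hx hy (t := 1) (by simp)
  have hq' := abs_conformalDefect_le hκ.le a hx hy (t := ‖y‖ ^ 2)
    ⟨sq_nonneg _, pow_le_one₀ (norm_nonneg y) (mem_closedBall_zero_iff.1 hy)⟩
  have hdiff : |conformalDefect κ a x y 1 / regDistSq κ x y
      - conformalDefect κ a x y (‖y‖ ^ 2) / regReflDistSq κ x y|
      ≤ 6 * ‖a‖ / regDistSq κ x y + 6 * ‖a‖ / regDistSq κ x y := by
    refine (abs_sub _ _).trans ?_
    rw [abs_div, abs_div, abs_of_pos hN, abs_of_pos hL]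
    gcongr
  calc |conformalGreenDeriv κ a x y|
      ≤ 1 * ((κ - 1) * (6 * ‖a‖ / regDistSq κ x y + 6 * ‖a‖ / regDistSq κ x y)) := by
        rw [conformalGreenDeriv_eq hκ a hx hy, abs_mul, abs_mul, abs_of_pos hκ0]
        gcongr
    _ = 12 * ‖a‖ * (κ - 1) * (regDistSq κ x y)⁻¹ := by ring
    _ ≤ 12 * ‖a‖ * (κ - 1) * (‖y - x‖ ^ 2)⁻¹ := by
        gcongr
        exact sq_norm_sub_le_regDistSq hκ.le hx y
    _ ≤ 12 * ‖a‖ * (κ - 1) * (2 * (‖y - x‖ ^ 3)⁻¹) := by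
        gcongr
        rw [← div_eq_mul_inv, ← one_div, div_le_div_iff₀ (by positivity) (by positivity)]
        nlinarith [norm_sub_le_two hx hy, sq_nonneg ‖y - x‖]
    _ = 24 * ‖a‖ * (κ - 1) * (‖y - x‖ ^ 3)⁻¹ := by ring

end ConformalInvariance

end ConformalField

section ConformalPotential

open RealInnerProductSpace

variable {κ : ℝ} {x : ℝ⁴} {h v : ℝ⁴ → ℝ}

/-- The bilaplacian of `fun x => fderiv ℝ v x (conformalField a x)` when that of `v` is `h`. -/
def conformalSource (a : ℝ⁴) (h : ℝ⁴ → ℝ) (y : ℝ⁴) : ℝ :=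
  fderivWithin ℝ h 𝔻 y (conformalField a y) - 8 * ⟪a, y⟫ * h y

lemma continuousOn_conformalSource (a : ℝ⁴) (hh : ContDiffOn ℝ 1 h 𝔻) :
    ContinuousOn (conformalSource a h) 𝔻 :=
  ((hh.continuousOn_fderivWithin uniqueDiffOn_closedUnitBall le_rfl).clm_apply
    (contDiff_conformalField a (n := 0)).continuous.continuousOn).sub
      (ContinuousOn.mul (by fun_prop) hh.continuousOn)

lemma continuousOn_fderiv_regGreen_conformalField_mul (hκ : 1 < κ) (hx : x ∈ 𝔹) (a : ℝ⁴)
    (hh : ContinuousOn h 𝔻) :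
    ContinuousOn (fun y => fderiv ℝ (regGreen κ x) y (conformalField a y) * h y) 𝔻 := by
  have hG : ContinuousOn (fderiv ℝ (regGreen κ x)) 𝔻 := fun y hy =>
    ((contDiffAt_regGreen hκ hx hy (n := 1)).fderiv_right (m := 0) (by simp)).continuousAt
      |>.continuousWithinAt
  exact (hG.clm_apply (contDiff_conformalField a (n := 0)).continuous.continuousOn).mul hh

lemma integral_regGreen_mul_conformalSource (hκ : 1 < κ) (hx : x ∈ 𝔹) (a : ℝ⁴)
    (hh : ContDiffOn ℝ 1 h 𝔻) :
    ∫ y in 𝔹, regGreen κ x y * conformalSource a h y =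
      -∫ y in 𝔹, fderiv ℝ (regGreen κ x) y (conformalField a y) * h y := by
  have hG : ContDiffOn ℝ 1 (regGreen κ x) 𝔻 := fun y hy =>
    (contDiffAt_regGreen hκ hx hy).contDiffWithinAt
  have hdiv := integral_fderiv_apply_add_mul_divergence_eq_zero (μ := volume)
    (convex_closedBall (0 : ℝ⁴) 1) (isCompact_closedBall 0 1) uniqueDiffOn_closedUnitBall
    (hG.mul hh) (fun y hy => by
      rw [frontier_closedBall 0 one_ne_zero, mem_sphere_zero_iff_norm] at hy
      simp [(regGreen_dirichlet hκ hx hy).1])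
    (contDiff_conformalField a) (EuclideanSpace.basisFun (Fin 4) ℝ)
  rw [interior_closedBall 0 one_ne_zero] at hdiv
  have hint : IntegrableOn (fun y => regGreen κ x y * conformalSource a h y) 𝔹 :=
    integrableOn_regGreenJet_mul hκ hx (continuousOn_conformalSource a hh) 0 0
  rw [eq_neg_iff_add_eq_zero, ← integral_add hint (integrableOn_unitBall_of_continuousOn
      (continuousOn_fderiv_regGreen_conformalField_mul hκ hx a hh.continuousOn)), ← hdiv]
  refine setIntegral_congr_fun measurableSet_ball fun y hy => ?_
  have hyD := ball_subset_closedBall hy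
  have hnhds := closedBall_mem_nhds_of_mem hy
  have hGy := (contDiffAt_regGreen hκ hx hyD (n := 1)).differentiableAt one_ne_zero
  have hhy := (hh.contDiffAt hnhds).differentiableAt one_ne_zero
  rw [sum_inner_fderiv_conformalField, Fintype.card_fin, conformalSource,
    fderivWithin_of_mem_nhds hnhds, fderiv_fun_mul hGy hhy]
  simp only [_root_.add_apply, _root_.smul_apply, smul_eq_mul]
  push_cast
  ring

lemma exists_forall_abs_le_of_continuousOn (hh : ContinuousOn h 𝔻) :
    ∃ M, ∀ y ∈ 𝔹, |h y| ≤ M := by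
  obtain ⟨M, hM⟩ := (isCompact_closedBall 0 1).exists_bound_of_continuousOn hh
  exact ⟨M, fun y hy => hM y (ball_subset_closedBall hy)⟩

lemma tendsto_integral_conformalGreenDeriv_mul (hx : x ∈ 𝔹) (a : ℝ⁴) (hh : ContinuousOn h 𝔻) :
    Tendsto (fun n => ∫ y in 𝔹, conformalGreenDeriv (regParam n) a x y * h y) atTop (𝓝 0) := by
  obtain ⟨M, hM⟩ := exists_forall_abs_le_of_continuousOn hh
  refine squeeze_zero_norm (fun n => abs_integral_mul_le_rieszBound hx
    (fun y hy hyx => abs_conformalGreenDeriv_le (one_lt_regParam n) a hx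
      (ball_subset_closedBall hy) hyx)
    (mul_nonneg (by positivity) (sub_pos.2 (one_lt_regParam n)).le) hM) ?_
  simpa using ((tendsto_regParam_sub_one.const_mul (24 * ‖a‖)).mul_const M).mul_const rieszBound

lemma IsGreenPotential.tendsto_integral_regGreenJet_one_mul (hv : IsGreenPotential h v)
    (hh : ContinuousOn h 𝔻) (hx : x ∈ 𝔹) (hvx : DifferentiableAt ℝ v x) (e : ℝ⁴) :
    Tendsto (fun n => ∫ y in 𝔹, regGreenJet (regParam n) e x y 1 * h y) atTop
      (𝓝 (greenMass * fderiv ℝ v x e)) := by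
  obtain ⟨b, hb, hline⟩ := exists_pos_forall_Icc_add_smul_mem isOpen_ball hx e
  obtain ⟨M, hM⟩ := exists_forall_abs_le_of_continuousOn hh
  have hderiv : HasDerivAt (fun t : ℝ => greenMass * v (x + t • e))
      (greenMass * fderiv ℝ v x e) 0 :=
    (HasFDerivAt.comp_hasDerivAt (f := fun t : ℝ => x + t • e) 0
      (by simpa using hvx.hasFDerivAt) (hasDerivAt_line x e 0)).const_mul greenMass
  have := IsDerivChain.tendsto_of_hasDerivAt hb
    (F := fun n i t => ∫ y in 𝔹, regGreenJet (regParam n) e (x + t • e) y i * h y)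
    (fun n i hi t ht => hasDerivAt_integral_regGreenJet_mul (one_lt_regParam n) hh (hline t ht)
      (hi.trans (by norm_num)))
    (fun n t ht => abs_integral_regGreenJet_mul_le (one_lt_regParam n) (regParam_le_two n)
      (hline t ht) hM e (by norm_num)) hderiv
    fun t ht => by simpa only [regGreenJet_zero] using hv _ (hline t ht)
  simpa using this

theorem IsGreenPotential.conformal (hv : IsGreenPotential h v) (hh : ContDiffOn ℝ 1 h 𝔻)
    (hvd : DifferentiableOn ℝ v 𝔹) (a : ℝ⁴) :
    IsGreenPotential (conformalSource a h) fun x => fderiv ℝ v x (conformalField a x) :=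
  fun x hx => by
  have hvx := hvd.differentiableAt (isOpen_ball.mem_nhds hx)
  have hlim := (hv.tendsto_integral_regGreenJet_one_mul hh.continuousOn hx hvx
    (conformalField a x)).sub (tendsto_integral_conformalGreenDeriv_mul hx a hh.continuousOn)
  rw [sub_zero] at hlim
  refine hlim.congr fun n => ?_
  have hκ := one_lt_regParam n
  have hJ := integrableOn_regGreenJet_mul hκ hx hh.continuousOn (conformalField a x) 1
  have hG := integrableOn_unitBall_of_continuousOn
    (continuousOn_fderiv_regGreen_conformalField_mul hκ hx a hh.continuousOn)
  simp only [integral_regGreen_mul_conformalSource hκ hx a hh, conformalGreenDeriv, add_mul]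
  rw [integral_add hJ hG]
  ring

end ConformalPotential

section Leibniz

variable {E F G : Type*} [NormedAddCommGroup E] [NormedSpace ℝ E] [NormedAddCommGroup F]
  [NormedSpace ℝ F] [NormedAddCommGroup G] [NormedSpace ℝ G] {n : ℕ} {x : E}

lemma iteratedFDeriv_sub_const {g : E → F} (hn : n ≠ 0) (hg : ContDiffAt ℝ n g x) (c : F) :
    iteratedFDeriv ℝ n (fun y => g y - c) x = iteratedFDeriv ℝ n g x := by
  rw [fun_iteratedFDeriv_sub_apply hg contDiffAt_const, iteratedFDeriv_const_of_ne hn,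
    Pi.zero_apply, sub_zero]

lemma iteratedFDeriv_clm_apply_const_apply_of_isOpen {s : Set E} (hs : IsOpen s)
    {f : E → F →L[ℝ] G} (hf : ContDiffOn ℝ n f s) (hx : x ∈ s) (c : F) (m : Fin n → E) :
    iteratedFDeriv ℝ n (fun y => f y c) x m = iteratedFDeriv ℝ n f x m c := by
  rw [← iteratedFDerivWithin_of_isOpen n hs hx, ← iteratedFDerivWithin_of_isOpen n hs hx,
    iteratedFDerivWithin_clm_apply_const_apply hs.uniqueDiffOn hf le_rfl hx]

lemma norm_iteratedFDeriv_clm_apply_sub_le {s : Set E} (hs : IsOpen s) {f : E → F →L[ℝ] G}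
    {g : E → F} (hf : ContDiffOn ℝ n f s) (hg : ContDiffOn ℝ n g s) (hx : x ∈ s) (m : Fin n → E) :
    ‖iteratedFDeriv ℝ n (fun y => f y (g y)) x m - iteratedFDeriv ℝ n f x m (g x)‖ ≤
      (∑ i ∈ Finset.range n, n.choose i * ‖iteratedFDeriv ℝ i f x‖
        * ‖iteratedFDeriv ℝ (n - i) g x‖) * ∏ i, ‖m i‖ := by
  have hfx := hf.contDiffAt (hs.mem_nhds hx)
  have hgx := hg.contDiffAt (hs.mem_nhds hx)
  have hsub : iteratedFDeriv ℝ n (fun y => f y (g y)) x m - iteratedFDeriv ℝ n f x m (g x) =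
      iteratedFDeriv ℝ n (fun y => f y (g y - g x)) x m := by
    simp only [map_sub]
    rw [fun_iteratedFDeriv_sub_apply (hfx.clm_apply hgx) (hfx.clm_apply contDiffAt_const),
      ← iteratedFDeriv_clm_apply_const_apply_of_isOpen hs hf hx]
    rfl
  rw [hsub]
  refine (ContinuousMultilinearMap.le_opNorm _ m).trans ?_
  gcongr
  have hleib := norm_iteratedFDerivWithin_clm_apply hf (hg.sub (contDiffOn_const (c := g x)))
    hs.uniqueDiffOn hx le_rfl
  simp only [iteratedFDerivWithin_of_isOpen _ hs hx] at hleib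
  refine hleib.trans_eq ?_
  rw [Finset.sum_range_succ, Nat.sub_self, norm_iteratedFDeriv_zero, sub_self, norm_zero, mul_zero,
    add_zero]
  refine Finset.sum_congr rfl fun i hi => ?_
  rw [iteratedFDeriv_sub_const (Nat.sub_ne_zero_of_lt (Finset.mem_range.1 hi))
    (hgx.of_le (by exact_mod_cast n.sub_le i))]

end Leibniz

section Multilinear

open RealInnerProductSpace

variable {E : Type*} [NormedAddCommGroup E] [InnerProductSpace ℝ E] {n : ℕ} {ω : E}

lemma norm_sub_inner_smul_le (hω : ‖ω‖ = 1) (v : E) : ‖v - ⟪v, ω⟫ • ω‖ ≤ ‖v‖ := by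
  refine le_of_sq_le_sq ?_ (norm_nonneg v)
  rw [norm_sub_sq_real, norm_smul, hω, inner_smul_right, Real.norm_eq_abs, mul_one, sq_abs]
  linarith [sq_nonneg ⟪v, ω⟫]

lemma inner_sub_inner_smul_self (hω : ‖ω‖ = 1) (v : E) : ⟪v - ⟪v, ω⟫ • ω, ω⟫ = 0 := by
  rw [inner_sub_left, real_inner_smul_left, real_inner_self_eq_norm_sq, hω]
  ring

lemma norm_inner_smul_le (hω : ‖ω‖ = 1) (v : E) : ‖⟪v, ω⟫ • ω‖ ≤ ‖v‖ := by
  rw [norm_smul, hω, mul_one]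
  exact (norm_inner_le_norm v ω).trans_eq (by rw [hω, mul_one])

lemma abs_apply_sub_prod_inner_mul_le (T : ContinuousMultilinearMap ℝ (fun _ : Fin n => E) ℝ)
    {K : ℝ} (hω : ‖ω‖ = 1)
    (hK : ∀ v : Fin n → E, (∀ i, ‖v i‖ ≤ 1) → (∃ i, ⟪v i, ω⟫ = 0) → |T v| ≤ K) {v : Fin n → E}
    (hv : ∀ i, ‖v i‖ ≤ 1) :
    |T v - (∏ i, ⟪v i, ω⟫) * T fun _ => ω| ≤ (2 ^ n - 1) * K := by
  set p : Fin n → E := fun i => ⟪v i, ω⟫ • ω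
  set q : Fin n → E := fun i => v i - ⟪v i, ω⟫ • ω
  have hsplit : T v - (∏ i, ⟪v i, ω⟫) * (T fun _ => ω) =
      ∑ s ∈ (Finset.univ : Finset (Finset (Fin n))).erase Finset.univ, T (s.piecewise p q) := by
    have hpq : p + q = v := funext fun i => add_sub_cancel _ _
    have hp : T p = (∏ i, ⟪v i, ω⟫) * T fun _ => ω := T.map_smul_univ _ _
    rw [Finset.sum_erase_eq_sub (Finset.mem_univ _), ← T.map_add_univ, hpq, Finset.piecewise_univ,
      hp]
  have hterm : ∀ s ∈ (Finset.univ : Finset (Finset (Fin n))).erase Finset.univ,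
      |T (s.piecewise p q)| ≤ K := fun s hs => by
    obtain ⟨i, hi⟩ : ∃ i, i ∉ s := by
      simpa [Finset.eq_univ_iff_forall] using Finset.ne_of_mem_erase hs
    refine hK _ (fun j => ?_) ⟨i, ?_⟩
    · exact s.piecewise_cases p q (fun z => ‖z‖ ≤ 1) ((norm_inner_smul_le hω _).trans (hv j))
        ((norm_sub_inner_smul_le hω _).trans (hv j))
    · rw [Finset.piecewise_eq_of_notMem s p q hi]
      exact inner_sub_inner_smul_self hω (v i)
  rw [hsplit]
  refine (Finset.abs_sum_le_sum_abs _ _).trans ((Finset.sum_le_card_nsmul _ _ _ hterm).trans_eq ?_)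
  rw [Finset.card_erase_of_mem (Finset.mem_univ _), Finset.card_univ, Fintype.card_finset,
    Fintype.card_fin, nsmul_eq_mul, Nat.cast_sub Nat.one_le_two_pow]
  push_cast
  ring

end Multilinear

section Bilaplacian

open InnerProductSpace RealInnerProductSpace Laplacian

variable {ι E : Type*} [Fintype ι] [NormedAddCommGroup E] [InnerProductSpace ℝ E]

/-- `∑ᵢⱼ T(bᵢ, bᵢ, bⱼ, bⱼ)`, which gives the bilaplacian when `T` is a fourth derivative. -/
def bitrace (b : OrthonormalBasis ι ℝ E) (T : ContinuousMultilinearMap ℝ (fun _ : Fin 4 => E) ℝ) :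
    ℝ := ∑ i, ∑ j, T ![b i, b i, b j, b j]

section FiniteDimensional

variable [FiniteDimensional ℝ E] (b : OrthonormalBasis ι ℝ E) {f : E → ℝ} {x : E}

lemma fderiv_laplacian_apply (hf : ContDiffAt ℝ 3 f x) (a : E) :
    fderiv ℝ (Δ f) x a = ∑ j, iteratedFDeriv ℝ 3 f x ![a, b j, b j] := by
  have hf3 : ContDiffAt ℝ (2 + 1 : ℕ) f x := hf.of_le (by norm_num)
  rw [laplacian_eq_iteratedFDeriv_orthonormalBasis f b, fderiv_fun_sum fun j _ =>
    (hasFDerivAt_iteratedFDeriv_apply hf3 ![b j, b j]).differentiableAt, sum_apply]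
  exact Finset.sum_congr rfl fun j _ => fderiv_iteratedFDeriv_apply hf3 _ a

lemma contDiffAt_laplacian {n : ℕ} (hf : ContDiffAt ℝ (n + 2 : ℕ) f x) :
    ContDiffAt ℝ n (Δ f) x := by
  rw [laplacian_eq_iteratedFDeriv_stdOrthonormalBasis]
  exact ContDiffAt.sum fun j _ => (ContinuousMultilinearMap.apply ℝ (fun _ : Fin 2 => E) ℝ
    _).contDiff.contDiffAt.comp x (hf.iteratedFDeriv_right (by exact_mod_cast le_rfl))

lemma laplacian_laplacian_eq_bitrace (hf : ContDiffAt ℝ 4 f x) :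
    Δ (Δ f) x = bitrace b (iteratedFDeriv ℝ 4 f x) := by
  have hf4 : ContDiffAt ℝ (3 + 1 : ℕ) f x := hf.of_le (by norm_num)
  have hdiff : DifferentiableAt ℝ (fderiv ℝ (Δ f)) x :=
    ((contDiffAt_laplacian (n := 2) hf).fderiv_right (m := 1) (by norm_num)).differentiableAt
      one_ne_zero
  have hfst : ∀ a, (fun y => fderiv ℝ (Δ f) y a) =ᶠ[𝓝 x]
      fun y => ∑ j, iteratedFDeriv ℝ 3 f y ![a, b j, b j] := fun a =>
    (hf.eventually (by simp)).mono fun y hy => fderiv_laplacian_apply b (hy.of_le (by norm_num)) a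
  have hsnd : ∀ a, fderiv ℝ (fderiv ℝ (Δ f)) x a a =
      fderiv ℝ (fun y => fderiv ℝ (Δ f) y a) x a := fun a => by
    rw [fderiv_clm_apply hdiff (differentiableAt_const _)]
    simp
  rw [laplacian_eq_sum_fderiv_fderiv b, bitrace]
  refine Finset.sum_congr rfl fun i _ => ?_
  rw [hsnd, (hfst (b i)).fderiv_eq, fderiv_fun_sum fun j _ =>
    (hasFDerivAt_iteratedFDeriv_apply hf4 _).differentiableAt, sum_apply]
  exact Finset.sum_congr rfl fun j _ => fderiv_iteratedFDeriv_apply hf4 _ _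

end FiniteDimensional

lemma sum_sum_prod_inner_eq_one (b : OrthonormalBasis ι ℝ E) {ω : E} (hω : ‖ω‖ = 1) :
    ∑ i, ∑ j, ∏ k, ⟪![b i, b i, b j, b j] k, ω⟫ = 1 := by
  have hω2 : ∑ i, ⟪b i, ω⟫ ^ 2 = 1 := by rw [b.sum_sq_inner_right, hω, one_pow]
  calc ∑ i, ∑ j, ∏ k, ⟪![b i, b i, b j, b j] k, ω⟫
      = (∑ i, ⟪b i, ω⟫ ^ 2) * ∑ j, ⟪b j, ω⟫ ^ 2 := by
        rw [Finset.sum_mul_sum]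
        refine Finset.sum_congr rfl fun i _ => Finset.sum_congr rfl fun j _ => ?_
        rw [Fin.prod_univ_four]
        change ⟪b i, ω⟫ * ⟪b i, ω⟫ * ⟪b j, ω⟫ * ⟪b j, ω⟫ = _
        ring
    _ = 1 := by rw [hω2, one_mul]

variable {T : ContinuousMultilinearMap ℝ (fun _ : Fin 4 => E) ℝ} {ω : E} {K M : ℝ}

lemma abs_bitrace_sub_apply_diag_le (b : OrthonormalBasis ι ℝ E) (hω : ‖ω‖ = 1)
    (hK : ∀ v : Fin 4 → E, (∀ i, ‖v i‖ ≤ 1) → (∃ i, ⟪v i, ω⟫ = 0) → |T v| ≤ K) :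
    |bitrace b T - T fun _ => ω| ≤ 15 * Fintype.card ι ^ 2 * K := by
  have hterm : ∀ i j, |T ![b i, b i, b j, b j]
      - (∏ k, ⟪![b i, b i, b j, b j] k, ω⟫) * T fun _ => ω| ≤ 15 * K := fun i j =>
    (abs_apply_sub_prod_inner_mul_le T hω hK fun k => by fin_cases k <;> simp).trans_eq
      (by norm_num)
  calc |bitrace b T - T fun _ => ω|
      = |∑ i, ∑ j, (T ![b i, b i, b j, b j]
          - (∏ k, ⟪![b i, b i, b j, b j] k, ω⟫) * T fun _ => ω)| := by
        simp only [Finset.sum_sub_distrib, ← Finset.sum_mul, sum_sum_prod_inner_eq_one b hω,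
          one_mul, bitrace]
    _ ≤ ∑ _i : ι, ∑ _j : ι, 15 * K :=
        (Finset.abs_sum_le_sum_abs _ _).trans <| Finset.sum_le_sum fun i _ =>
          (Finset.abs_sum_le_sum_abs _ _).trans <| Finset.sum_le_sum fun j _ => hterm i j
    _ = 15 * Fintype.card ι ^ 2 * K := by
        simp only [Finset.sum_const, Finset.card_univ, nsmul_eq_mul]
        ring

lemma abs_apply_le_of_abs_bitrace_le (b : OrthonormalBasis ι ℝ E) (hω : ‖ω‖ = 1)
    (hK : ∀ v : Fin 4 → E, (∀ i, ‖v i‖ ≤ 1) → (∃ i, ⟪v i, ω⟫ = 0) → |T v| ≤ K)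
    (hM : |bitrace b T| ≤ M) {v : Fin 4 → E} (hv : ∀ i, ‖v i‖ ≤ 1) :
    |T v| ≤ M + 15 * (Fintype.card ι ^ 2 + 1) * K := by
  have hdiag : |T fun _ => ω| ≤ M + 15 * Fintype.card ι ^ 2 * K := by
    have := abs_bitrace_sub_apply_diag_le b hω hK
    rw [abs_sub_comm] at this
    linarith [abs_sub_abs_le_abs_sub (T fun _ => ω) (bitrace b T)]
  have hprod : |∏ i, ⟪v i, ω⟫| ≤ 1 := by
    rw [Finset.abs_prod]
    refine Finset.prod_le_one (fun _ _ => abs_nonneg _) fun i _ => ?_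
    exact (abs_real_inner_le_norm _ _).trans (by rw [hω, mul_one]; exact hv i)
  have hdev := abs_apply_sub_prod_inner_mul_le T hω hK hv
  calc |T v| ≤ |T v - (∏ i, ⟪v i, ω⟫) * T fun _ => ω| + |(∏ i, ⟪v i, ω⟫) * T fun _ => ω| := by
        linarith [abs_sub_abs_le_abs_sub (T v) ((∏ i, ⟪v i, ω⟫) * T fun _ => ω)]
    _ ≤ (2 ^ 4 - 1) * K + 1 * (M + 15 * Fintype.card ι ^ 2 * K) := by
        rw [abs_mul]
        exact add_le_add hdev (mul_le_mul hprod hdiag (abs_nonneg _) zero_le_one)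
    _ = M + 15 * (Fintype.card ι ^ 2 + 1) * K := by ring

end Bilaplacian

section ConformalField

variable {E : Type*} [NormedAddCommGroup E] [InnerProductSpace ℝ E]

lemma norm_conformalField_le (a : E) {y : E} (hy : ‖y‖ ≤ 1) : ‖conformalField a y‖ ≤ 4 * ‖a‖ := by
  have hinner := abs_real_inner_le_norm a y
  have hy2 : ‖y‖ ^ 2 ≤ 1 := pow_le_one₀ (norm_nonneg y) hy
  refine (norm_sub_le _ _).trans ?_
  rw [norm_smul, norm_smul, Real.norm_eq_abs, Real.norm_eq_abs, abs_mul, abs_two,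
    abs_of_nonneg (by positivity)]
  nlinarith [norm_nonneg a, norm_nonneg y, mul_le_mul_of_nonneg_right hinner (norm_nonneg y)]

lemma exists_norm_iteratedFDeriv_conformalField_le {s : Set E} (hs : IsCompact s) (n : ℕ) :
    ∃ K, ∀ a, ∀ y ∈ s, ‖iteratedFDeriv ℝ n (conformalField a) y‖ ≤ ‖a‖ * K := by
  set Φ : E → E →L[ℝ] E := fun y =>
    (1 + ‖y‖ ^ 2) • ContinuousLinearMap.id ℝ E - ((2 : ℝ) • innerSL ℝ y).smulRight y with hΦ
  have hΦa : ∀ a, conformalField a = fun y => Φ y a := fun a => funext fun y => by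
    simp [hΦ, conformalField, real_inner_comm]
  have hΦn : ContDiff ℝ n Φ :=
    ((contDiff_const.add (contDiff_norm_sq ℝ)).smul contDiff_const).sub
      (((innerSL ℝ).contDiff.const_smul (2 : ℝ)).smulRight contDiff_id)
  obtain ⟨K, hK⟩ := hs.exists_bound_of_continuousOn
    (hΦn.continuous_iteratedFDeriv le_rfl).continuousOn
  refine ⟨K, fun a y hy => ?_⟩
  rw [hΦa]
  refine (norm_iteratedFDeriv_clm_apply_const hΦn.contDiffAt le_rfl).trans ?_
  gcongr
  exact hK y hy

end ConformalField

section FourthDerivative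

open RealInnerProductSpace Laplacian

/-- `M` bounds the derivatives of `f` of order at most `n` on the closed unit ball. -/
def HasDerivBound (n : ℕ) (f : ℝ⁴ → ℝ) (M : ℝ) : Prop :=
  ∀ j ≤ n, ∀ x ∈ 𝔻, ‖iteratedFDerivWithin ℝ j f 𝔻 x‖ ≤ M

variable {n j : ℕ} {M : ℝ} {x : ℝ⁴} {f h v : ℝ⁴ → ℝ}

lemma HasDerivBound.abs_le (hf : HasDerivBound n f M) (hx : x ∈ 𝔻) : |f x| ≤ M := by
  simpa using hf 0 n.zero_le x hx

lemma HasDerivBound.norm_fderivWithin_le (hf : HasDerivBound (n + 1) f M) (hx : x ∈ 𝔻) :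
    ‖fderivWithin ℝ f 𝔻 x‖ ≤ M := by
  simpa [norm_iteratedFDerivWithin_one f (uniqueDiffOn_closedUnitBall x hx)]
    using hf 1 (Nat.le_add_left 1 n) x hx

lemma hasDerivBound_of_forall_unitBall (hf : ContDiffOn ℝ n f 𝔻)
    (hM : ∀ j ≤ n, ∀ x ∈ 𝔹, ‖iteratedFDeriv ℝ j f x‖ ≤ M) :
    HasDerivBound n f M := fun j hj x hx => by
  have hcont : ContinuousOn (fun x => ‖iteratedFDerivWithin ℝ j f 𝔻 x‖) (closure 𝔹) := by
    rw [closure_ball (0 : ℝ⁴) one_ne_zero]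
    exact (hf.continuousOn_iteratedFDerivWithin (by exact_mod_cast hj)
      uniqueDiffOn_closedUnitBall).norm
  refine le_on_closure (fun y hy => ?_) hcont continuousOn_const
    (by rwa [closure_ball (0 : ℝ⁴) one_ne_zero])
  have hnhds := closedBall_mem_nhds_of_mem hy
  rw [iteratedFDerivWithin_eq_iteratedFDeriv uniqueDiffOn_closedUnitBall
    ((hf.contDiffAt hnhds).of_le (by exact_mod_cast hj)) (ball_subset_closedBall hy)]
  exact hM j hj y hy

lemma abs_conformalSource_le (hh : HasDerivBound 1 h M) (a : ℝ⁴) (hx : x ∈ 𝔻) :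
    |conformalSource a h x| ≤ 12 * ‖a‖ * M := by
  have hx1 : ‖x‖ ≤ 1 := mem_closedBall_zero_iff.1 hx
  have hM : 0 ≤ M := (abs_nonneg _).trans (hh.abs_le hx)
  have hinner : |⟪a, x⟫| ≤ ‖a‖ :=
    (abs_real_inner_le_norm a x).trans (mul_le_of_le_one_right (norm_nonneg a) hx1)
  have hfst : |fderivWithin ℝ h 𝔻 x (conformalField a x)| ≤ M * (4 * ‖a‖) :=
    (ContinuousLinearMap.le_opNorm _ _).trans
      (mul_le_mul (hh.norm_fderivWithin_le hx) (norm_conformalField_le a hx1) (norm_nonneg _) hM)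
  have hsnd : |8 * ⟪a, x⟫ * h x| ≤ 8 * ‖a‖ * M := by
    rw [abs_mul, abs_mul, abs_of_pos (by norm_num : (0 : ℝ) < 8)]
    gcongr
    exact hh.abs_le hx
  calc |conformalSource a h x| ≤ _ := abs_sub _ _
    _ ≤ M * (4 * ‖a‖) + 8 * ‖a‖ * M := add_le_add hfst hsnd
    _ = 12 * ‖a‖ * M := by ring

lemma IsGreenPotential.norm_iteratedFDeriv_three_fderiv_conformalField_le
    (hv : IsGreenPotential h v) (hh : ContDiffOn ℝ 1 h 𝔻) (hv4 : ContDiffOn ℝ 4 v 𝔹)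
    (hM : HasDerivBound 1 h M) (a : ℝ⁴) (hx : x ∈ 𝔹) :
    ‖iteratedFDeriv ℝ 3 (fun y => fderiv ℝ v y (conformalField a y)) x‖ ≤
      potentialBound * (12 * ‖a‖ * M) :=
  (hv.conformal hh (hv4.differentiableOn (by norm_num)) a).norm_iteratedFDeriv_le
    (continuousOn_conformalSource a hh)
    (fun _ hy => abs_conformalSource_le hM a (ball_subset_closedBall hy))
    ((hv4.fderiv_of_isOpen isOpen_ball (by norm_num)).clm_apply
      (contDiff_conformalField a).contDiffOn) hx le_rfl

lemma exists_sum_choose_mul_norm_iteratedFDeriv_conformalField_le :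
    ∃ C, 0 ≤ C ∧ ∀ {h v : ℝ⁴ → ℝ} {M : ℝ}, IsGreenPotential h v → ContDiffOn ℝ 4 v 𝔹 →
      ContinuousOn h 𝔻 → (∀ y ∈ 𝔹, |h y| ≤ M) → ∀ a, ∀ x ∈ 𝔹,
      ∑ i ∈ Finset.range 3, (Nat.choose 3 i : ℝ) * ‖iteratedFDeriv ℝ i (fderiv ℝ v) x‖
        * ‖iteratedFDeriv ℝ (3 - i) (conformalField a) x‖ ≤ C * M * ‖a‖ := by
  choose K hK using exists_norm_iteratedFDeriv_conformalField_le
    (isCompact_closedBall (0 : ℝ⁴) 1)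
  have hK0 : ∀ k, 0 ≤ K k := fun k => by
    obtain ⟨a, ha⟩ := exists_norm_eq ℝ⁴ zero_le_one
    simpa [ha] using (norm_nonneg _).trans (hK k a 0 (mem_closedBall_self zero_le_one))
  refine ⟨∑ i ∈ Finset.range 3, Nat.choose 3 i * potentialBound * K (3 - i),
    Finset.sum_nonneg fun i _ =>
      mul_nonneg (mul_nonneg (Nat.cast_nonneg _) potentialBound_nonneg) (hK0 _),
    fun {h v M} hv hv4 hh hM a x hx => ?_⟩
  have hPM : 0 ≤ potentialBound * M :=
    mul_nonneg potentialBound_nonneg ((abs_nonneg _).trans (hM x hx))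
  rw [Finset.sum_mul, Finset.sum_mul]
  refine Finset.sum_le_sum fun i hi => ?_
  have hDi : ‖iteratedFDeriv ℝ i (fderiv ℝ v) x‖ ≤ potentialBound * M := by
    rw [norm_iteratedFDeriv_fderiv]
    exact hv.norm_iteratedFDeriv_le hh hM (hv4.of_le (by norm_num)) hx (Finset.mem_range.1 hi)
  calc _ ≤ Nat.choose 3 i * (potentialBound * M) * (‖a‖ * K (3 - i)) := by
        gcongr
        exact hK _ a x (ball_subset_closedBall hx)
    _ = _ := by ring

lemma exists_abs_iteratedFDeriv_fderiv_conformalField_le : ∃ C, 0 ≤ C ∧ ∀ {h v : ℝ⁴ → ℝ} {M : ℝ},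
    IsGreenPotential h v → ContDiffOn ℝ 1 h 𝔻 → ContDiffOn ℝ 4 v 𝔹 → HasDerivBound 1 h M →
    ∀ a, ∀ x ∈ 𝔹, ∀ m : Fin 3 → ℝ⁴,
      |iteratedFDeriv ℝ 3 (fderiv ℝ v) x m (conformalField a x)| ≤ C * M * ‖a‖ * ∏ i, ‖m i‖ := by
  obtain ⟨C, hC0, hC⟩ := exists_sum_choose_mul_norm_iteratedFDeriv_conformalField_le
  refine ⟨12 * potentialBound + C, by linarith [potentialBound_nonneg],
    fun {h v M} hv hh hv4 hM a x hx m => ?_⟩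
  have hw := hv.norm_iteratedFDeriv_three_fderiv_conformalField_le hh hv4 hM a hx
  have hleib := norm_iteratedFDeriv_clm_apply_sub_le (n := 3) isOpen_ball
    (hv4.fderiv_of_isOpen isOpen_ball (by norm_num)) (contDiff_conformalField a).contDiffOn hx m
  have hlow := hC hv hv4 hh.continuousOn (fun y hy => hM.abs_le (ball_subset_closedBall hy)) a x hx
  set S := iteratedFDeriv ℝ 3 (fun y => fderiv ℝ v y (conformalField a y)) x m
  set P := ∏ i, ‖m i‖
  have hP : 0 ≤ P := Finset.prod_nonneg fun _ _ => norm_nonneg _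
  calc |iteratedFDeriv ℝ 3 (fderiv ℝ v) x m (conformalField a x)|
      ≤ |S| + |S - iteratedFDeriv ℝ 3 (fderiv ℝ v) x m (conformalField a x)| := by
        rw [abs_sub_comm]
        linarith [abs_sub_abs_le_abs_sub (iteratedFDeriv ℝ 3 (fderiv ℝ v) x m
          (conformalField a x)) S]
    _ ≤ potentialBound * (12 * ‖a‖ * M) * P + C * M * ‖a‖ * P :=
        add_le_add (ContinuousMultilinearMap.le_of_opNorm_le hw m)
          (hleib.trans (mul_le_mul_of_nonneg_right hlow hP))
    _ = _ := by ring

lemma conformalField_eq_of_inner_eq_zero {a : ℝ⁴} (ha : ⟪a, x⟫ = 0) :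
    conformalField a x = (1 + ‖x‖ ^ 2) • a := by
  rw [conformalField, ha, mul_zero, zero_smul, sub_zero]

/- At `x` the field `conformalField a` is a positive multiple of `a` when `a ⊥ x`, so the bound for
the derivative along it controls every fourth derivative with one entry tangential to the sphere
through `x`. -/
lemma exists_abs_iteratedFDeriv_four_le_of_inner_eq_zero : ∃ C, 0 ≤ C ∧ ∀ {h v : ℝ⁴ → ℝ} {M : ℝ},
    IsGreenPotential h v → ContDiffOn ℝ 1 h 𝔻 → ContDiffOn ℝ 4 v 𝔹 → HasDerivBound 1 h M →
    ∀ x ∈ 𝔹, ∀ w : Fin 4 → ℝ⁴, (∀ i, ‖w i‖ ≤ 1) → (∃ i, ⟪w i, x⟫ = 0) →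
      |iteratedFDeriv ℝ 4 v x w| ≤ C * M := by
  obtain ⟨C, hC0, hC⟩ := exists_abs_iteratedFDeriv_fderiv_conformalField_le
  refine ⟨C, hC0, fun {h v M} hv hh hv4 hM x hx w hw hwx => ?_⟩
  obtain ⟨i, hi⟩ := hwx
  have hCM : 0 ≤ C * M :=
    mul_nonneg hC0 ((abs_nonneg _).trans (hM.abs_le (ball_subset_closedBall hx)))
  set m := w ∘ Equiv.swap i (Fin.last 3) with hm
  have hm1 : ∀ j, ‖m j‖ ≤ 1 := fun j => hw _
  have hlast : ⟪m (Fin.last 3), x⟫ = 0 := by simpa [hm] using hi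
  have key := hC hv hh hv4 hM (m (Fin.last 3)) x hx (Fin.init m)
  rw [conformalField_eq_of_inner_eq_zero hlast, map_smul, smul_eq_mul, abs_mul,
    ← iteratedFDeriv_succ_apply_right, hm, iteratedFDeriv_comp_perm_of_contDiffAt
      (hv4.contDiffAt (isOpen_ball.mem_nhds hx)), ← hm] at key
  calc |iteratedFDeriv ℝ 4 v x w| ≤ |1 + ‖x‖ ^ 2| * |iteratedFDeriv ℝ 4 v x w| :=
        le_mul_of_one_le_left (abs_nonneg _) (by rw [abs_of_pos] <;> nlinarith [norm_nonneg x])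
    _ ≤ C * M * ‖m (Fin.last 3)‖ * ∏ j, ‖Fin.init m j‖ := key
    _ ≤ C * M * 1 * 1 := by
        gcongr
        · exact hm1 _
        · exact Finset.prod_le_one (fun _ _ => norm_nonneg _) fun j _ => hm1 _
    _ = C * M := by ring

lemma exists_norm_eq_one_and_smul_eq {E : Type*} [NormedAddCommGroup E] [NormedSpace ℝ E]
    [Nontrivial E] (x : E) : ∃ ω : E, ‖ω‖ = 1 ∧ ‖x‖ • ω = x := by
  rcases eq_or_ne x 0 with rfl | hx
  · obtain ⟨ω, hω⟩ := exists_norm_eq E zero_le_one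
    exact ⟨ω, hω, by simp⟩
  · exact ⟨‖x‖⁻¹ • x, norm_smul_inv_norm hx, smul_inv_smul₀ (norm_ne_zero_iff.2 hx) x⟩

lemma IsDirichletSolution.hasDerivBound_three (hv : IsDirichletSolution h v)
    (hh : ContinuousOn h 𝔻) (hM : ∀ y ∈ 𝔻, |h y| ≤ M) :
    HasDerivBound 3 v (potentialBound * M) :=
  hasDerivBound_of_forall_unitBall (hv.contDiffOn.of_le (by norm_num)) fun _ hj _ hx =>
    hv.isGreenPotential.norm_iteratedFDeriv_le hh
      (fun y hy => hM y (ball_subset_closedBall hy))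
      ((hv.contDiffOn.mono ball_subset_closedBall).of_le (by norm_num)) hx hj

theorem exists_hasDerivBound_four_of_isDirichletSolution : ∃ C, 0 ≤ C ∧
    ∀ {h v : ℝ⁴ → ℝ} {M : ℝ}, IsDirichletSolution h v → ContDiffOn ℝ 1 h 𝔻 →
      HasDerivBound 1 h M → HasDerivBound 4 v (C * M) := by
  obtain ⟨C, hC0, hC⟩ := exists_abs_iteratedFDeriv_four_le_of_inner_eq_zero
  set A : ℝ := 1 + 15 * ((Fintype.card (Fin 4)) ^ 2 + 1) * C
  have hA : 0 ≤ A := by positivity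
  refine ⟨potentialBound + A, add_nonneg potentialBound_nonneg hA, fun {h v M} hv hh hM => ?_⟩
  have hM0 : 0 ≤ M := (abs_nonneg _).trans (hM.abs_le (mem_closedBall_self zero_le_one))
  have hv4 : ContDiffOn ℝ 4 v 𝔹 := hv.contDiffOn.mono ball_subset_closedBall
  refine hasDerivBound_of_forall_unitBall hv.contDiffOn fun j hj x hx => ?_
  rcases hj.lt_or_eq with hj | rfl
  · calc ‖iteratedFDeriv ℝ j v x‖ ≤ potentialBound * M :=
          hv.isGreenPotential.norm_iteratedFDeriv_le hh.continuousOn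
            (fun y hy => hM.abs_le (ball_subset_closedBall hy)) (hv4.of_le (by norm_num)) hx
            (Nat.le_of_lt_succ hj)
      _ ≤ (potentialBound + A) * M := by
          gcongr
          linarith
  obtain ⟨ω, hω, hωx⟩ := exists_norm_eq_one_and_smul_eq x
  have htan : ∀ w : Fin 4 → ℝ⁴, (∀ i, ‖w i‖ ≤ 1) → (∃ i, ⟪w i, ω⟫ = 0) →
      |iteratedFDeriv ℝ 4 v x w| ≤ C * M := fun w hw ⟨i, hi⟩ =>
    hC hv.isGreenPotential hh hv4 hM x hx w hw
      ⟨i, by rw [← hωx, real_inner_smul_right, hi, mul_zero]⟩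
  have htrace : |bitrace (EuclideanSpace.basisFun (Fin 4) ℝ) (iteratedFDeriv ℝ 4 v x)| ≤ M := by
    rw [← laplacian_laplacian_eq_bitrace _ (hv4.contDiffAt (isOpen_ball.mem_nhds hx)),
      hv.laplacian_laplacian x hx]
    exact hM.abs_le (ball_subset_closedBall hx)
  calc ‖iteratedFDeriv ℝ 4 v x‖ ≤ M + 15 * ((Fintype.card (Fin 4)) ^ 2 + 1) * (C * M) :=
        opNorm_le_of_abs_apply_le_of_norm_le_one (by positivity) fun w hw =>
          abs_apply_le_of_abs_bitrace_le _ hω htan htrace hw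
    _ = A * M := by ring
    _ ≤ (potentialBound + A) * M := by
        gcongr
        linarith [potentialBound_nonneg]

end FourthDerivative

section MeanField

open Laplacian

lemma abs_exp_sub_exp_le {C s t : ℝ} (hs : s ≤ C) (ht : t ≤ C) :
    |Real.exp s - Real.exp t| ≤ Real.exp C * |s - t| := by
  refine (convex_Iic C).norm_image_sub_le_of_norm_hasDerivWithin_le
    (fun r _ => (Real.hasDerivAt_exp r).hasDerivWithinAt) (fun r hr => ?_) ht hs
  rw [Real.norm_eq_abs, Real.abs_exp]
  exact Real.exp_le_exp.2 hr

lemma laplacian_laplacian_sub {E : Type*} [NormedAddCommGroup E] [InnerProductSpace ℝ E]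
    [FiniteDimensional ℝ E] {f g : E → ℝ} {x : E} (hf : ContDiffAt ℝ 4 f x)
    (hg : ContDiffAt ℝ 4 g x) : Δ (Δ (f - g)) x = Δ (Δ f) x - Δ (Δ g) x := by
  rw [InnerProductSpace.laplacian_congr_nhds
      ((hf.of_le (by norm_num)).laplacian_sub_nhds (hg.of_le (by norm_num))) |>.eq_of_nhds,
    (contDiffAt_laplacian (n := 2) hf).laplacian_sub (contDiffAt_laplacian (n := 2) hg)]

variable {h h' u u' v v' : ℝ⁴ → ℝ} {x : ℝ⁴} {c c' C L δ ρ Λ : ℝ}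

lemma IsDirichletSolution.sub (hv : IsDirichletSolution h v) (hv' : IsDirichletSolution h' v') :
    IsDirichletSolution (h - h') (v - v') where
  contDiffOn := hv.contDiffOn.sub hv'.contDiffOn
  laplacian_laplacian x hx := by
    have hx' := closedBall_mem_nhds_of_mem hx
    rw [laplacian_laplacian_sub (hv.contDiffOn.contDiffAt hx') (hv'.contDiffOn.contDiffAt hx'),
      hv.laplacian_laplacian x hx, hv'.laplacian_laplacian x hx, Pi.sub_apply]
  boundary x hx := by
    have hx' : x ∈ 𝔻 := mem_closedBall_zero_iff.2 hx.le
    rw [Pi.sub_apply, (hv.boundary x hx).1, (hv'.boundary x hx).1, sub_zero,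
      fderivWithin_sub (uniqueDiffOn_closedUnitBall x hx')
        (hv.contDiffOn.differentiableOn (by norm_num) x hx')
        (hv'.contDiffOn.differentiableOn (by norm_num) x hx'),
      (hv.boundary x hx).2, (hv'.boundary x hx).2, sub_zero]
    exact ⟨rfl, rfl⟩

/-- `u ≤ C` solves the Dirichlet problem `Δ²u = c eᵘ` with a constant `c ∈ [0, L]`. For a mean field
solution `c` is `ρ / ∫ eᵘ`. -/
structure IsExpSolution (L C c : ℝ) (u : ℝ⁴ → ℝ) : Prop where
  isDirichletSolution : IsDirichletSolution (fun y => c * Real.exp (u y)) u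
  le : ∀ y ∈ 𝔻, u y ≤ C
  mem_Icc : c ∈ Set.Icc 0 L

lemma isDirichletSolution_of_isMFSolution (hu : IsMFSolution ρ u) :
    IsDirichletSolution (fun y => ρ / (∫ z in 𝔹, Real.exp (u z)) * Real.exp (u y)) u where
  contDiffOn := hu.1
  laplacian_laplacian x hx := by
    have hux : ContDiffAt ℝ 4 u x := hu.1.contDiffAt (closedBall_mem_nhds_of_mem hx)
    have hlap : lap u =ᶠ[𝓝 x] Δ u := (hux.eventually (by simp)).mono fun y hy =>
      lap_eq_laplacian (hy.of_le (by norm_num))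
    have hlap2 : ContDiffAt ℝ 2 (Δ u) x := contDiffAt_laplacian hux
    rw [← (InnerProductSpace.laplacian_congr_nhds hlap).eq_of_nhds,
      ← lap_eq_laplacian (hlap2.congr_of_eventuallyEq hlap), hu.2.1 x hx, div_mul_eq_mul_div]
  boundary := hu.2.2

lemma volume_unitBall_le_integral_exp (hu : ContinuousOn u 𝔻) (hu0 : ∀ y ∈ 𝔹, 0 ≤ u y) :
    volume.real 𝔹 ≤ ∫ y in 𝔹, Real.exp (u y) := by
  calc volume.real 𝔹 = ∫ _ in 𝔹, (1 : ℝ) := by rw [setIntegral_const, smul_eq_mul, mul_one]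
    _ ≤ ∫ y in 𝔹, Real.exp (u y) := setIntegral_mono_on
        (integrableOn_const measure_ball_lt_top.ne)
        (integrableOn_unitBall_of_continuousOn hu.rexp) measurableSet_ball
        fun y hy => Real.one_le_exp (hu0 y hy)

lemma isExpSolution_of_isMFSolution (hρ : 0 ≤ ρ) (hρΛ : ρ ≤ Λ) (hu : IsMFSolution ρ u)
    (hC : ∀ x ∈ 𝔻, u x ≤ C) :
    IsExpSolution (Λ / volume.real 𝔹) C (ρ / ∫ y in 𝔹, Real.exp (u y)) u := by
  have hsol := isDirichletSolution_of_isMFSolution hu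
  have hc : 0 ≤ ρ / ∫ y in 𝔹, Real.exp (u y) :=
    div_nonneg hρ (integral_nonneg fun y => (Real.exp_pos _).le)
  have hu0 : ∀ y ∈ 𝔹, 0 ≤ u y := fun y hy => hsol.isGreenPotential.nonneg
    (fun z _ => mul_nonneg hc (Real.exp_pos _).le) hy
  have hvol : 0 < volume.real 𝔹 :=
    ENNReal.toReal_pos (measure_ball_pos _ _ one_pos).ne' measure_ball_lt_top.ne
  exact ⟨hsol, hC, hc, div_le_div₀ (hρ.trans hρΛ) hρΛ hvol
    (volume_unitBall_le_integral_exp hu.1.continuousOn hu0)⟩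

namespace IsExpSolution

lemma contDiffOn (hu : IsExpSolution L C c u) : ContDiffOn ℝ 4 u 𝔻 :=
  hu.isDirichletSolution.contDiffOn

lemma contDiffOn_source (hu : IsExpSolution L C c u) :
    ContDiffOn ℝ 1 (fun y => c * Real.exp (u y)) 𝔻 :=
  contDiffOn_const.mul (hu.contDiffOn.of_le (by norm_num)).exp

lemma abs_source_le (hu : IsExpSolution L C c u) (hx : x ∈ 𝔻) :
    |c * Real.exp (u x)| ≤ L * Real.exp C := by
  rw [abs_of_nonneg (mul_nonneg hu.mem_Icc.1 (Real.exp_pos _).le)]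
  exact mul_le_mul hu.mem_Icc.2 (Real.exp_le_exp.2 (hu.le x hx)) (Real.exp_pos _).le
    (hu.mem_Icc.1.trans hu.mem_Icc.2)

lemma hasDerivBound_three (hu : IsExpSolution L C c u) :
    HasDerivBound 3 u (potentialBound * (L * Real.exp C)) :=
  hu.isDirichletSolution.hasDerivBound_three hu.contDiffOn_source.continuousOn
    fun _ hy => hu.abs_source_le hy

lemma lipschitzOnWith (hu : IsExpSolution L C c u) :
    LipschitzOnWith (potentialBound * (L * Real.exp C)).toNNReal u 𝔻 :=
  (convex_closedBall (0 : ℝ⁴) 1).lipschitzOnWith_of_nnnorm_fderivWithin_le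
    (hu.contDiffOn.differentiableOn (by norm_num)) fun _ hx =>
      NNReal.le_toNNReal_of_coe_le (hu.hasDerivBound_three.norm_fderivWithin_le hx)

lemma abs_source_sub_le (hu : IsExpSolution L C c u) (hu' : IsExpSolution L C c' u')
    (hc : |c - c'| ≤ δ) (hx : x ∈ 𝔻) (hδ : |u x - u' x| ≤ δ) :
    |c * Real.exp (u x) - c' * Real.exp (u' x)| ≤ (1 + L) * Real.exp C * δ := by
  have hδ0 : 0 ≤ δ := (abs_nonneg _).trans hc
  have hfst : |(c - c') * Real.exp (u x)| ≤ δ * Real.exp C := by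
    rw [abs_mul, Real.abs_exp]
    gcongr
    exact hu.le x hx
  have hsnd : |c' * (Real.exp (u x) - Real.exp (u' x))| ≤ L * (Real.exp C * δ) := by
    rw [abs_mul, abs_of_nonneg hu'.mem_Icc.1]
    have := (abs_exp_sub_exp_le (hu.le x hx) (hu'.le x hx)).trans
      (mul_le_mul_of_nonneg_left hδ (Real.exp_pos C).le)
    exact mul_le_mul hu'.mem_Icc.2 this (abs_nonneg _) (hu'.mem_Icc.1.trans hu'.mem_Icc.2)
  calc |c * Real.exp (u x) - c' * Real.exp (u' x)|
      = |(c - c') * Real.exp (u x) + c' * (Real.exp (u x) - Real.exp (u' x))| := by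
        congr 1
        ring
    _ ≤ δ * Real.exp C + L * (Real.exp C * δ) := (abs_add_le _ _).trans (add_le_add hfst hsnd)
    _ = (1 + L) * Real.exp C * δ := by ring

lemma hasFDerivWithinAt_source (hu : IsExpSolution L C c u) (hx : x ∈ 𝔻) :
    HasFDerivWithinAt (fun y => c * Real.exp (u y))
      ((c * Real.exp (u x)) • fderivWithin ℝ u 𝔻 x) 𝔻 x := by
  rw [← smul_smul]
  exact (hu.contDiffOn.differentiableOn (by norm_num) x hx).hasFDerivWithinAt.exp.const_mul c

lemma fderivWithin_source_sub (hu : IsExpSolution L C c u) (hu' : IsExpSolution L C c' u')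
    (hx : x ∈ 𝔻) :
    fderivWithin ℝ ((fun y => c * Real.exp (u y)) - fun y => c' * Real.exp (u' y)) 𝔻 x =
      (c * Real.exp (u x) - c' * Real.exp (u' x)) • fderivWithin ℝ u 𝔻 x
        + (c' * Real.exp (u' x)) • fderivWithin ℝ (u - u') 𝔻 x := by
  have hux := uniqueDiffOn_closedUnitBall x hx
  rw [((hu.hasFDerivWithinAt_source hx).sub (hu'.hasFDerivWithinAt_source hx)).fderivWithin hux,
    fderivWithin_sub hux (hu.contDiffOn.differentiableOn (by norm_num) x hx)
      (hu'.contDiffOn.differentiableOn (by norm_num) x hx)]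
  module

lemma hasDerivBound_source_sub (hu : IsExpSolution L C c u) (hu' : IsExpSolution L C c' u')
    (hc : |c - c'| ≤ δ) (hδ : ∀ x ∈ 𝔻, |u x - u' x| ≤ δ) :
    HasDerivBound 1 ((fun y => c * Real.exp (u y)) - fun y => c' * Real.exp (u' y))
      ((1 + 2 * potentialBound * (L * Real.exp C)) * ((1 + L) * Real.exp C * δ)) := by
  set B := L * Real.exp C
  set D := (1 + L) * Real.exp C * δ
  have hD' : ∀ y ∈ 𝔻, |c * Real.exp (u y) - c' * Real.exp (u' y)| ≤ D := fun y hy =>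
    hu.abs_source_sub_le hu' hc hy (hδ y hy)
  have hD0 : 0 ≤ D := (abs_nonneg _).trans (hD' 0 (mem_closedBall_self zero_le_one))
  have hB0 : 0 ≤ B := (abs_nonneg _).trans (hu.abs_source_le (mem_closedBall_self zero_le_one))
  have hP := potentialBound_nonneg
  have hsub : HasDerivBound 3 (u - u') (potentialBound * D) :=
    (hu.isDirichletSolution.sub hu'.isDirichletSolution).hasDerivBound_three
      (hu.contDiffOn_source.sub hu'.contDiffOn_source).continuousOn hD'
  intro j hj x hx
  interval_cases j
  · calc ‖iteratedFDerivWithin ℝ 0 _ 𝔻 x‖ ≤ D := by simpa using hD' x hx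
      _ ≤ (1 + 2 * potentialBound * B) * D :=
        le_mul_of_one_le_left hD0 (by linarith [mul_nonneg hP hB0])
  · rw [norm_iteratedFDerivWithin_one _ (uniqueDiffOn_closedUnitBall x hx),
      hu.fderivWithin_source_sub hu' hx]
    calc _ ≤ D * (potentialBound * B) + B * (potentialBound * D) := by
          refine (norm_add_le _ _).trans (add_le_add ?_ ?_) <;> rw [norm_smul]
          · exact mul_le_mul (hD' x hx) (hu.hasDerivBound_three.norm_fderivWithin_le hx)
              (norm_nonneg _) hD0
          · exact mul_le_mul (hu'.abs_source_le hx) (hsub.norm_fderivWithin_le hx)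
              (norm_nonneg _) hB0
      _ ≤ (1 + 2 * potentialBound * B) * D := by linarith

end IsExpSolution

lemma exists_hasDerivBound_sub_of_isExpSolution (L C : ℝ) : ∃ A, ∀ {c c' δ : ℝ} {u u' : ℝ⁴ → ℝ},
    IsExpSolution L C c u → IsExpSolution L C c' u' → |c - c'| ≤ δ →
      (∀ x ∈ 𝔻, |u x - u' x| ≤ δ) → HasDerivBound 4 (u - u') (A * δ) := by
  obtain ⟨K, -, hK⟩ := exists_hasDerivBound_four_of_isDirichletSolution
  refine ⟨K * ((1 + 2 * potentialBound * (L * Real.exp C)) * ((1 + L) * Real.exp C)),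
    fun {c c' δ u u'} hu hu' hc hδ => ?_⟩
  convert hK (hu.isDirichletSolution.sub hu'.isDirichletSolution)
    (hu.contDiffOn_source.sub hu'.contDiffOn_source)
    (hu.hasDerivBound_source_sub hu' hc hδ) using 1
  ring

lemma uniformCauchySeqOn_iteratedFDerivWithin_of_isExpSolution {c : ℕ → ℝ} {u : ℕ → ℝ⁴ → ℝ}
    (hu : ∀ k, IsExpSolution L C (c k) (u k)) (hc : CauchySeq c)
    (huc : UniformCauchySeqOn u atTop 𝔻) {j : ℕ} (hj : j ≤ 4) :
    UniformCauchySeqOn (fun k => iteratedFDerivWithin ℝ j (u k) 𝔻) atTop 𝔻 := by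
  obtain ⟨A, hA⟩ := exists_hasDerivBound_sub_of_isExpSolution L C
  refine Metric.uniformCauchySeqOn_iff.2 fun ε hε => ?_
  set δ := ε / (|A| + 1)
  have hδ : 0 < δ := by positivity
  obtain ⟨N₁, hN₁⟩ := Metric.uniformCauchySeqOn_iff.1 huc δ hδ
  obtain ⟨N₂, hN₂⟩ := Metric.cauchySeq_iff.1 hc δ hδ
  refine ⟨max N₁ N₂, fun k hk l hl x hx => ?_⟩
  have hbound : HasDerivBound 4 (u k - u l) (A * δ) := hA (hu k) (hu l)
    (hN₂ k (le_of_max_le_right hk) l (le_of_max_le_right hl)).le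
    fun y hy => (hN₁ k (le_of_max_le_left hk) l (le_of_max_le_left hl) y hy).le
  have hdiff : ∀ i, ContDiffWithinAt ℝ j (u i) 𝔻 x := fun i =>
    ((hu i).contDiffOn x hx).of_le (by exact_mod_cast hj)
  rw [dist_eq_norm, ← iteratedFDerivWithin_sub_apply (hdiff k) (hdiff l)
    uniqueDiffOn_closedUnitBall hx]
  calc _ ≤ A * δ := hbound j hj x hx
    _ < (|A| + 1) * δ := by
      gcongr
      linarith [le_abs_self A]
    _ = ε := mul_div_cancel₀ _ (by positivity)

theorem exists_subseq_tendstoUniformlyOn_of_isExpSolution {c : ℕ → ℝ} {u : ℕ → ℝ⁴ → ℝ}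
    (hu : ∀ k, IsExpSolution L C (c k) (u k)) :
    ∃ v, ContDiffOn ℝ 4 v 𝔻 ∧ ∃ φ : ℕ → ℕ, StrictMono φ ∧
      TendstoUniformlyOn (fun j => u (φ j)) v atTop 𝔻 := by
  obtain ⟨φ, hφ, huφ⟩ := exists_subseq_uniformCauchySeqOn_of_lipschitzOnWith
    (isCompact_closedBall 0 1) (isCompact_closedBall (0 : ℝ) (potentialBound * (L * Real.exp C)))
    (fun k x hx => mem_closedBall_zero_iff.2 ((hu k).hasDerivBound_three.abs_le hx))
    fun k => (hu k).lipschitzOnWith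
  obtain ⟨_, -, ψ, hψ, hcψ⟩ := isCompact_Icc.tendsto_subseq fun k => (hu (φ k)).mem_Icc
  have huψ : UniformCauchySeqOn (fun k => u (φ (ψ k))) atTop 𝔻 := fun U hU =>
    (hψ.tendsto_atTop.prodMap hψ.tendsto_atTop).eventually (huφ U hU)
  obtain ⟨v, hv, huv⟩ := exists_contDiffOn_of_uniformCauchySeqOn (n := 4)
    (convex_closedBall (0 : ℝ⁴) 1) uniqueDiffOn_closedUnitBall (fun k => (hu _).contDiffOn)
    fun j hj => uniformCauchySeqOn_iteratedFDerivWithin_of_isExpSolution (fun k => hu (φ (ψ k)))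
      hcψ.cauchySeq huψ hj
  exact ⟨v, hv, φ ∘ ψ, hφ.comp hψ, huv⟩

end MeanField

/-- Compactness for uniformly bounded solutions: if solutions `u_k` with `0 < ρ_k ≤ Λ` are
uniformly bounded from above on the closed ball, then a subsequence converges uniformly on
the closed ball to a `C⁴` function. -/
theorem mean_field_compactness (Λ : ℝ) (hΛ : 0 < Λ)
    (ρ : ℕ → ℝ) (u : ℕ → EuclideanSpace ℝ (Fin 4) → ℝ)
    (hρ : ∀ k, 0 < ρ k ∧ ρ k ≤ Λ)
    (hsol : ∀ k, IsMFSolution (ρ k) (u k))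
    (C : ℝ) (hC : 0 < C)
    (hbound : ∀ k, ∀ x ∈ closedBall (0 : EuclideanSpace ℝ (Fin 4)) 1, u k x ≤ C) :
    ∃ v : EuclideanSpace ℝ (Fin 4) → ℝ,
      ContDiffOn ℝ 4 v (closedBall (0 : EuclideanSpace ℝ (Fin 4)) 1) ∧
      ∃ φ : ℕ → ℕ, StrictMono φ ∧
        TendstoUniformlyOn (fun j => u (φ j)) v atTop
          (closedBall (0 : EuclideanSpace ℝ (Fin 4)) 1) :=
  exists_subseq_tendstoUniformlyOn_of_isExpSolution fun k =>
    isExpSolution_of_isMFSolution (hρ k).1.le (hρ k).2 (hsol k) (hbound k)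

end
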